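/- arXiv:2109.14504 — 6 statements merged into one kernel-verified Lean document; each statement's English description precedes it below -/
import Mathlib

section
/- Let 0 < p ≤ 1, p < q ≤ 2, and λ > 0, and set σ_j = j^{−λ} for j ∈ ℕ. There exist constants C, D, K ∈ (0,∞), with K depending only on p, q and λ, such that for all m ∈ ℕ and all 1 ≤ n < m satisfying n ≥ D·log(e·m/n), if G_{n,m} is an n×m random matrix with i.i.d. standard Gaussian entries, then with probability at least 1 − 2·exp(−C·n) one has rad_q(E^m_{p,σ}, ker G_{n,m}) ≤ K·(log(e·m/n)/n)^{λ + 1/p − 1/q}. -/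
open MeasureTheory ProbabilityTheory
open scoped ENNReal NNReal

/-- The `ℓ_p`-(quasi-)norm on `ℝ^m`, for `0 < p ≤ ∞`. -/
noncomputable def lpnorm (p : ℝ≥0∞) {m : ℕ} (x : Fin m → ℝ) : ℝ :=
  if p = ∞ then ⨆ j, |x j| else (∑ j, |x j| ^ p.toReal) ^ (1 / p.toReal)

/-- The `ℓ_p`-ellipsoid with semiaxes `σ`. -/
noncomputable def ellipsoid (p : ℝ≥0∞) {m : ℕ} (σ : Fin m → ℝ) : Set (Fin m → ℝ) :=
  {x | lpnorm p (fun j => x j / σ j) ≤ 1}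

/-- `rad_q(K, E)`: the supremum of the `ℓ_q`-norm over `K ∩ E`. -/
noncomputable def radq (q : ℝ≥0∞) {m : ℕ} (K E : Set (Fin m → ℝ)) : ℝ :=
  sSup (lpnorm q '' (K ∩ E))

/-- The distribution of an `n × m` random matrix with i.i.d. standard Gaussian entries. -/
noncomputable def gaussianMatrix (n m : ℕ) : Measure (Fin n → Fin m → ℝ) :=
  Measure.pi fun _ : Fin n => Measure.pi fun _ : Fin m => gaussianReal 0 1

/-- The kernel of a matrix `A ∈ ℝ^{n×m}`, as a subset of `ℝ^m`. -/
def kerSet {n m : ℕ} (A : Fin n → Fin m → ℝ) : Set (Fin m → ℝ) :=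
  {x | ∀ i, ∑ j, A i j * x j = 0}

/-- The Hölder conjugate `p*` of `p ∈ (1, ∞]`, as a real number
(with the convention `(∞ : ℝ≥0∞).toReal = 0`, so `pstar ∞ = 1`). -/
noncomputable def pstar (p : ℝ≥0∞) : ℝ := (1 - 1 / p.toReal)⁻¹


lemma gm_row_law {m : ℕ} (w : Fin m → ℝ) (hw : ∑ j, w j ^ 2 = 1) :
    (Measure.pi fun _ : Fin m => gaussianReal 0 1).map (fun g => ∑ j, g j * w j)
      = gaussianReal 0 1 := by
  have hmeas : Measurable (fun g : Fin m → ℝ => ∑ j, g j * w j) := by fun_prop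
  have : IsProbabilityMeasure ((Measure.pi fun _ : Fin m => gaussianReal 0 1).map
      (fun g => ∑ j, g j * w j)) := Measure.isProbabilityMeasure_map hmeas.aemeasurable
  apply Measure.ext_of_charFun
  ext t
  rw [charFun_apply_real, integral_map hmeas.aemeasurable (by fun_prop)]
  have h1 : ∀ g : Fin m → ℝ, Complex.exp (t * ((∑ j, g j * w j : ℝ) : ℂ) * Complex.I)
      = ∏ j, Complex.exp (((t * w j : ℝ) : ℂ) * (g j : ℂ) * Complex.I) := by
    intro g
    rw [← Complex.exp_sum]
    congr 1
    push_cast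
    rw [Finset.mul_sum, Finset.sum_mul]
    refine Finset.sum_congr rfl fun j _ => ?_
    ring
  simp_rw [h1]
  rw [integral_fintype_prod_eq_prod
    (f := fun j (x : ℝ) => Complex.exp (((t * w j : ℝ) : ℂ) * (x : ℂ) * Complex.I))]
  simp_rw [← charFun_apply_real, charFun_gaussianReal]
  rw [← Complex.exp_sum]
  congr 1
  have h2 : (∑ j, (w j : ℂ) ^ 2) = 1 := by exact_mod_cast hw
  simp only [Complex.ofReal_zero, mul_zero, zero_mul, zero_sub, Finset.sum_neg_distrib]
  push_cast
  congr 1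
  rw [← mul_one ((t : ℂ) ^ 2), ← h2, Finset.mul_sum, Finset.mul_sum, Finset.sum_div]
  refine Finset.sum_congr rfl fun j _ => ?_
  ring

lemma gm_exp_int (θ : ℝ) (hθ : 0 < 1 + 2 * θ) :
    Integrable (fun x : ℝ => Real.exp (-θ * x ^ 2)) (gaussianReal 0 1) ∧
    ∫ x, Real.exp (-θ * x ^ 2) ∂(gaussianReal 0 1) = 1 / √(1 + 2 * θ) := by
  have hb : 0 < θ + 1 / 2 := by linarith
  have key : ∀ x : ℝ, gaussianPDFReal 0 1 x * Real.exp (-θ * x ^ 2)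
      = (√(2 * Real.pi))⁻¹ * Real.exp (-(θ + 1 / 2) * x ^ 2) := by
    intro x
    simp only [gaussianPDFReal, NNReal.coe_one, mul_one, sub_zero]
    rw [mul_assoc, ← Real.exp_add]
    congr 2
    ring
  constructor
  · rw [gaussianReal_of_var_ne_zero _ one_ne_zero]
    rw [integrable_withDensity_iff (measurable_gaussianPDF 0 1)
      (by simp [gaussianPDF])]
    simp only [toReal_gaussianPDF]
    simp_rw [mul_comm _ (gaussianPDFReal 0 1 _), key]
    exact (integrable_exp_neg_mul_sq hb).const_mul _
  · rw [integral_gaussianReal_eq_integral_smul one_ne_zero]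
    simp_rw [smul_eq_mul, key]
    rw [integral_const_mul, integral_gaussian, ← Real.sqrt_inv, ← Real.sqrt_mul (by positivity),
      one_div (√(1 + 2 * θ)), ← Real.sqrt_inv (1 + 2 * θ)]
    congr 1
    have := Real.pi_ne_zero
    rw [show θ + 1 / 2 = (1 + 2 * θ) / 2 by ring]
    field_simp

lemma gm_chernoff {n m : ℕ} (w : Fin m → ℝ) (hw : ∑ j, w j ^ 2 = 1) (θ c : ℝ)
    (hθ : 0 < 1 + 2 * θ) :
    (gaussianMatrix n m).real {A | c ≤ -θ * ∑ i, (∑ j, A i j * w j) ^ 2}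
      ≤ Real.exp (-c) * (1 / √(1 + 2 * θ)) ^ n := by
  have hmeas : Measurable (fun g : Fin m → ℝ => ∑ j, g j * w j) := by fun_prop
  have hI : Integrable (fun g : Fin m → ℝ => Real.exp (-θ * (∑ j, g j * w j) ^ 2))
      (Measure.pi fun _ : Fin m => gaussianReal 0 1) := by
    have := (gm_exp_int θ hθ).1
    rw [← gm_row_law w hw] at this
    exact this.comp_measurable hmeas
  have hE : ∫ g : Fin m → ℝ, Real.exp (-θ * (∑ j, g j * w j) ^ 2)
      ∂(Measure.pi fun _ : Fin m => gaussianReal 0 1) = 1 / √(1 + 2 * θ) := by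
    have h := (gm_exp_int θ hθ).2
    rw [← gm_row_law w hw, integral_map hmeas.aemeasurable (by fun_prop)] at h
    exact h
  set f : (Fin n → Fin m → ℝ) → ℝ := fun A => ∏ i, Real.exp (-θ * (∑ j, A i j * w j) ^ 2) with hf
  have hfI : Integrable f (gaussianMatrix n m) := by
    unfold gaussianMatrix
    exact Integrable.fintype_prod (f := fun (_ : Fin n) (g : Fin m → ℝ) => Real.exp (-θ * (∑ j, g j * w j) ^ 2)) (fun _ => hI)
  have hfE : ∫ A, f A ∂(gaussianMatrix n m) = (1 / √(1 + 2 * θ)) ^ n := by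
    unfold gaussianMatrix
    rw [hf, integral_fintype_prod_eq_prod
      (f := fun (_ : Fin n) (g : Fin m → ℝ) => Real.exp (-θ * (∑ j, g j * w j) ^ 2))]
    simp only [hE, Finset.prod_const, Finset.card_univ, Fintype.card_fin]
  have hfe : ∀ A, f A = Real.exp (-θ * ∑ i, (∑ j, A i j * w j) ^ 2) := by
    intro A
    rw [hf, Finset.mul_sum, Real.exp_sum]
  have h := mul_meas_ge_le_integral_of_nonneg (μ := gaussianMatrix n m) (f := f)
    (Filter.Eventually.of_forall fun A => by rw [hfe]; positivity) hfI (Real.exp c)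
  rw [hfE] at h
  have hset : {A | c ≤ -θ * ∑ i, (∑ j, A i j * w j) ^ 2} = {A | Real.exp c ≤ f A} := by
    ext A; simp only [Set.mem_ofPred_eq, hfe, Real.exp_le_exp]
  rw [hset, Real.exp_neg, inv_mul_eq_div, le_div_iff₀ (Real.exp_pos c), mul_comm]
  exact h

lemma gm_tail {n m : ℕ} (w : Fin m → ℝ) (hw : ∑ j, w j ^ 2 = 1) :
    (gaussianMatrix n m).real {A | ¬ ((n : ℝ) / 49 ≤ ∑ i, (∑ j, A i j * w j) ^ 2 ∧
        ∑ i, (∑ j, A i j * w j) ^ 2 ≤ 16 * n)} ≤ 2 * Real.exp (-n) := by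
  have : IsProbabilityMeasure (gaussianMatrix n m) := by unfold gaussianMatrix; infer_instance
  have h1 := gm_chernoff (n := n) w hw 40 (-(40 * (n / 49))) (by norm_num)
  have h2 := gm_chernoff (n := n) w hw (-1/4) (4 * n) (by norm_num)
  have e3 : Real.exp 1 < 3 := Real.exp_one_lt_three
  have e2 : Real.exp 2 ≤ 9 := by
    have : Real.exp 2 = Real.exp 1 * Real.exp 1 := by rw [← Real.exp_add]; norm_num
    rw [this]; nlinarith [Real.exp_pos 1]
  have hs1 : 1 / √(1 + 2 * 40) ≤ Real.exp (-2) := by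
    have : √(1 + 2 * 40 : ℝ) = 9 := by
      rw [show (1 + 2 * 40 : ℝ) = 9 ^ 2 by norm_num]; exact Real.sqrt_sq (by norm_num)
    rw [this, Real.exp_neg, one_div]
    exact inv_anti₀ (Real.exp_pos 2) e2
  have hs2 : 1 / √(1 + 2 * (-1/4)) ≤ Real.exp 1 := by
    have h : (1 / 2 : ℝ) ≤ √(1 + 2 * (-1/4)) := by
      apply Real.le_sqrt_of_sq_le; norm_num
    have e1 : 2 ≤ Real.exp 1 := by linarith [Real.add_one_le_exp (1:ℝ)]
    calc 1 / √(1 + 2 * (-1/4)) ≤ 1 / (1/2) := one_div_le_one_div_of_le (by norm_num) h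
      _ ≤ Real.exp 1 := by norm_num; exact e1
  have b1 : Real.exp (-(-(40 * ((n:ℝ) / 49)))) * (1 / √(1 + 2 * 40)) ^ n ≤ Real.exp (-n) := by
    calc _ ≤ Real.exp (-(-(40 * ((n:ℝ) / 49)))) * (Real.exp (-2)) ^ n := by gcongr
      _ ≤ _ := by
        rw [← Real.exp_nat_mul, ← Real.exp_add, Real.exp_le_exp]
        have : (0:ℝ) ≤ n := by positivity
        linarith
  have b2 : Real.exp (-(4 * (n:ℝ))) * (1 / √(1 + 2 * (-1/4))) ^ n ≤ Real.exp (-n) := by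
    calc _ ≤ Real.exp (-(4 * (n:ℝ))) * (Real.exp 1) ^ n := by gcongr
      _ ≤ _ := by
        rw [← Real.exp_nat_mul, ← Real.exp_add, Real.exp_le_exp]
        have : (0:ℝ) ≤ n := by positivity
        linarith
  have hsub : {A : Fin n → Fin m → ℝ | ¬ ((n : ℝ) / 49 ≤ ∑ i, (∑ j, A i j * w j) ^ 2 ∧
        ∑ i, (∑ j, A i j * w j) ^ 2 ≤ 16 * n)} ⊆
      {A | -(40 * ((n:ℝ) / 49)) ≤ -40 * ∑ i, (∑ j, A i j * w j) ^ 2} ∪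
      {A | 4 * (n:ℝ) ≤ -(-1/4) * ∑ i, (∑ j, A i j * w j) ^ 2} := by
    intro A hA
    simp only [Set.mem_ofPred_eq, not_and_or, not_le] at hA
    rcases hA with h | h
    · left; simp only [Set.mem_ofPred_eq]; linarith
    · right; simp only [Set.mem_ofPred_eq]; linarith
  calc _ ≤ _ := measureReal_mono hsub
    _ ≤ _ := measureReal_union_le _ _
    _ ≤ 2 * Real.exp (-n) := by linarith

noncomputable def ltwo {m : ℕ} (u : Fin m → ℝ) : ℝ := √(∑ j, u j ^ 2)

def res {m : ℕ} (U : Finset (Fin m)) (u : Fin m → ℝ) : Fin m → ℝ := fun j => if j ∈ U then u j else 0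

lemma ltwo_eq_norm {m : ℕ} (u : Fin m → ℝ) : ltwo u = ‖WithLp.toLp 2 u‖ := by
  simp [ltwo, EuclideanSpace.norm_eq]

lemma ltwo_add_le {m : ℕ} (u v : Fin m → ℝ) : ltwo (u + v) ≤ ltwo u + ltwo v := by
  simp only [ltwo_eq_norm, WithLp.toLp_add]
  exact norm_add_le _ _

lemma ltwo_nonneg {m : ℕ} (u : Fin m → ℝ) : 0 ≤ ltwo u := Real.sqrt_nonneg _

lemma ltwo_smul {m : ℕ} (h : ℝ) (hh : 0 ≤ h) (u : Fin m → ℝ) : ltwo (h • u) = h * ltwo u := by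
  simp only [ltwo_eq_norm, WithLp.toLp_smul, norm_smul, Real.norm_of_nonneg hh]

lemma ltwo_sq {m : ℕ} (u : Fin m → ℝ) : ltwo u ^ 2 = ∑ j, u j ^ 2 :=
  Real.sq_sqrt (Finset.sum_nonneg fun _ _ => sq_nonneg _)

lemma abs_le_ltwo {m : ℕ} (u : Fin m → ℝ) (j : Fin m) : |u j| ≤ ltwo u := by
  apply Real.le_sqrt_of_sq_le
  rw [sq_abs]
  exact Finset.single_le_sum (f := fun j => u j ^ 2) (fun _ _ => sq_nonneg _) (Finset.mem_univ j)

lemma ltwo_mono {m : ℕ} (u v : Fin m → ℝ) (h : ∀ j, |u j| ≤ |v j|) : ltwo u ≤ ltwo v :=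
  Real.sqrt_le_sqrt (Finset.sum_le_sum fun j _ => sq_le_sq.mpr (h j))

lemma ltwo_le_of_supp {m : ℕ} (u : Fin m → ℝ) (U : Finset (Fin m)) (k : ℕ) (hk : U.card ≤ k)
    (M : ℝ) (hM : 0 ≤ M) (hU : ∀ j, j ∉ U → u j = 0) (h : ∀ j, j ∈ U → |u j| ≤ M) :
    ltwo u ≤ √k * M := by
  have h1 : ∑ j, u j ^ 2 = ∑ j ∈ U, u j ^ 2 := by
    symm
    apply Finset.sum_subset (Finset.subset_univ U)
    intro j _ hj
    rw [hU j hj]; norm_num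
  have h2 : ∑ j ∈ U, u j ^ 2 ≤ U.card * M ^ 2 := by
    rw [← nsmul_eq_mul]
    apply Finset.sum_le_card_nsmul
    intro j hj
    rw [← sq_abs]
    exact pow_le_pow_left₀ (abs_nonneg _) (h j hj) 2
  unfold ltwo
  have h3 : √(k:ℝ) * M = √(k * M ^ 2) := by
    rw [Real.sqrt_mul (by positivity), Real.sqrt_sq hM]
  rw [h1, h3]
  apply Real.sqrt_le_sqrt
  refine h2.trans ?_
  gcongr

lemma gm_round_zero (t : ℝ) : ∃ z : ℤ, |t - z| ≤ 1 ∧ |(z : ℝ)| ≤ |t| := by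
  rcases le_total 0 t with h | h
  · refine ⟨⌊t⌋, ?_, ?_⟩
    · rw [abs_le]; constructor <;> linarith [Int.floor_le t, Int.lt_floor_add_one t]
    · have : (0:ℝ) ≤ ⌊t⌋ := by exact_mod_cast Int.floor_nonneg.mpr h
      rw [abs_of_nonneg h, abs_of_nonneg this]; exact Int.floor_le t
  · refine ⟨⌈t⌉, ?_, ?_⟩
    · rw [abs_le]; constructor <;> linarith [Int.le_ceil t, Int.ceil_lt_add_one t]
    · have : (⌈t⌉ : ℝ) ≤ 0 := by
        have : ⌈t⌉ ≤ 0 := Int.ceil_le.mpr (by simpa using h)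
        exact_mod_cast this
      rw [abs_of_nonpos h, abs_of_nonpos this]; linarith [Int.le_ceil t]

lemma net_approx {m k : ℕ} (hk : 1 ≤ k) (u : Fin m → ℝ) (U : Finset (Fin m)) (hU : U.card ≤ k)
    (hs : ∀ j, j ∉ U → u j = 0) :
    ∃ (z : Fin m → ℤ) (h : ℝ) (r : Fin m → ℝ), 0 ≤ h ∧ ∑ j, |z j| ≤ 10000 * (k : ℤ) ∧
      (∀ j, j ∉ U → r j = 0) ∧ u = h • (fun j => (z j : ℝ)) + r ∧ ltwo r ≤ ltwo u / 100 ∧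
      h * ltwo (fun j => (z j : ℝ)) ≤ ltwo u := by
  have hkr : (0:ℝ) < k := by exact_mod_cast hk
  rcases (ltwo_nonneg u).eq_or_lt with h0 | h0
  · refine ⟨0, 0, u, le_rfl, by simp, hs, by simp, by rw [← h0]; simp, by rw [← h0]; simp⟩
  set h : ℝ := ltwo u / (100 * √k) with hh
  have hsk : 0 < √(k:ℝ) := Real.sqrt_pos.mpr hkr
  have hpos : 0 < h := by positivity
  choose z hz1 hz2 using fun j => gm_round_zero (u j / h)
  refine ⟨z, h, fun j => u j - h * z j, hpos.le, ?_, ?_, ?_, ?_, ?_⟩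
  · have h1 : ∀ j, (|z j| : ℝ) ≤ u j ^ 2 / h ^ 2 := by
      intro j
      have : (|z j|) ≤ z j ^ 2 := by
        rw [← sq_abs]
        have := abs_nonneg (z j)
        nlinarith
      have h' : (|z j| : ℝ) ≤ (z j : ℝ) ^ 2 := by exact_mod_cast this
      refine h'.trans ?_
      rw [← div_pow]
      exact sq_le_sq.mpr (hz2 j)
    have h2 : (∑ j, |(z j : ℝ)|) ≤ 10000 * k := by
      calc (∑ j, |(z j : ℝ)|) ≤ ∑ j, u j ^ 2 / h ^ 2 := Finset.sum_le_sum fun j _ => h1 j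
        _ = ltwo u ^ 2 / h ^ 2 := by rw [← Finset.sum_div, ltwo_sq]
        _ = 10000 * k := by
          rw [hh, div_pow, mul_pow, Real.sq_sqrt hkr.le]
          field_simp
          norm_num
    exact_mod_cast h2
  · intro j hj
    have := hz2 j
    rw [hs j hj, zero_div, abs_zero] at this
    have hz0 : (z j : ℝ) = 0 := abs_nonpos_iff.mp this
    simp [hs j hj, hz0]
  · ext j; simp
  · have := ltwo_le_of_supp (fun j => u j - h * z j) U k hU h hpos.le (fun j hj => by
      have := hz2 j
      rw [hs j hj, zero_div, abs_zero] at this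
      have hz0 : (z j : ℝ) = 0 := abs_nonpos_iff.mp this
      simp [hs j hj, hz0]) (fun j _ => by
        have h3 : u j - h * z j = h * (u j / h - z j) := by field_simp
        rw [h3, abs_mul, abs_of_pos hpos]
        nlinarith [hz1 j])
    refine this.trans (le_of_eq ?_)
    rw [hh]; field_simp
  · rw [← ltwo_smul h hpos.le]
    apply ltwo_mono
    intro j
    simp only [Pi.smul_apply, smul_eq_mul, abs_mul, abs_of_pos hpos]
    have := hz2 j
    rw [abs_div, abs_of_pos hpos, le_div_iff₀ hpos] at this
    linarith

lemma sparse_of_net {m k : ℕ} (hk : 1 ≤ k) {V : Type*} [NormedAddCommGroup V] [NormedSpace ℝ V]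
    (F : (Fin m → ℝ) →ₗ[ℝ] V) (R : ℝ) (hR : 0 < R)
    (hnet : ∀ z : Fin m → ℤ, ∑ j, |z j| ≤ 10000 * (k : ℤ) →
      R / 7 * ltwo (fun j => (z j : ℝ)) ≤ ‖F (fun j => (z j : ℝ))‖ ∧
      ‖F (fun j => (z j : ℝ))‖ ≤ 4 * R * ltwo (fun j => (z j : ℝ))) :
    ∀ (u : Fin m → ℝ) (U : Finset (Fin m)), U.card ≤ k → (∀ j, j ∉ U → u j = 0) →
      R / 20 * ltwo u ≤ ‖F u‖ ∧ ‖F u‖ ≤ 5 * R * ltwo u := by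
  set S : Set ℝ := {c | 0 ≤ c ∧ ∀ (u : Fin m → ℝ) (U : Finset (Fin m)), U.card ≤ k →
    (∀ j, j ∉ U → u j = 0) → ‖F u‖ ≤ c * ltwo u} with hS
  have hne : S.Nonempty := by
    refine ⟨∑ j, ‖F (Pi.single j 1)‖, Finset.sum_nonneg fun _ _ => norm_nonneg _, ?_⟩
    intro u U _ _
    have hu : u = ∑ j, u j • (Pi.single j (1:ℝ) : Fin m → ℝ) := by
      ext i; simp [Finset.sum_apply, Pi.single_apply]
    calc ‖F u‖ = ‖∑ j, u j • F (Pi.single j 1)‖ := by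
          conv_lhs => rw [hu]
          simp only [map_sum, map_smul]
      _ ≤ ∑ j, ‖u j • F (Pi.single j 1)‖ := norm_sum_le _ _
      _ ≤ ∑ j, ‖F (Pi.single j 1)‖ * ltwo u := by
          apply Finset.sum_le_sum
          intro j _
          rw [norm_smul, mul_comm]
          exact mul_le_mul_of_nonneg_left (abs_le_ltwo u j) (norm_nonneg _)
      _ = _ := by rw [Finset.sum_mul]
  have hbdd : BddBelow S := ⟨0, fun c hc => hc.1⟩
  have hstep : ∀ c ∈ S, 4 * R + c / 100 ∈ S := by
    rintro c ⟨hc0, hc⟩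
    refine ⟨by positivity, ?_⟩
    intro u U hU hs
    obtain ⟨z, h, r, hh, hz, hr, hu, hr2, hz2⟩ := net_approx hk u U hU hs
    calc ‖F u‖ = ‖h • F (fun j => (z j : ℝ)) + F r‖ := by
          conv_lhs => rw [hu]
          simp only [map_add, map_smul]
      _ ≤ h * ‖F (fun j => (z j : ℝ))‖ + ‖F r‖ := by
          refine (norm_add_le _ _).trans ?_
          rw [norm_smul, Real.norm_of_nonneg hh]
      _ ≤ h * (4 * R * ltwo (fun j => (z j : ℝ))) + c * ltwo r := by
          have := (hnet z hz).2
          have := hc r U hU hr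
          gcongr
      _ ≤ (4 * R + c / 100) * ltwo u := by
          have h1 : 4 * R * (h * ltwo (fun j => (z j : ℝ))) ≤ 4 * R * ltwo u := by gcongr
          have h2 : c * ltwo r ≤ c * (ltwo u / 100) := by gcongr
          linarith
  have h1 : ∀ c ∈ S, 100 * (sInf S - 4 * R) ≤ c := by
    intro c hc
    have := csInf_le hbdd (hstep c hc)
    linarith
  have h2 : 100 * (sInf S - 4 * R) ≤ sInf S := le_csInf hne h1
  obtain ⟨c, hc, hc5⟩ := exists_lt_of_csInf_lt hne (show sInf S < 5 * R by linarith)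
  have hup : ∀ (u : Fin m → ℝ) (U : Finset (Fin m)), U.card ≤ k → (∀ j, j ∉ U → u j = 0) →
      ‖F u‖ ≤ 5 * R * ltwo u := by
    intro u U hU hs
    refine (hc.2 u U hU hs).trans ?_
    have := ltwo_nonneg u
    gcongr
  intro u U hU hs
  refine ⟨?_, hup u U hU hs⟩
  obtain ⟨z, h, r, hh, hz, hr, hu, hr2, hz2⟩ := net_approx hk u U hU hs
  have a1 : ‖h • F (fun j => (z j : ℝ))‖ ≤ ‖F u‖ + ‖F r‖ := by
    have : h • F (fun j => (z j : ℝ)) = F u - F r := by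
      conv_rhs => rw [hu]
      simp only [map_add, map_smul, add_sub_cancel_right]
    rw [this]; exact norm_sub_le _ _
  rw [norm_smul, Real.norm_of_nonneg hh] at a1
  have a2 : h * (R / 7 * ltwo (fun j => (z j : ℝ))) ≤ h * ‖F (fun j => (z j : ℝ))‖ := by
    have := (hnet z hz).1
    gcongr
  have a3 := hup r U hU hr
  have a4 : ltwo u ≤ h * ltwo (fun j => (z j : ℝ)) + ltwo r := by
    rw [← ltwo_smul h hh]
    conv_lhs => rw [hu]
    exact ltwo_add_le _ _
  have a5 : 5 * R * ltwo r ≤ 5 * R * (ltwo u / 100) := by gcongr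
  have a6 : R * (99 / 100 * ltwo u) ≤ R * (h * ltwo (fun j => (z j : ℝ))) := by
    apply mul_le_mul_of_nonneg_left _ hR.le
    linarith
  have a7 : 0 ≤ R * ltwo u := mul_nonneg hR.le (ltwo_nonneg u)
  linarith

lemma top_exists {m : ℕ} (y : Fin m → ℝ) (U : Finset (Fin m)) (s : ℕ) (hs : s ≤ U.card) :
    ∃ T ⊆ U, T.card = s ∧ ∀ i ∈ T, ∀ j ∈ U \ T, |y j| ≤ |y i| := by
  induction s with
  | zero => exact ⟨∅, by simp, by simp, by simp⟩
  | succ s ih =>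
    obtain ⟨T, hT, hc, h⟩ := ih (by omega)
    have hne : (U \ T).Nonempty := by
      rw [← Finset.card_pos, Finset.card_sdiff_of_subset hT]; omega
    obtain ⟨j0, hj0, hmax⟩ := Finset.exists_max_image (U \ T) (fun j => |y j|) hne
    have hj0' := Finset.mem_sdiff.mp hj0
    refine ⟨insert j0 T, ?_, ?_, ?_⟩
    · exact Finset.insert_subset hj0'.1 hT
    · rw [Finset.card_insert_of_notMem hj0'.2, hc]
    · intro i hi j hj
      have hj' : j ∈ U \ T := by
        simp only [Finset.mem_sdiff, Finset.mem_insert, not_or] at hj ⊢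
        exact ⟨hj.1, hj.2.2⟩
      rcases Finset.mem_insert.mp hi with rfl | hi
      · exact hmax j hj'
      · exact h i hi j hj'

lemma res_add {m : ℕ} (y : Fin m → ℝ) (U T : Finset (Fin m)) (h : T ⊆ U) :
    res U y = res T y + res (U \ T) y := by
  ext j
  simp only [res, Pi.add_apply, Finset.mem_sdiff]
  by_cases h1 : j ∈ T
  · simp [h1, h h1]
  · by_cases h2 : j ∈ U <;> simp [h1, h2]

lemma block_bound {m s : ℕ} (hs : 1 ≤ s) {V : Type*} [NormedAddCommGroup V] [NormedSpace ℝ V]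
    (F : (Fin m → ℝ) →ₗ[ℝ] V) (B : ℝ) (hB : 0 ≤ B) (p : ℝ) (hp : 0 < p) (hp1 : p ≤ 1)
    (hF : ∀ (u : Fin m → ℝ) (U : Finset (Fin m)), U.card ≤ s → (∀ j, j ∉ U → u j = 0) →
      ‖F u‖ ≤ B * ltwo u) (y : Fin m → ℝ) :
    ∀ (N : ℕ) (U : Finset (Fin m)), U.card ≤ N → ∃ T ⊆ U, T.card ≤ s ∧
      (∀ j ∈ U \ T, |y j| ≤ (s : ℝ) ^ (-(1 / p)) * (∑ j ∈ U, |y j| ^ p) ^ (1 / p)) ∧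
      ‖F (res (U \ T) y)‖ ≤ B * (√s * ((s : ℝ) ^ (-(1 / p)) * (∑ j ∈ U, |y j| ^ p) ^ (1 / p))) := by
  have hsr : (0:ℝ) < s := by exact_mod_cast hs
  have hWnn : ∀ U : Finset (Fin m), 0 ≤ ∑ j ∈ U, |y j| ^ p := fun U =>
    Finset.sum_nonneg fun _ _ => by positivity
  have hip : 1 ≤ 1 / p := by rw [le_div_iff₀ hp]; linarith
  have triv : ∀ U : Finset (Fin m), U.card ≤ s → ∃ T ⊆ U, T.card ≤ s ∧
      (∀ j ∈ U \ T, |y j| ≤ (s : ℝ) ^ (-(1 / p)) * (∑ j ∈ U, |y j| ^ p) ^ (1 / p)) ∧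
      ‖F (res (U \ T) y)‖ ≤ B * (√s * ((s : ℝ) ^ (-(1 / p)) * (∑ j ∈ U, |y j| ^ p) ^ (1 / p))) := by
    intro U hU
    refine ⟨U, subset_rfl, hU, by simp, ?_⟩
    have : res (U \ U) y = 0 := by ext j; simp [res]
    rw [this, map_zero, norm_zero]
    have := hWnn U
    positivity
  intro N
  induction N with
  | zero => intro U hU; exact triv U (by omega)
  | succ N ih =>
    intro U hU
    by_cases hUs : U.card ≤ s
    · exact triv U hUs
    obtain ⟨T, hT, hTc, htop⟩ := top_exists y U s (by omega)
    obtain ⟨T', hT', hTc', -, hF'⟩ := ih (U \ T) (by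
      rw [Finset.card_sdiff_of_subset hT]; omega)
    have hM : ∀ j ∈ U \ T, |y j| ≤ (s : ℝ) ^ (-(1 / p)) * (∑ j ∈ T, |y j| ^ p) ^ (1 / p) := by
      intro j hj
      have h1 : (s : ℝ) * |y j| ^ p ≤ ∑ i ∈ T, |y i| ^ p := by
        rw [← hTc, ← nsmul_eq_mul]
        apply Finset.card_nsmul_le_sum
        intro i hi
        exact Real.rpow_le_rpow (abs_nonneg _) (htop i hi j hj) hp.le
      have h2 : |y j| ^ p ≤ (s:ℝ)⁻¹ * ∑ i ∈ T, |y i| ^ p := by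
        rw [inv_mul_eq_div, le_div_iff₀ hsr]; linarith
      have h3 := Real.rpow_le_rpow (by positivity) h2 (show 0 ≤ 1 / p by positivity)
      rw [← Real.rpow_mul (abs_nonneg _), mul_one_div_cancel hp.ne', Real.rpow_one,
        Real.mul_rpow (by positivity) (hWnn T), Real.inv_rpow hsr.le, ← Real.rpow_neg hsr.le] at h3
      exact h3
    have hWT : (∑ j ∈ T, |y j| ^ p) ^ (1 / p) ≤ (∑ j ∈ U, |y j| ^ p) ^ (1 / p) := by
      apply Real.rpow_le_rpow (hWnn T) _ (by positivity)
      exact Finset.sum_le_sum_of_subset_of_nonneg hT fun _ _ _ => by positivity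
    have hsup : (∑ j ∈ T, |y j| ^ p) ^ (1 / p) + (∑ j ∈ U \ T, |y j| ^ p) ^ (1 / p)
        ≤ (∑ j ∈ U, |y j| ^ p) ^ (1 / p) := by
      rw [← Finset.sum_sdiff hT, add_comm (∑ j ∈ U \ T, |y j| ^ p)]
      have := NNReal.add_rpow_le_rpow_add ⟨_, hWnn T⟩ ⟨_, hWnn (U \ T)⟩ hip
      exact_mod_cast this
    refine ⟨T, hT, hTc.le, ?_, ?_⟩
    · intro j hj
      refine (hM j hj).trans ?_
      gcongr
    · rw [res_add y (U \ T) T' hT', map_add]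
      refine (norm_add_le _ _).trans ?_
      have hMn : 0 ≤ (s : ℝ) ^ (-(1 / p)) * (∑ j ∈ T, |y j| ^ p) ^ (1 / p) := by
        have := hWnn T
        positivity
      have g1 : ‖F (res T' y)‖ ≤ B * (√s * ((s : ℝ) ^ (-(1 / p)) * (∑ j ∈ T, |y j| ^ p) ^ (1 / p))) := by
        refine (hF (res T' y) T' hTc' (fun j hj => by simp [res, hj])).trans ?_
        apply mul_le_mul_of_nonneg_left _ hB
        apply ltwo_le_of_supp _ T' s hTc' _ hMn (fun j hj => by simp [res, hj])
        intro j hj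
        simp only [res, hj, if_true]
        exact hM j (hT' hj)
      refine (add_le_add g1 hF').trans ?_
      rw [← mul_add, ← mul_add, ← mul_add]
      gcongr

noncomputable def matF {n m : ℕ} (A : Fin n → Fin m → ℝ) :
    (Fin m → ℝ) →ₗ[ℝ] EuclideanSpace ℝ (Fin n) :=
  (WithLp.linearEquiv 2 ℝ (Fin n → ℝ)).symm.toLinearMap ∘ₗ Matrix.mulVecLin (Matrix.of A)

lemma matF_norm {n m : ℕ} (A : Fin n → Fin m → ℝ) (u : Fin m → ℝ) :
    ‖matF A u‖ = √(∑ i, (∑ j, A i j * u j) ^ 2) := by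
  simp [matF, EuclideanSpace.norm_eq, Matrix.mulVec, dotProduct]

lemma tail_one {n m : ℕ} (z : Fin m → ℝ) :
    (gaussianMatrix n m).real {A | ¬ (√n / 7 * ltwo z ≤ ‖matF A z‖ ∧
        ‖matF A z‖ ≤ 4 * √n * ltwo z)} ≤ 2 * Real.exp (-n) := by
  have : IsProbabilityMeasure (gaussianMatrix n m) := by unfold gaussianMatrix; infer_instance
  rcases (ltwo_nonneg z).eq_or_lt with h0 | h0
  · have hz : z = 0 := by
      ext j
      have := abs_le_ltwo z j
      rw [← h0] at this
      exact abs_nonpos_iff.mp this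
    have : {A : Fin n → Fin m → ℝ | ¬ (√n / 7 * ltwo z ≤ ‖matF A z‖ ∧
        ‖matF A z‖ ≤ 4 * √n * ltwo z)} = ∅ := by
      ext A
      simp only [Set.mem_ofPred_eq, ← h0]
      simp [hz]
    rw [this]
    simp
    positivity
  · set w : Fin m → ℝ := fun j => z j / ltwo z with hw
    have hw1 : ∑ j, w j ^ 2 = 1 := by
      simp only [hw, div_pow]
      rw [← Finset.sum_div, ← ltwo_sq]
      field_simp
    refine (measureReal_mono ?_).trans (gm_tail (n := n) w hw1)
    intro A hA
    simp only [Set.mem_ofPred_eq] at hA ⊢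
    intro h
    apply hA
    have e : ‖matF A z‖ = √(∑ i, (∑ j, A i j * w j) ^ 2) * ltwo z := by
      rw [← matF_norm, mul_comm]
      have : z = ltwo z • w := by
        ext j; simp only [hw, Pi.smul_apply, smul_eq_mul]; field_simp
      conv_lhs => rw [this]
      rw [map_smul, norm_smul, Real.norm_of_nonneg h0.le]
    rw [e]
    constructor
    · apply mul_le_mul_of_nonneg_right _ h0.le
      have : √(n:ℝ) / 7 = √(n / 49) := by
        rw [Real.sqrt_div (by positivity), show (49:ℝ) = 7 ^ 2 by norm_num,
          Real.sqrt_sq (by norm_num)]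
      rw [this]
      exact Real.sqrt_le_sqrt h.1
    · apply mul_le_mul_of_nonneg_right _ h0.le
      have : 4 * √(n:ℝ) = √(16 * n) := by
        rw [Real.sqrt_mul (by positivity), show (16:ℝ) = 4 ^ 2 by norm_num,
          Real.sqrt_sq (by norm_num)]
      rw [this]
      exact Real.sqrt_le_sqrt h.2

lemma tail_net {n m : ℕ} (N : Finset (Fin m → ℤ)) :
    (gaussianMatrix n m).real {A | ¬ ∀ z ∈ N, (√n / 7 * ltwo (fun j => (z j : ℝ)) ≤
        ‖matF A (fun j => (z j : ℝ))‖ ∧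
        ‖matF A (fun j => (z j : ℝ))‖ ≤ 4 * √n * ltwo (fun j => (z j : ℝ)))}
      ≤ N.card * (2 * Real.exp (-n)) := by
  have : IsProbabilityMeasure (gaussianMatrix n m) := by unfold gaussianMatrix; infer_instance
  have hset : {A : Fin n → Fin m → ℝ | ¬ ∀ z ∈ N, (√n / 7 * ltwo (fun j => (z j : ℝ)) ≤
        ‖matF A (fun j => (z j : ℝ))‖ ∧
        ‖matF A (fun j => (z j : ℝ))‖ ≤ 4 * √n * ltwo (fun j => (z j : ℝ)))}
      ⊆ ⋃ z ∈ N, {A | ¬ (√n / 7 * ltwo (fun j => (z j : ℝ)) ≤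
        ‖matF A (fun j => (z j : ℝ))‖ ∧
        ‖matF A (fun j => (z j : ℝ))‖ ≤ 4 * √n * ltwo (fun j => (z j : ℝ)))} := by
    intro A hA
    rw [Set.mem_ofPred_eq] at hA
    push Not at hA
    obtain ⟨z, hz, h⟩ := hA
    simp only [Set.mem_iUnion]
    refine ⟨z, hz, ?_⟩
    rw [Set.mem_ofPred_eq]
    push Not
    exact h
  refine (measureReal_mono hset (measure_ne_top _ _)).trans ?_
  refine (measureReal_biUnion_finset_le _ _).trans ?_
  rw [← nsmul_eq_mul]
  apply Finset.sum_le_card_nsmul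
  intro z _
  exact tail_one _

lemma geom_int (t : ℝ) (ht : 0 ≤ t) (ht2 : t ≤ 1 / 2) (M : ℕ) :
    ∑ a ∈ Finset.Icc (-(M:ℤ)) M, t ^ a.natAbs + 4 * t ^ (M + 1) ≤ 1 + 4 * t := by
  induction M with
  | zero => simp
  | succ M ih =>
    have h : Finset.Icc (-((M + 1 : ℕ):ℤ)) ((M + 1 : ℕ):ℤ)
        = insert ((M:ℤ) + 1) (insert (-((M:ℤ) + 1)) (Finset.Icc (-(M:ℤ)) M)) := by
      ext a; simp only [Finset.mem_Icc, Finset.mem_insert]; push_cast; omega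
    rw [h, Finset.sum_insert (by simp only [Finset.mem_Icc, Finset.mem_insert]; omega),
      Finset.sum_insert (by simp only [Finset.mem_Icc]; omega)]
    have e1 : ((M:ℤ) + 1).natAbs = M + 1 := by omega
    have e2 : (-((M:ℤ) + 1)).natAbs = M + 1 := by omega
    rw [e1, e2]
    have : t ^ (M + 1 + 1) ≤ t ^ (M + 1) * (1 / 2) := by
      rw [pow_succ]; gcongr
    linarith

noncomputable def intNet (m M : ℕ) : Finset (Fin m → ℤ) :=
  (Fintype.piFinset fun _ => Finset.Icc (-(M:ℤ)) M).filter fun z => ∑ j, |z j| ≤ M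

lemma mem_intNet {m M : ℕ} (z : Fin m → ℤ) (h : ∑ j, |z j| ≤ M) : z ∈ intNet m M := by
  simp only [intNet, Finset.mem_filter, Fintype.mem_piFinset, Finset.mem_Icc]
  refine ⟨fun j => ?_, h⟩
  rw [← abs_le]
  exact (Finset.single_le_sum (f := fun j => |z j|) (fun _ _ => abs_nonneg _)
    (Finset.mem_univ j)).trans h

lemma card_intNet (m M : ℕ) (t : ℝ) (ht : 0 < t) (ht2 : t ≤ 1 / 2) :
    ((intNet m M).card : ℝ) * t ^ M ≤ Real.exp (4 * t * m) := by
  calc ((intNet m M).card : ℝ) * t ^ M = ∑ z ∈ intNet m M, t ^ M := by simp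
    _ ≤ ∑ z ∈ intNet m M, ∏ j, t ^ (z j).natAbs := by
        apply Finset.sum_le_sum
        intro z hz
        rw [Finset.prod_pow_eq_pow_sum]
        apply pow_le_pow_of_le_one ht.le (by linarith)
        have := (Finset.mem_filter.mp hz).2
        zify
        exact this
    _ ≤ ∑ z ∈ Fintype.piFinset fun _ : Fin m => Finset.Icc (-(M:ℤ)) M, ∏ j, t ^ (z j).natAbs := by
        apply Finset.sum_le_sum_of_subset_of_nonneg (Finset.filter_subset _ _)
        intro z _ _
        exact Finset.prod_nonneg fun j _ => by positivity
    _ = ∏ j : Fin m, ∑ a ∈ Finset.Icc (-(M:ℤ)) M, t ^ a.natAbs := by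
        rw [Finset.prod_univ_sum]
    _ ≤ ∏ j : Fin m, Real.exp (4 * t) := by
        apply Finset.prod_le_prod
        · intro j _; positivity
        · intro j _
          have h1 := geom_int t ht.le ht2 M
          have h2 := Real.add_one_le_exp (4 * t)
          have : 0 ≤ 4 * t ^ (M + 1) := by positivity
          linarith
    _ = Real.exp (4 * t * m) := by
        rw [Finset.prod_const, ← Real.exp_nat_mul]
        simp [mul_comm]

lemma card_final (m n s : ℕ) (hn : 1 ≤ n) (hnm : n < m)
    (hs : (s:ℝ) * (320000 * Real.log (Real.exp 1 * m / n)) ≤ n) :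
    ((intNet m (10000 * (2 * s))).card : ℝ) ≤ Real.exp (n / 2) := by
  have hn0 : (0:ℝ) < n := by exact_mod_cast hn
  have hm0 : (0:ℝ) < m := hn0.trans (by exact_mod_cast hnm)
  have hnm' : (n:ℝ) ≤ m := by exact_mod_cast hnm.le
  set L := Real.log (Real.exp 1 * m / n) with hL
  have hexpL : Real.exp L = Real.exp 1 * m / n := Real.exp_log (by positivity)
  have hL1 : 1 ≤ L := by
    rw [hL, Real.le_log_iff_exp_le (by positivity), le_div_iff₀ hn0]
    gcongr
  have e1 : 2 ≤ Real.exp 1 := by linarith [Real.add_one_le_exp (1:ℝ)]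
  have e3 : 8 ≤ Real.exp 3 := by
    have : Real.exp 3 = Real.exp 1 ^ 3 := by rw [← Real.exp_nat_mul]; norm_num
    rw [this]
    calc (8:ℝ) = 2 ^ 3 := by norm_num
      _ ≤ _ := by gcongr
  have hc := card_intNet m (10000 * (2 * s)) (Real.exp (-L) / 8) (by positivity) (by
    have : Real.exp (-L) ≤ 1 := Real.exp_le_one_iff.mpr (by linarith)
    linarith)
  have ht : 4 * (Real.exp (-L) / 8) * m ≤ n / 4 := by
    rw [Real.exp_neg, hexpL]
    have : 4 * ((Real.exp 1 * m / n)⁻¹ / 8) * m = n / 2 / Real.exp 1 := by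
      field_simp
      norm_num
    rw [this, div_le_iff₀ (by positivity)]
    nlinarith
  have ht' : Real.exp (-(4 * L)) ≤ Real.exp (-L) / 8 := by
    rw [le_div_iff₀ (by norm_num)]
    calc Real.exp (-(4 * L)) * 8 ≤ Real.exp (-(4 * L)) * Real.exp 3 := by gcongr
      _ = Real.exp (-(4 * L) + 3) := by rw [Real.exp_add]
      _ ≤ Real.exp (-L) := by rw [Real.exp_le_exp]; linarith
  have h1 : ((intNet m (10000 * (2 * s))).card : ℝ) * Real.exp (-(n / 4)) ≤ Real.exp (n / 4) := by
    calc _ ≤ ((intNet m (10000 * (2 * s))).card : ℝ) * (Real.exp (-L) / 8) ^ (10000 * (2 * s)) := by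
          apply mul_le_mul_of_nonneg_left _ (by positivity)
          calc Real.exp (-((n:ℝ) / 4)) ≤ Real.exp (-(4 * L)) ^ (10000 * (2 * s)) := by
                rw [← Real.exp_nat_mul, Real.exp_le_exp]
                push_cast
                linarith
            _ ≤ _ := by gcongr
      _ ≤ _ := hc
      _ ≤ _ := by rw [Real.exp_le_exp]; exact ht
  rw [Real.exp_neg, ← div_eq_mul_inv, div_le_iff₀ (Real.exp_pos _), ← Real.exp_add] at h1
  refine h1.trans (le_of_eq ?_)
  congr 1; ring

lemma det_final {m s : ℕ} (hs : 1 ≤ s) {V : Type*} [NormedAddCommGroup V] [NormedSpace ℝ V]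
    (F : (Fin m → ℝ) →ₗ[ℝ] V) (R : ℝ) (hR : 0 < R) (p q lam : ℝ) (hp : 0 < p) (hp1 : p ≤ 1)
    (hpq : p < q) (hq2 : q ≤ 2) (hlam : 0 < lam)
    (hF : ∀ (u : Fin m → ℝ) (U : Finset (Fin m)), U.card ≤ 2 * s → (∀ j, j ∉ U → u j = 0) →
      R / 20 * ltwo u ≤ ‖F u‖ ∧ ‖F u‖ ≤ 5 * R * ltwo u)
    (x : Fin m → ℝ) (hker : F x = 0)
    (hx : ∑ j, |x j / ((j : ℕ) + 1 : ℝ) ^ (-lam)| ^ p ≤ 1) :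
    (∑ j, |x j| ^ q) ^ (1 / q) ≤ 10003 ^ (1 / q) * (s : ℝ) ^ (-(lam + 1 / p - 1 / q)) := by
  have hsr : (0:ℝ) < s := by exact_mod_cast hs
  have hq : 0 < q := hp.trans hpq
  set U : Finset (Fin m) := Finset.univ.filter fun j => s ≤ (j : ℕ) with hU
  have hW : ∑ j ∈ U, |x j| ^ p ≤ (s:ℝ) ^ (-(lam * p)) := by
    have h1 : ∀ j ∈ U, |x j| ^ p ≤ (s:ℝ) ^ (-(lam * p)) *
        |x j / ((j : ℕ) + 1 : ℝ) ^ (-lam)| ^ p := by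
      intro j hj
      have hj' : s ≤ (j:ℕ) := (Finset.mem_filter.mp hj).2
      have hj1 : (s:ℝ) ≤ (j:ℕ) + 1 := by
        have : (s:ℝ) ≤ (j:ℕ) := by exact_mod_cast hj'
        linarith
      have hjp : (0:ℝ) < (j:ℕ) + 1 := by positivity
      have e : (s:ℝ) ^ (-(lam * p)) = ((s:ℝ) ^ (-lam)) ^ p := by
        rw [← Real.rpow_mul hsr.le]; ring_nf
      rw [e, ← Real.mul_rpow (by positivity) (by positivity)]
      apply Real.rpow_le_rpow (abs_nonneg _) _ hp.le
      have hpos : 0 < ((j : ℕ) + 1 : ℝ) ^ (-lam) := by positivity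
      rw [abs_div, abs_of_pos hpos, mul_div_assoc', le_div_iff₀ hpos, mul_comm]
      apply mul_le_mul_of_nonneg_right _ (abs_nonneg _)
      exact Real.rpow_le_rpow_of_nonpos hsr hj1 (by linarith)
    calc ∑ j ∈ U, |x j| ^ p ≤ ∑ j ∈ U, (s:ℝ) ^ (-(lam * p)) *
        |x j / ((j : ℕ) + 1 : ℝ) ^ (-lam)| ^ p := Finset.sum_le_sum h1
      _ = (s:ℝ) ^ (-(lam * p)) * ∑ j ∈ U, |x j / ((j : ℕ) + 1 : ℝ) ^ (-lam)| ^ p := by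
        rw [Finset.mul_sum]
      _ ≤ (s:ℝ) ^ (-(lam * p)) * 1 := by
        apply mul_le_mul_of_nonneg_left _ (by positivity)
        refine (Finset.sum_le_sum_of_subset_of_nonneg (Finset.subset_univ U) ?_).trans hx
        intro j _ _; positivity
      _ = _ := mul_one _
  have hWn : 0 ≤ ∑ j ∈ U, |x j| ^ p := Finset.sum_nonneg fun _ _ => by positivity
  set H : ℝ := (s:ℝ) ^ (-(1 / p)) * (s:ℝ) ^ (-lam) with hH
  have hHpos : 0 < H := by positivity
  have hWH : (s:ℝ) ^ (-(1 / p)) * (∑ j ∈ U, |x j| ^ p) ^ (1 / p) ≤ H := by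
    rw [hH]
    apply mul_le_mul_of_nonneg_left _ (by positivity)
    refine (Real.rpow_le_rpow hWn hW (by positivity)).trans (le_of_eq ?_)
    rw [← Real.rpow_mul hsr.le]
    congr 1; field_simp
  obtain ⟨T, hT, hTc, hTj, hTF⟩ := block_bound hs F (5 * R) (by positivity) p hp hp1
    (fun u U hU hu => (hF u U (by omega) hu).2) x _ U le_rfl
  have hTF' : ‖F (res (U \ T) x)‖ ≤ 5 * R * (√s * H) := by
    refine hTF.trans ?_
    gcongr
  set S : Finset (Fin m) := Uᶜ ∪ T with hS
  have hScompl : Finset.univ \ S = U \ T := by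
    ext j; simp [hS]
  have hUc : (Uᶜ).card ≤ s := by
    have : (Uᶜ).card ≤ (Finset.range s).card := by
      apply Finset.card_le_card_of_injOn (fun j : Fin m => (j:ℕ))
      · intro j hj
        simp only [hU, Finset.coe_compl, Finset.coe_filter, Finset.mem_univ, true_and,
          Set.mem_compl_iff, Set.mem_ofPred_eq, not_le] at hj
        simpa using hj
      · intro a _ b _ hab
        exact Fin.ext hab
    simpa using this
  have hSc : S.card ≤ 2 * s := by
    have := Finset.card_union_le Uᶜ T
    rw [hS]
    omega
  have hl2 : ltwo (res S x) ≤ 100 * (√s * H) := by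
    have h1 := (hF (res S x) S hSc (fun j hj => by simp [res, hj])).1
    have h2 : F (res S x) = - F (res (U \ T) x) := by
      have h3 := res_add x Finset.univ S (Finset.subset_univ S)
      have h4 : res Finset.univ x = x := by ext j; simp [res]
      rw [h4, hScompl] at h3
      rw [h3, map_add] at hker
      exact eq_neg_of_add_eq_zero_left hker
    rw [h2, norm_neg] at h1
    have h5 := h1.trans hTF'
    have h6 : R * ltwo (res S x) ≤ R * (100 * (√s * H)) := by linarith
    exact le_of_mul_le_mul_left h6 hR
  have hsq : ∑ j ∈ S, x j ^ 2 ≤ 10000 * s * H ^ 2 := by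
    have h1 : ∑ j ∈ S, x j ^ 2 = ltwo (res S x) ^ 2 := by
      rw [ltwo_sq, ← Finset.sum_filter_add_sum_filter_not Finset.univ (· ∈ S)]
      have a : ∑ j ∈ Finset.univ.filter (· ∉ S), res S x j ^ 2 = 0 := by
        apply Finset.sum_eq_zero
        intro j hj
        simp [res, (Finset.mem_filter.mp hj).2]
      rw [a, add_zero]
      have b : Finset.univ.filter (· ∈ S) = S := by ext; simp
      rw [b]
      apply Finset.sum_congr rfl
      intro j hj
      simp [res, hj]
    rw [h1]
    calc ltwo (res S x) ^ 2 ≤ (100 * (√s * H)) ^ 2 := pow_le_pow_left₀ (ltwo_nonneg _) hl2 2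
      _ = 10000 * s * H ^ 2 := by rw [mul_pow, mul_pow, Real.sq_sqrt hsr.le]; ring
  have hA : ∑ j ∈ S, |x j| ^ q ≤ 10002 * s * H ^ q := by
    have h1 : ∀ j ∈ S, |x j| ^ q ≤ H ^ q + H ^ (q - 2) * x j ^ 2 := by
      intro j _
      rcases le_total |x j| H with h | h
      · have : |x j| ^ q ≤ H ^ q := Real.rpow_le_rpow (abs_nonneg _) h hq.le
        have : 0 ≤ H ^ (q - 2) * x j ^ 2 := by positivity
        linarith
      · have hxp : 0 < |x j| := hHpos.trans_le h
        have e : |x j| ^ q = |x j| ^ (q - 2) * x j ^ 2 := by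
          rw [← sq_abs, ← Real.rpow_natCast, ← Real.rpow_add hxp]; norm_num
        have : |x j| ^ (q - 2) ≤ H ^ (q - 2) :=
          Real.rpow_le_rpow_of_nonpos hHpos h (by linarith)
        rw [e]
        have h2 : |x j| ^ (q - 2) * x j ^ 2 ≤ H ^ (q - 2) * x j ^ 2 := by gcongr
        have : 0 ≤ H ^ q := by positivity
        linarith
    have hHq : H ^ (q - 2) * H ^ 2 = H ^ q := by
      rw [← Real.rpow_natCast, ← Real.rpow_add hHpos]; norm_num
    calc ∑ j ∈ S, |x j| ^ q ≤ ∑ j ∈ S, (H ^ q + H ^ (q - 2) * x j ^ 2) := Finset.sum_le_sum h1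
      _ = S.card * H ^ q + H ^ (q - 2) * ∑ j ∈ S, x j ^ 2 := by
        rw [Finset.sum_add_distrib, Finset.mul_sum]; simp
      _ ≤ (2 * s) * H ^ q + H ^ (q - 2) * (10000 * s * H ^ 2) := by
        have : (S.card : ℝ) ≤ 2 * s := by exact_mod_cast hSc
        gcongr
      _ = 10002 * s * H ^ q := by rw [← hHq]; ring
  have hBd : ∑ j ∈ U \ T, |x j| ^ q ≤ s * H ^ q := by
    have h1 : ∀ j ∈ U \ T, |x j| ^ q ≤ H ^ (q - p) * |x j| ^ p := by
      intro j hj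
      have h := (hTj j hj).trans hWH
      have e : |x j| ^ q = |x j| ^ (q - p) * |x j| ^ p := by
        rw [← Real.rpow_add_of_nonneg (abs_nonneg _) (by linarith) hp.le]; ring_nf
      rw [e]
      apply mul_le_mul_of_nonneg_right _ (by positivity)
      exact Real.rpow_le_rpow (abs_nonneg _) h (by linarith)
    have hHp : (s:ℝ) ^ (-(lam * p)) = s * H ^ p := by
      rw [hH, Real.mul_rpow (by positivity) (by positivity), ← Real.rpow_mul hsr.le,
        ← Real.rpow_mul hsr.le]
      have : -(1 / p) * p = -1 := by field_simp
      rw [this, Real.rpow_neg_one, mul_inv_cancel_left₀ hsr.ne']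
      ring_nf
    calc ∑ j ∈ U \ T, |x j| ^ q ≤ ∑ j ∈ U \ T, H ^ (q - p) * |x j| ^ p := Finset.sum_le_sum h1
      _ = H ^ (q - p) * ∑ j ∈ U \ T, |x j| ^ p := by rw [Finset.mul_sum]
      _ ≤ H ^ (q - p) * ∑ j ∈ U, |x j| ^ p := by
        apply mul_le_mul_of_nonneg_left _ (by positivity)
        apply Finset.sum_le_sum_of_subset_of_nonneg Finset.sdiff_subset
        intro j _ _; positivity
      _ ≤ H ^ (q - p) * (s * H ^ p) := by rw [← hHp]; gcongr
      _ = s * (H ^ (q - p) * H ^ p) := by ring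
      _ = s * H ^ q := by rw [← Real.rpow_add hHpos]; ring_nf
  have htot : ∑ j, |x j| ^ q ≤ 10003 * (s * H ^ q) := by
    rw [← Finset.sum_sdiff (Finset.subset_univ S), hScompl]
    linarith
  have hnn : 0 ≤ ∑ j, |x j| ^ q := Finset.sum_nonneg fun _ _ => by positivity
  refine (Real.rpow_le_rpow hnn htot (by positivity)).trans (le_of_eq ?_)
  rw [Real.mul_rpow (by norm_num) (by positivity), Real.mul_rpow hsr.le (by positivity),
    ← Real.rpow_mul hHpos.le, mul_one_div_cancel hq.ne', Real.rpow_one, hH,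
    ← Real.rpow_add hsr, ← Real.rpow_add hsr]
  congr 2
  ring

/-- For `0 < p ≤ 1`, `p < q ≤ 2` and polynomially decaying semiaxes
`σ_j = j^{-λ}` (0-indexed), with probability at least `1 - 2 exp(-C n)` one has
`rad_q(E^m_{p,σ}, ker G_{n,m}) ≤ K (log(e m/n)/n)^{λ + 1/p - 1/q}`,
provided `n ≥ D log(e m/n)`. -/
theorem statement3 (p q : ℝ≥0∞) (hp0 : 0 < p) (hp1 : p ≤ 1) (hpq : p < q) (hq2 : q ≤ 2)
    (lam : ℝ) (hlam : 0 < lam) :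
    ∃ C D K : ℝ, 0 < C ∧ 0 < D ∧ 0 < K ∧
      ∀ (m n : ℕ), 1 ≤ n → n < m →
        D * Real.log (Real.exp 1 * m / n) ≤ n →
        ENNReal.ofReal (1 - 2 * Real.exp (-C * n)) ≤
          gaussianMatrix n m {A |
            radq q (ellipsoid p (fun j : Fin m => ((j : ℕ) + 1 : ℝ) ^ (-lam))) (kerSet A) ≤
              K * (Real.log (Real.exp 1 * m / n) / n) ^
                (lam + 1 / p.toReal - 1 / q.toReal)} := by
  have hpt : p ≠ ∞ := ne_top_of_le_ne_top ENNReal.one_ne_top hp1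
  have hqt : q ≠ ∞ := ne_top_of_le_ne_top (by simp) hq2
  set P := p.toReal with hP
  set Q := q.toReal with hQ
  have hP0 : 0 < P := ENNReal.toReal_pos hp0.ne' hpt
  have hP1 : P ≤ 1 := by simpa using ENNReal.toReal_mono ENNReal.one_ne_top hp1
  have hPQ : P < Q := (ENNReal.toReal_lt_toReal hpt hqt).mpr hpq
  have hQ2 : Q ≤ 2 := by simpa using ENNReal.toReal_mono (by simp) hq2
  have hQ0 : 0 < Q := hP0.trans hPQ
  set γ := lam + 1 / P - 1 / Q with hγ
  have hγ0 : 0 < γ := by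
    have : 1 / Q < 1 / P := one_div_lt_one_div_of_lt hP0 hPQ
    linarith
  refine ⟨1 / 2, 320000, 10003 ^ (1 / Q) * (640000 : ℝ) ^ γ, by norm_num, by norm_num,
    by positivity, ?_⟩
  intro m n hn hnm hD
  have hprob : IsProbabilityMeasure (gaussianMatrix n m) := by
    unfold gaussianMatrix; infer_instance
  have hn0 : (0:ℝ) < n := by exact_mod_cast hn
  have hm0 : (0:ℝ) < m := hn0.trans (by exact_mod_cast hnm)
  have hnm' : (n:ℝ) ≤ m := by exact_mod_cast hnm.le
  set L := Real.log (Real.exp 1 * m / n) with hL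
  have hL1 : 1 ≤ L := by
    rw [hL, Real.le_log_iff_exp_le (by positivity), le_div_iff₀ hn0]
    gcongr
  have hL0 : 0 < L := by linarith
  set s : ℕ := ⌊(n:ℝ) / (320000 * L)⌋₊ with hs
  have hs1 : 1 ≤ s := by
    rw [hs, Nat.one_le_floor_iff, le_div_iff₀ (by positivity)]
    linarith
  have hsle : (s:ℝ) * (320000 * L) ≤ n := by
    rw [← le_div_iff₀ (by positivity)]
    exact Nat.floor_le (by positivity)
  have hsr : (0:ℝ) < s := by exact_mod_cast hs1
  have hsge : (n:ℝ) / (640000 * L) ≤ s := by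
    have h1 : (n:ℝ) / (320000 * L) < s + 1 := Nat.lt_floor_add_one _
    have h2 : (1:ℝ) ≤ s := by exact_mod_cast hs1
    have h3 : (n:ℝ) / (640000 * L) = (n:ℝ) / (320000 * L) / 2 := by field_simp; norm_num
    rw [h3]; linarith
  have hpow : (s:ℝ) ^ (-γ) ≤ (640000:ℝ) ^ γ * (L / n) ^ γ := by
    rw [← Real.mul_rpow (by norm_num) (by positivity)]
    calc (s:ℝ) ^ (-γ) ≤ ((n:ℝ) / (640000 * L)) ^ (-γ) :=
          Real.rpow_le_rpow_of_nonpos (by positivity) hsge (by linarith)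
      _ = (640000 * (L / n)) ^ γ := by
          rw [Real.rpow_neg (by positivity), ← Real.inv_rpow (by positivity)]
          congr 1
          rw [inv_div]; ring
  set G : Set (Fin n → Fin m → ℝ) := {A | radq q (ellipsoid p
    (fun j : Fin m => ((j : ℕ) + 1 : ℝ) ^ (-lam))) (kerSet A) ≤
              10003 ^ (1 / Q) * (640000 : ℝ) ^ γ * (L / n) ^ γ} with hG
  have hbad : (gaussianMatrix n m).real Gᶜ ≤ 2 * Real.exp (-(1 / 2) * n) := by
    have h1 := tail_net (n := n) (intNet m (10000 * (2 * s)))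
    have h2 := card_final m n s hn hnm hsle
    have h3 : ((intNet m (10000 * (2 * s))).card : ℝ) * (2 * Real.exp (-n)) ≤
        2 * Real.exp (-(1 / 2) * n) := by
      calc _ ≤ Real.exp (n / 2) * (2 * Real.exp (-n)) := by gcongr
        _ = 2 * (Real.exp (n / 2) * Real.exp (-n)) := by ring
        _ = 2 * Real.exp (-(1 / 2) * n) := by rw [← Real.exp_add]; congr 2; ring
    refine (measureReal_mono ?_).trans (h1.trans h3)
    intro A hA
    rw [Set.mem_ofPred_eq]
    intro hnet
    apply hA
    rw [hG, Set.mem_ofPred_eq]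
    have hsp := sparse_of_net (k := 2 * s) (by omega) (matF A) (√n) (Real.sqrt_pos.mpr hn0)
      (fun z hz => hnet z (mem_intNet z (by push_cast at hz ⊢; exact hz)))
    apply Real.sSup_le
    · rintro _ ⟨x, ⟨hx, hk⟩, rfl⟩
      have hk0 : matF A x = 0 := by
        rw [← norm_eq_zero, matF_norm]
        have hk' : ∀ i, ∑ j, A i j * x j = 0 := hk
        simp [hk']
      have hx' : (∑ j, |x j / ((j : ℕ) + 1 : ℝ) ^ (-lam)| ^ P) ^ (1 / P) ≤ 1 := by
        have : lpnorm p (fun j => x j / ((j : ℕ) + 1 : ℝ) ^ (-lam)) ≤ 1 := hx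
        rw [lpnorm, if_neg hpt] at this
        exact this
      have hxn : 0 ≤ ∑ j, |x j / ((j : ℕ) + 1 : ℝ) ^ (-lam)| ^ P :=
        Finset.sum_nonneg fun _ _ => by positivity
      have hx1 : ∑ j, |x j / ((j : ℕ) + 1 : ℝ) ^ (-lam)| ^ P ≤ 1 := by
        by_contra hcon
        push Not at hcon
        have := Real.one_lt_rpow hcon (show 0 < 1 / P by positivity)
        linarith
      have hfin := det_final hs1 (matF A) (√n) (Real.sqrt_pos.mpr hn0) P Q lam hP0 hP1 hPQ hQ2
        hlam hsp x hk0 hx1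
      rw [lpnorm, if_neg hqt]
      refine hfin.trans ?_
      rw [mul_assoc]
      exact mul_le_mul_of_nonneg_left hpow (by positivity)
    · positivity
  have htot : 1 ≤ (gaussianMatrix n m).real G + (gaussianMatrix n m).real Gᶜ := by
    have := measureReal_union_le (μ := gaussianMatrix n m) G Gᶜ
    rw [Set.union_compl_self] at this
    simpa using this
  rw [← ofReal_measureReal]
  apply ENNReal.ofReal_le_ofReal
  linarith
end

section
/- Let 1 < p ≤ 2 and let λ satisfy 0 < λ < 1/p*, where p* is the Hölder conjugate of p, and set σ_j = j^{−λ} for j ∈ ℕ. Then for every ε ∈ (0,1) and every n ∈ ℕ there exists m₀ > n such that for all m ≥ m₀, if G_{n,m} is an n×m random matrix with i.i.d. standard Gaussian entries, then Pr[rad(E^m_{p,σ}, ker G_{n,m}) ≥ 1/2] ≥ 1 − ε. -/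
open MeasureTheory ProbabilityTheory
open scoped ENNReal NNReal

instance gm_prob (n m : ℕ) : IsProbabilityMeasure (gaussianMatrix n m) := by
  unfold gaussianMatrix; infer_instance

lemma gm_eval (n m : ℕ) (i : Fin n) (j : Fin m) :
    MeasurePreserving (fun A : Fin n → Fin m → ℝ => A i j) (gaussianMatrix n m)
      (gaussianReal 0 1) := by
  have h1 := measurePreserving_eval
    (fun _ : Fin n => Measure.pi fun _ : Fin m => gaussianReal 0 1) i
  have h2 := measurePreserving_eval (fun _ : Fin m => gaussianReal 0 1) j
  exact h2.comp h1

lemma gm_indep (n m : ℕ) :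
    iIndepFun (fun (p : Fin n × Fin m) (A : Fin n → Fin m → ℝ) => A p.1 p.2)
      (gaussianMatrix n m) := by
  have := iIndepFun_uncurry_infinitePi' (X := fun (_ : Fin n) (_ : Fin m) (x : ℝ) => x)
    (fun _ _ => gaussianReal 0 1) (fun _ _ => measurable_id)
  simpa [gaussianMatrix, Measure.infinitePi_eq_pi] using this

lemma gm_memLp (n m : ℕ) (i : Fin n) (j : Fin m) (q : ℝ≥0) :
    MemLp (fun A : Fin n → Fin m → ℝ => A i j) q (gaussianMatrix n m) :=
  (memLp_id_gaussianReal q).comp_measurePreserving (gm_eval n m i j)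

lemma gm_sq (n m : ℕ) (i : Fin n) (j : Fin m) :
    ∫ A, (A i j) ^ 2 ∂(gaussianMatrix n m) = 1 := by
  have h := variance_id_gaussianReal (μ := 0) (v := 1)
  rw [variance_of_integral_eq_zero aemeasurable_id (by simp)] at h
  have h3 := (gm_eval n m i j).map_eq
  rw [← h3, integral_map (gm_eval n m i j).measurable.aemeasurable (by fun_prop)] at h
  simpa using h

lemma gm_four (n m : ℕ) (i : Fin n) (j : Fin m) :
    ∫ A, (A i j) ^ 4 ∂(gaussianMatrix n m) = ∫ x, x ^ 4 ∂(gaussianReal 0 1) := by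
  have h3 := (gm_eval n m i j).map_eq
  rw [← h3, integral_map (gm_eval n m i j).measurable.aemeasurable (by fun_prop)]

lemma gm_four_int (n m : ℕ) (i : Fin n) (j : Fin m) :
    Integrable (fun A => (A i j) ^ 4) (gaussianMatrix n m) := by
  have := (gm_memLp n m i j 4).integrable_norm_pow (by norm_num)
  simpa [Even.pow_abs (show Even 4 by decide)] using this

lemma gm_prod_memLp (n m : ℕ) (i k : Fin n) (j : Fin m) :
    MemLp (fun A => A i j * A k j) 2 (gaussianMatrix n m) := by
  rw [memLp_two_iff_integrable_sq (by fun_prop)]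
  refine ((gm_four_int n m i j).add (gm_four_int n m k j)).mono' (by fun_prop) (ae_of_all _ ?_)
  intro A
  simp only [Pi.add_apply, Real.norm_eq_abs]
  rw [abs_of_nonneg (by positivity)]
  nlinarith [sq_nonneg ((A i j)^2 - (A k j)^2), sq_nonneg ((A i j)^2), sq_nonneg ((A k j)^2)]

lemma gm_prod_mean (n m : ℕ) (i k : Fin n) (j : Fin m) :
    ∫ A, A i j * A k j ∂(gaussianMatrix n m) = if i = k then 1 else 0 := by
  split_ifs with h
  · subst h
    simpa [sq] using gm_sq n m i j
  · have hi := (gm_indep n m).indepFun (i := (i, j)) (j := (k, j)) (by simp [h])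
    have := hi.integral_fun_mul_eq_mul_integral
      (gm_eval n m i j).measurable.aestronglyMeasurable
      (gm_eval n m k j).measurable.aestronglyMeasurable
    have h0 : ∫ A, A i j ∂(gaussianMatrix n m) = 0 := by
      have h := integral_id_gaussianReal (μ := 0) (v := 1)
      have h3 := (gm_eval n m i j).map_eq
      rwa [← h3, integral_map (gm_eval n m i j).measurable.aemeasurable (by fun_prop)] at h
    simp only at this
    rw [this, h0, zero_mul]

lemma gm_prod_var (n m : ℕ) (i k : Fin n) (j : Fin m) :
    variance (fun A => A i j * A k j) (gaussianMatrix n m) ≤ ∫ x, x ^ 4 ∂(gaussianReal 0 1) := by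
  refine (variance_le_expectation_sq (by fun_prop)).trans ?_
  have : ∫ x, x ^ 4 ∂(gaussianReal 0 1)
      = ∫ A, ((A i j) ^ 4 + (A k j) ^ 4) / 2 ∂(gaussianMatrix n m) := by
    rw [integral_div, integral_add (gm_four_int n m i j) (gm_four_int n m k j), gm_four, gm_four]
    ring
  rw [this]
  refine integral_mono (gm_prod_memLp n m i k j).integrable_sq
    (((gm_four_int n m i j).add (gm_four_int n m k j)).div_const 2) ?_
  intro A
  simp only [Pi.pow_apply]
  nlinarith [sq_nonneg ((A i j)^2 - (A k j)^2)]

lemma gm_sum (n m : ℕ) (i k : Fin n) :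
    Integrable (fun A => (∑ j, A i j * A k j - if i = k then (m : ℝ) else 0) ^ 2)
      (gaussianMatrix n m) ∧
    ∫ A, (∑ j, A i j * A k j - if i = k then (m : ℝ) else 0) ^ 2 ∂(gaussianMatrix n m)
      ≤ m * ∫ x, x ^ 4 ∂(gaussianReal 0 1) := by
  have hL : MemLp (fun A : Fin n → Fin m → ℝ => ∑ j, A i j * A k j) 2 (gaussianMatrix n m) :=
    memLp_finsetSum _ fun j _ => gm_prod_memLp n m i k j
  have hm : ∫ A, ∑ j, A i j * A k j ∂(gaussianMatrix n m) = if i = k then (m : ℝ) else 0 := by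
    rw [integral_finsetSum _ fun j _ => (gm_prod_memLp n m i k j).integrable (by norm_num)]
    simp only [gm_prod_mean]
    split_ifs <;> simp
  refine ⟨(hL.sub (memLp_const _)).integrable_sq, ?_⟩
  have hv := variance_eq_integral (μ := gaussianMatrix n m) hL.aemeasurable
  rw [hm] at hv
  rw [← hv]
  have := IndepFun.variance_sum (μ := gaussianMatrix n m) (s := Finset.univ)
    (X := fun (j : Fin m) A => A i j * A k j)
    (fun j _ => gm_prod_memLp n m i k j) (by
      intro j _ j' _ hjj
      exact (gm_indep n m).indepFun_mul_mul (fun p => by fun_prop) (i, j) (k, j) (i, j') (k, j')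
        (by simp [hjj]) (by simp [hjj]) (by simp [hjj]) (by simp [hjj]))
  have e : (fun A : Fin n → Fin m → ℝ => ∑ j, A i j * A k j)
      = ∑ j : Fin m, fun A : Fin n → Fin m → ℝ => A i j * A k j := by
    ext A; simp
  rw [e, this]
  refine (Finset.sum_le_sum fun j _ => gm_prod_var n m i k j).trans ?_
  simp

lemma det_sol (n m : ℕ) (hm : 0 < m) (A : Fin n → Fin m → ℝ)
    (hF : ∑ i, ∑ k, (∑ j, A i j * A k j - if i = k then (m : ℝ) else 0) ^ 2 ≤ (m : ℝ) ^ 2 / 4)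
    (j0 : Fin m) (T : ℝ) (hT : ∑ i, (A i j0) ^ 2 ≤ T) :
    ∃ y : Fin m → ℝ, (∀ i, ∑ j, A i j * y j = A i j0) ∧ ∑ j, (y j) ^ 2 ≤ 2 * T / m := by
  have hm' : (0 : ℝ) < m := by exact_mod_cast hm
  set M : Matrix (Fin n) (Fin n) ℝ := fun i k => ∑ j, A i j * A k j with hM
  have hy (c : Fin n → ℝ) (i : Fin n) : ∑ j, A i j * (∑ k, A k j * c k) = M.mulVec c i := by
    simp only [Matrix.mulVec, dotProduct, hM, Finset.mul_sum, Finset.sum_mul]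
    rw [Finset.sum_comm]
    exact Finset.sum_congr rfl fun _ _ => Finset.sum_congr rfl fun _ _ => by ring
  have hq (c : Fin n → ℝ) : ∑ j, (∑ k, A k j * c k) ^ 2 = ∑ i, c i * M.mulVec c i := by
    simp only [← hy, Finset.mul_sum]
    rw [Finset.sum_comm]
    refine Finset.sum_congr rfl fun j _ => ?_
    rw [sq, Finset.sum_mul]
    refine Finset.sum_congr rfl fun i _ => ?_
    rw [Finset.mul_sum]
    exact Finset.sum_congr rfl fun _ _ => by ring
  have hco (c : Fin n → ℝ) : (m : ℝ) / 2 * ∑ i, c i ^ 2 ≤ ∑ i, c i * M.mulVec c i := by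
    set N : Fin n → Fin n → ℝ := fun i k => M i k - if i = k then (m : ℝ) else 0 with hN
    have h1 : ∑ i, c i * M.mulVec c i = m * ∑ i, c i ^ 2 + ∑ i, c i * ∑ k, N i k * c k := by
      rw [Finset.mul_sum, ← Finset.sum_add_distrib]
      refine Finset.sum_congr rfl fun i _ => ?_
      simp [hN, sub_mul, Finset.sum_sub_distrib, Matrix.mulVec, dotProduct]
      ring
    have h2 : (∑ i, c i * ∑ k, N i k * c k) ^ 2 ≤ ((m : ℝ) / 2 * ∑ i, c i ^ 2) ^ 2 := by
      have hS : 0 ≤ ∑ i, c i ^ 2 := Finset.sum_nonneg fun _ _ => sq_nonneg _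
      calc _ ≤ (∑ i, c i ^ 2) * ∑ i, (∑ k, N i k * c k) ^ 2 :=
            Finset.sum_mul_sq_le_sq_mul_sq _ _ _
        _ ≤ (∑ i, c i ^ 2) * ∑ i, ((∑ k, N i k ^ 2) * ∑ k, c k ^ 2) := by
            gcongr with i
            exact Finset.sum_mul_sq_le_sq_mul_sq _ _ _
        _ = (∑ i, c i ^ 2) ^ 2 * ∑ i, ∑ k, N i k ^ 2 := by rw [← Finset.sum_mul]; ring
        _ ≤ (∑ i, c i ^ 2) ^ 2 * ((m : ℝ) ^ 2 / 4) := by gcongr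
        _ = _ := by ring
    have h3 := abs_le_of_sq_le_sq' h2 (by positivity)
    rw [h1]; linarith [h3.1]
  have hinj : Function.Injective M.mulVec := by
    have : Function.Injective (Matrix.mulVecLin M) := by
      rw [injective_iff_map_eq_zero]
      intro c hc
      have h := hco c
      rw [Matrix.mulVecLin_apply] at hc
      rw [hc] at h
      simp only [Pi.zero_apply, mul_zero, Finset.sum_const_zero] at h
      have h0 : ∑ i, c i ^ 2 = 0 := le_antisymm
        (by by_contra hh; push Not at hh; have := mul_pos (half_pos hm') hh; linarith)
        (Finset.sum_nonneg fun _ _ => sq_nonneg _)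
      rw [Finset.sum_eq_zero_iff_of_nonneg fun _ _ => sq_nonneg _] at h0
      ext i; simpa using h0 i (Finset.mem_univ _)
    exact this
  obtain ⟨c, hc⟩ := Matrix.mulVec_surjective_iff_isUnit.2
    (Matrix.mulVec_injective_iff_isUnit.1 hinj) (fun i => A i j0)
  refine ⟨fun j => ∑ k, A k j * c k, fun i => by rw [hy, hc], ?_⟩
  rw [hq, hc]
  have h1 := hco c
  rw [hc] at h1
  simp only at h1 ⊢
  have h2 : ∑ i, c i * A i j0 ≤ (m:ℝ) / 4 * ∑ i, c i ^ 2 + 1 / m * ∑ i, A i j0 ^ 2 := by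
    rw [Finset.mul_sum, Finset.mul_sum, ← Finset.sum_add_distrib]
    refine Finset.sum_le_sum fun i _ => ?_
    have : (m:ℝ) / 4 * c i ^ 2 + 1 / m * A i j0 ^ 2 - c i * A i j0
      = 1 / m * (m / 2 * c i - A i j0) ^ 2 := by field_simp; ring
    have h5 : 0 ≤ 1 / m * (m / 2 * c i - A i j0) ^ 2 := by positivity
    linarith
  have h4 : 1 / m * ∑ i, A i j0 ^ 2 ≤ 1 / m * T := by gcongr
  have h5 : 2 * T / m = 2 * (1 / m * T) := by ring
  rw [h5]; linarith

lemma rad_ge (p : ℝ≥0∞) (hp1 : 1 < p) (hp2 : p ≤ 2) (lam : ℝ) (hlam0 : 0 < lam)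
    (n m : ℕ) (hm : 0 < m) (A : Fin n → Fin m → ℝ) (y : Fin m → ℝ)
    (hy : ∀ i, ∑ j, A i j * y j = A i ⟨0, hm⟩) (D : ℝ) (hD : ∑ j, (y j) ^ 2 ≤ D)
    (hs : (m : ℝ) ^ (2 * lam + 2 / p.toReal - 1) * D ≤ 1 / 9) :
    1 / 2 ≤ radq 2 (ellipsoid p (fun j : Fin m => ((j : ℕ) + 1 : ℝ) ^ (-lam))) (kerSet A) := by
  have hptop : p ≠ ∞ := (hp2.trans_lt (by norm_num)).ne
  set q := p.toReal with hq
  have hq1 : 1 < q := by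
    have := (ENNReal.toReal_lt_toReal (by norm_num) hptop).2 hp1
    simpa using this
  have hq2 : q ≤ 2 := by
    have := (ENNReal.toReal_le_toReal hptop (by norm_num)).2 hp2
    simpa using this
  have hq0 : 0 < q := by linarith
  have hm1 : (1 : ℝ) ≤ m := by exact_mod_cast hm
  set j0 : Fin m := ⟨0, hm⟩ with hj0
  set w : Fin m → ℝ := fun j => ((j : ℕ) + 1 : ℝ) ^ lam with hw
  have hw1 (j) : 1 ≤ w j := Real.one_le_rpow (by simp) hlam0.le
  have hwm (j) : w j ≤ (m : ℝ) ^ lam := by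
    refine Real.rpow_le_rpow (by positivity) ?_ hlam0.le
    exact_mod_cast j.2
  have hw0 : w j0 = 1 := by simp [hw, hj0]
  have hdiv (x : Fin m → ℝ) : (fun j : Fin m => x j / ((j : ℕ) + 1 : ℝ) ^ (-lam))
      = fun j => x j * w j := by
    ext j
    rw [Real.rpow_neg (by positivity), div_inv_eq_mul]
  have hmem (x : Fin m → ℝ) : x ∈ ellipsoid p (fun j : Fin m => ((j : ℕ) + 1 : ℝ) ^ (-lam)) ↔
      (∑ j, |x j * w j| ^ q) ^ (1 / q) ≤ 1 := by
    change lpnorm p (fun j : Fin m => x j / ((j : ℕ) + 1 : ℝ) ^ (-lam)) ≤ 1 ↔ _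
    rw [hdiv]
    simp only [lpnorm, if_neg hptop, ← hq]
  have hl2 (x : Fin m → ℝ) : lpnorm 2 x = (∑ j, |x j| ^ (2:ℝ)) ^ (1 / (2:ℝ)) := by
    simp [lpnorm]
  have hbdd : BddAbove (lpnorm 2 ''
      (ellipsoid p (fun j : Fin m => ((j : ℕ) + 1 : ℝ) ^ (-lam)) ∩ kerSet A)) := by
    refine ⟨(∑ j : Fin m, (1:ℝ) ^ (2:ℝ)) ^ (1 / (2:ℝ)), ?_⟩
    rintro _ ⟨x, ⟨hx, -⟩, rfl⟩
    rw [hmem] at hx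
    rw [hl2]
    have hS : ∑ j, |x j * w j| ^ q ≤ 1 := by
      by_contra hh
      push Not at hh
      exact absurd (Real.one_lt_rpow hh (by positivity : 0 < 1 / q)) (not_lt.2 hx)
    gcongr with j
    have h1 : |x j * w j| ^ q ≤ 1 := (Finset.single_le_sum
      (f := fun j => |x j * w j| ^ q) (fun _ _ => by positivity) (Finset.mem_univ j)).trans hS
    have h2 : |x j * w j| ≤ 1 := by
      by_contra hh
      push Not at hh
      exact absurd (Real.one_lt_rpow hh hq0) (not_lt.2 h1)
    rw [abs_mul, abs_of_nonneg (zero_le_one.trans (hw1 j))] at h2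
    exact (le_mul_of_one_le_right (abs_nonneg _) (hw1 j)).trans h2
  -- weighted norm of y
  have hDn : 0 ≤ D := (Finset.sum_nonneg fun _ _ => sq_nonneg _).trans hD
  have hyw : (∑ j, |y j * w j| ^ q) ^ (1 / q) ≤ 1 / 3 := by
    have hS0 : 0 ≤ ∑ j, |y j * w j| ^ q := Finset.sum_nonneg fun _ _ => by positivity
    have h1 : (∑ j, |y j * w j| ^ q) ^ (2 / q) ≤ 1 / 9 := by
      have h2 := Real.rpow_sum_le_const_mul_sum_rpow (Finset.univ : Finset (Fin m))
        (fun j => |y j * w j| ^ q) (p := 2 / q) (by rw [le_div_iff₀ hq0]; linarith)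
      have e1 (j) : |(|y j * w j| ^ q)| = |y j * w j| ^ q := abs_of_nonneg (by positivity)
      have e2 (j) : (|y j * w j| ^ q) ^ (2 / q) = (y j * w j) ^ 2 := by
        rw [← Real.rpow_mul (abs_nonneg _), mul_div_cancel₀ _ hq0.ne', Real.rpow_two, sq_abs]
      simp only [e1, e2] at h2
      refine h2.trans (le_trans ?_ hs)
      have h3 : ∑ j, (y j * w j) ^ 2 ≤ (m : ℝ) ^ (2 * lam) * D := by
        calc _ ≤ ∑ j, (m : ℝ) ^ (2 * lam) * y j ^ 2 := by
              refine Finset.sum_le_sum fun j _ => ?_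
              have : w j ^ 2 ≤ (m : ℝ) ^ (2 * lam) := by
                rw [mul_comm, Real.rpow_mul (by positivity)]
                have := pow_le_pow_left₀ (zero_le_one.trans (hw1 j)) (hwm j) 2
                simpa using this
              rw [mul_pow, mul_comm]
              gcongr
          _ = (m : ℝ) ^ (2 * lam) * ∑ j, y j ^ 2 := by rw [Finset.mul_sum]
          _ ≤ _ := by gcongr
      calc _ ≤ (m:ℝ) ^ (2 / q - 1) * ((m : ℝ) ^ (2 * lam) * D) := by
            simp only [Finset.card_univ, Fintype.card_fin]
            gcongr
        _ = _ := by
            rw [← mul_assoc, ← Real.rpow_add (by positivity)]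
            ring_nf
    have h4 : ((∑ j, |y j * w j| ^ q) ^ (1 / q)) ^ 2 ≤ (1 / 3) ^ 2 := by
      rw [← Real.rpow_natCast, ← Real.rpow_mul hS0]
      convert h1 using 1
      · congr 1; push_cast; ring
      · norm_num
    exact abs_le_of_sq_le_sq h4 (by norm_num) |>.trans' (le_abs_self _)
  have hy0 : |y j0| ≤ 1 / 3 := by
    have hD9 : D ≤ 1 / 9 := by
      have : (1:ℝ) ≤ (m : ℝ) ^ (2 * lam + 2 / q - 1) := by
        refine Real.one_le_rpow hm1 ?_
        have : 1 ≤ 2 / q := by rw [le_div_iff₀ hq0]; linarith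
        linarith
      nlinarith
    have h1 : y j0 ^ 2 ≤ D := (Finset.single_le_sum (f := fun j => y j ^ 2)
      (fun _ _ => sq_nonneg _) (Finset.mem_univ j0)).trans hD
    exact abs_le_of_sq_le_sq (by norm_num; linarith) (by norm_num)
  -- the vector
  set z : Fin m → ℝ := fun j => (if j = j0 then 1 else 0) + -y j with hz
  have hzw : (∑ j, |z j * w j| ^ q) ^ (1 / q) ≤ 4 / 3 := by
    have h := Real.Lp_add_le Finset.univ (fun j => if j = j0 then w j else 0)
      (fun j => - (y j * w j)) hq1.le
    have e1 : (∑ j, |if j = j0 then w j else 0| ^ q) ^ (1 / q) = 1 := by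
      have : ∀ j, |if j = j0 then w j else 0| ^ q = if j = j0 then 1 else 0 := by
        intro j
        split_ifs with h
        · rw [h, hw0]; simp
        · simp [hq0.ne']
      simp [this]
    rw [e1] at h
    simp only [abs_neg] at h
    have e2 : ∀ j, z j * w j = (if j = j0 then w j else 0) + -(y j * w j) := by
      intro j; simp only [hz]; split_ifs <;> ring
    simp only [e2]
    linarith
  have hx : (fun j => 3 / 4 * z j) ∈
      ellipsoid p (fun j : Fin m => ((j : ℕ) + 1 : ℝ) ^ (-lam)) ∩ kerSet A := by
    constructor
    · rw [hmem]
      have : ∀ j, |3 / 4 * z j * w j| ^ q = (3 / 4 : ℝ) ^ q * |z j * w j| ^ q := by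
        intro j
        rw [mul_assoc, abs_mul, Real.mul_rpow (by positivity) (by positivity)]
        norm_num
      simp only [this]
      rw [← Finset.mul_sum, Real.mul_rpow (by positivity)
        (Finset.sum_nonneg fun _ _ => by positivity), ← Real.rpow_mul (by norm_num),
        mul_one_div_cancel hq0.ne', Real.rpow_one]
      linarith
    · intro i
      have : ∑ j, A i j * (3 / 4 * z j) = 3 / 4 * (A i j0 - ∑ j, A i j * y j) := by
        have e : A i j0 = ∑ j, A i j * (if j = j0 then 1 else 0) := by simp
        conv_rhs => rw [e]
        rw [← Finset.sum_sub_distrib, Finset.mul_sum]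
        refine Finset.sum_congr rfl fun j _ => ?_
        simp only [hz]; ring
      simp only [this, hy i, sub_self, mul_zero]
  refine le_trans ?_ (le_csSup hbdd ⟨_, hx, rfl⟩)
  rw [hl2]
  have hz0 : 1 / 2 ≤ |3 / 4 * z j0| := by
    refine le_trans ?_ (le_abs_self _)
    simp only [hz, if_true]
    linarith [(abs_le.1 hy0).2]
  calc (1 / 2 : ℝ) ≤ |3 / 4 * z j0| := hz0
    _ = (|3 / 4 * z j0| ^ (2:ℝ)) ^ (1 / (2:ℝ)) := by
      rw [← Real.rpow_mul (abs_nonneg _)]; norm_num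
    _ ≤ _ := by
      gcongr
      exact Finset.single_le_sum (f := fun j => |3 / 4 * z j| ^ (2:ℝ))
        (fun _ _ => by positivity) (Finset.mem_univ j0)

/-- For `1 < p ≤ 2` and `0 < λ < 1/p*` (note `1/p* = 1 - 1/p`), and
`σ_j = j^{-λ}` (0-indexed), for every `ε ∈ (0,1)` and every `n` there is `m₀ > n` such that
for all `m ≥ m₀`, with probability at least `1 - ε` the circumradius of a random section of
codimension `n` is at least `1/2`. -/
theorem statement4 (p : ℝ≥0∞) (hp1 : 1 < p) (hp2 : p ≤ 2) (lam : ℝ)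
    (hlam0 : 0 < lam) (hlam : lam < 1 - 1 / p.toReal) :
    ∀ ε : ℝ, 0 < ε → ε < 1 → ∀ n : ℕ, 1 ≤ n →
      ∃ m₀ : ℕ, n < m₀ ∧ ∀ m : ℕ, m₀ ≤ m →
        ENNReal.ofReal (1 - ε) ≤
          gaussianMatrix n m {A |
            1 / 2 ≤ radq 2 (ellipsoid p (fun j : Fin m => ((j : ℕ) + 1 : ℝ) ^ (-lam)))
              (kerSet A)} := by
  intro ε hε _ n hn
  have hn0 : (0:ℝ) < n := by exact_mod_cast hn
  set K : ℝ := ∫ x, x ^ 4 ∂(gaussianReal 0 1) with hK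
  set T : ℝ := 2 * n / ε with hT
  have hT0 : 0 < T := by positivity
  have hlim : Filter.Tendsto (fun m : ℕ => 2 * T * (m:ℝ) ^ (-(2 - 2 * lam - 2 / p.toReal)))
      Filter.atTop (nhds 0) := by
    have : 0 < 2 - 2 * lam - 2 / p.toReal := by
      have : 2 / p.toReal = 2 * (1 / p.toReal) := by ring
      linarith
    simpa using ((tendsto_rpow_neg_atTop this).comp tendsto_natCast_atTop_atTop).const_mul (2 * T)
  have hlim2 : Filter.Tendsto (fun m : ℕ => (4 * n ^ 2 * K) / (m:ℝ)) Filter.atTop (nhds 0) :=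
    tendsto_const_nhds.div_atTop tendsto_natCast_atTop_atTop
  have hev := (hlim.eventually_lt_const (show (0:ℝ) < 1 / 9 by norm_num)).and
    (hlim2.eventually_lt_const (half_pos hε))
  obtain ⟨m₁, hm₁⟩ := Filter.eventually_atTop.1 hev
  refine ⟨max m₁ (n + 1), by omega, fun m hm => ?_⟩
  obtain ⟨h1, h2⟩ := hm₁ m (by omega)
  have hm0 : 0 < m := by omega
  have hm' : (0:ℝ) < m := by exact_mod_cast hm0
  set μ := gaussianMatrix n m with hμ
  set F : (Fin n → Fin m → ℝ) → ℝ := fun A =>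
    ∑ i, ∑ k, (∑ j, A i j * A k j - if i = k then (m : ℝ) else 0) ^ 2 with hF
  set H : (Fin n → Fin m → ℝ) → ℝ := fun A => ∑ i, (A i ⟨0, hm0⟩) ^ 2 with hH
  have hFm : Measurable F := by fun_prop
  have hHm : Measurable H := by fun_prop
  have hFi : Integrable F μ := integrable_finsetSum _ fun i _ => integrable_finsetSum _ fun k _ =>
    (gm_sum n m i k).1
  have hHi' (i : Fin n) : Integrable (fun A => (A i ⟨0, hm0⟩) ^ 2) μ :=
    (gm_memLp n m i ⟨0, hm0⟩ 2).integrable_sq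
  have hHi : Integrable H μ := integrable_finsetSum _ fun i _ => hHi' i
  have hFE : ∫ A, F A ∂μ ≤ n ^ 2 * (m * K) := by
    rw [integral_finsetSum _ fun i _ => integrable_finsetSum _ fun k _ => (gm_sum n m i k).1]
    calc _ ≤ ∑ i : Fin n, ∑ k : Fin n, (m * K) := by
          refine Finset.sum_le_sum fun i _ => ?_
          rw [integral_finsetSum _ fun k _ => (gm_sum n m i k).1]
          exact Finset.sum_le_sum fun k _ => (gm_sum n m i k).2
      _ = _ := by simp; ring
  have hHE : ∫ A, H A ∂μ = n := by
    rw [integral_finsetSum _ fun i _ => hHi' i]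
    simp [hμ, gm_sq]
  have hMF := mul_meas_ge_le_integral_of_nonneg (μ := μ) (f := F)
    (ae_of_all _ fun A => by simp only [hF, Pi.zero_apply]; positivity) hFi ((m:ℝ) ^ 2 / 4)
  have hMH := mul_meas_ge_le_integral_of_nonneg (μ := μ) (f := H)
    (ae_of_all _ fun A => by simp only [hH, Pi.zero_apply]; positivity) hHi T
  have hbF : μ.real {A | (m:ℝ) ^ 2 / 4 ≤ F A} ≤ ε / 2 := by
    have h3 : μ.real {A | (m:ℝ) ^ 2 / 4 ≤ F A} ≤ (4 * n ^ 2 * K) / m := by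
      rw [le_div_iff₀ hm']
      have := hMF.trans hFE
      have h5 : m * (μ.real {A | (m:ℝ) ^ 2 / 4 ≤ F A} * m) ≤ m * (4 * n ^ 2 * K) := by nlinarith
      exact le_of_mul_le_mul_left h5 hm'
    linarith
  have hbH : μ.real {A | T ≤ H A} ≤ ε / 2 := by
    rw [hHE] at hMH
    have : T * (ε / 2) = n := by rw [hT]; field_simp
    rw [← this] at hMH
    exact le_of_mul_le_mul_left hMH hT0
  set B : Set (Fin n → Fin m → ℝ) := {A | (m:ℝ) ^ 2 / 4 ≤ F A} ∪ {A | T ≤ H A} with hB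
  have hBm : MeasurableSet B :=
    (measurableSet_le measurable_const hFm).union (measurableSet_le measurable_const hHm)
  have hBr : μ.real B ≤ ε := (measureReal_union_le _ _).trans (by linarith)
  have hBc : 1 - ε ≤ μ.real Bᶜ := by rw [probReal_compl_eq_one_sub hBm]; linarith
  calc ENNReal.ofReal (1 - ε) ≤ ENNReal.ofReal (μ.real Bᶜ) := ENNReal.ofReal_le_ofReal hBc
    _ = μ Bᶜ := ofReal_measureReal
    _ ≤ _ := by
      refine measure_mono fun A hA => ?_
      simp only [hB, Set.mem_compl_iff, Set.mem_union, Set.mem_ofPred_eq, not_or, not_le] at hA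
      obtain ⟨y, hy1, hy2⟩ := det_sol n m hm0 A hA.1.le ⟨0, hm0⟩ T hA.2.le
      refine rad_ge p hp1 hp2 lam hlam0 n m hm0 A y hy1 (2 * T / m) hy2 ?_
      refine le_trans (le_of_eq ?_) h1.le
      have : (m:ℝ) ^ (-(2 - 2 * lam - 2 / p.toReal))
          = (m:ℝ) ^ (2 * lam + 2 / p.toReal - 1) / m := by
        rw [← Real.rpow_sub_one hm'.ne']
        congr 1; ring
      rw [this]; ring
end

section
/- Let 1 < p ≤ 2 with Hölder conjugate p*. Then for every ε ∈ (0,1), every m ∈ ℕ, every 1 ≤ n < m with n ≤ ε·σ_m²·m^{2/p*}, and all semiaxes σ₁ ≥ σ₂ ≥ … ≥ σ_m > 0, if G_{n,m} is an n×m random matrix with i.i.d. standard Gaussian entries, then Pr[rad(E^m_{p,σ}, ker G_{n,m}) ≥ σ₁/(1 + σ₁)] ≥ 1 − ε. -/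
open MeasureTheory ProbabilityTheory
open scoped ENNReal NNReal

noncomputable def Dq {n m : ℕ} (j : Fin m) (A : Fin n → Fin m → ℝ) : ℝ :=
  ⨅ v : Fin n → ℝ, ∑ k, ((if k = j then 1 else 0) - ∑ i, v i * A i k) ^ 2

lemma key_proj {n m : ℕ} (A : Fin n → Fin m → ℝ) :
    ∃ X : Fin m → Fin m → ℝ, (∀ j, X j ∈ kerSet A) ∧ (∀ j, ∑ k, X j k ^ 2 = X j j) ∧
      (∀ j, X j j = Dq j A) ∧ (m : ℝ) - n ≤ ∑ j, X j j := by
  classical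
  let L : (Fin n → ℝ) →ₗ[ℝ] EuclideanSpace ℝ (Fin m) :=
    { toFun := fun v => WithLp.toLp 2 (fun k => ∑ i, v i * A i k)
      map_add' := by
        intro a b; ext k; simp [add_mul, Finset.sum_add_distrib]
      map_smul' := by
        intro a b; ext k; simp [Finset.mul_sum, mul_assoc] }
  have hL : ∀ v k, L v k = ∑ i, v i * A i k := fun v k => rfl
  let K := LinearMap.range L
  let e : Fin m → EuclideanSpace ℝ (Fin m) := fun j => EuclideanSpace.basisFun (Fin m) ℝ j
  have he : ∀ j k, e j k = if k = j then 1 else 0 := by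
    intro j k; simp [e]
  let X : Fin m → EuclideanSpace ℝ (Fin m) := fun j => e j - K.starProjection (e j)
  have horth : ∀ j v, ∑ k, X j k * L v k = 0 := by
    intro j v
    have := K.starProjection_inner_eq_zero (e j) (L v) ⟨v, rfl⟩
    rw [PiLp.inner_apply] at this
    simpa [mul_comm, X] using this
  have hPv : ∀ j, ∃ v, L v = K.starProjection (e j) := fun j => K.starProjection_apply_mem (e j)
  have hsq : ∀ j, ∑ k, X j k ^ 2 = X j j := by
    intro j
    obtain ⟨v, hv⟩ := hPv j
    have h1 : ∀ k, X j k ^ 2 = X j k * e j k - X j k * L v k := by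
      intro k
      have : X j k = e j k - L v k := by simp [X, hv]
      rw [pow_two]; nth_rw 2 [this]; ring
    rw [Finset.sum_congr rfl (fun k _ => h1 k), Finset.sum_sub_distrib, horth, sub_zero]
    simp [he]
  have hval : ∀ j, X j j = 1 - inner ℝ (e j) (K.starProjection (e j)) := by
    intro j
    rw [PiLp.inner_apply]
    simp [X, he]
  have htr : ∑ j, inner ℝ (e j) (K.starProjection (e j)) ≤ (n : ℝ) := by
    have h1 := LinearMap.trace_eq_sum_inner (K.starProjection : EuclideanSpace ℝ (Fin m) →ₗ[ℝ] _)
      (EuclideanSpace.basisFun (Fin m) ℝ)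
    have hp : LinearMap.IsProj K (K.starProjection : EuclideanSpace ℝ (Fin m) →ₗ[ℝ] _) :=
      ⟨fun x => K.starProjection_apply_mem x, fun x hx => K.starProjection_eq_self_iff.2 hx⟩
    have h2 := hp.trace
    have h3 : Module.finrank ℝ K ≤ n := by
      simpa using LinearMap.finrank_range_le L
    rw [h2] at h1
    have h4 : ((Module.finrank ℝ K : ℕ) : ℝ) ≤ n := by exact_mod_cast h3
    rw [h1] at h4
    exact h4
  refine ⟨fun j k => X j k, ?_, hsq, ?_, ?_⟩
  · intro j i
    have := horth j (Pi.single i 1)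
    simp only [hL] at this
    simpa [Pi.single_apply, mul_comm] using this
  · intro j
    obtain ⟨v, hv⟩ := hPv j
    have hXv : ∀ k, X j k = e j k - L v k := by intro k; simp [X, hv]
    apply le_antisymm
    · apply le_ciInf
      intro w
      change X j j ≤ _
      rw [← hsq]
      have h1 : ∀ k, ((if k = j then (1:ℝ) else 0) - ∑ i, w i * A i k) ^ 2
          = X j k ^ 2 + (L (v - w) k)^2 + 2 * (X j k * L (v - w) k) := by
        intro k
        rw [← he, ← hL, hXv, map_sub]
        simp only [PiLp.sub_apply]
        ring
      rw [Finset.sum_congr rfl (fun k _ => h1 k), Finset.sum_add_distrib, Finset.sum_add_distrib,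
        ← Finset.mul_sum, horth]
      have : 0 ≤ ∑ k, (L (v - w) k)^2 := Finset.sum_nonneg fun _ _ => sq_nonneg _
      linarith
    · refine (ciInf_le ⟨0, ?_⟩ v).trans ?_
      · rintro _ ⟨w, rfl⟩
        exact Finset.sum_nonneg fun _ _ => sq_nonneg _
      · change _ ≤ X j j
        rw [← hsq]
        apply le_of_eq
        apply Finset.sum_congr rfl
        intro k _
        rw [hXv, he, hL]
  · simp only [hval, Finset.sum_sub_distrib]
    simp only [Finset.sum_const, Finset.card_univ, Fintype.card_fin, nsmul_eq_mul, mul_one]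
    linarith

lemma Dq_meas {n m : ℕ} (j : Fin m) : Measurable (Dq (n := n) j) := by
  apply UpperSemicontinuous.measurable
  apply upperSemicontinuous_ciInf
  · intro A
    refine ⟨0, ?_⟩
    rintro _ ⟨w, rfl⟩
    exact Finset.sum_nonneg fun _ _ => sq_nonneg _
  · intro v
    apply Continuous.upperSemicontinuous
    fun_prop

lemma Dq_nonneg {n m : ℕ} (j : Fin m) (A : Fin n → Fin m → ℝ) : 0 ≤ Dq j A :=
  le_ciInf fun _ => Finset.sum_nonneg fun _ _ => sq_nonneg _

lemma Dq_le_one {n m : ℕ} (j : Fin m) (A : Fin n → Fin m → ℝ) : Dq j A ≤ 1 := by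
  refine (ciInf_le ⟨0, ?_⟩ 0).trans ?_
  · rintro _ ⟨w, rfl⟩
    exact Finset.sum_nonneg fun _ _ => sq_nonneg _
  · simp

lemma Dq_perm {n m : ℕ} (j : Fin m) (π : Equiv.Perm (Fin m)) (A : Fin n → Fin m → ℝ) :
    Dq j (fun i k => A i (π k)) = Dq (π j) A := by
  unfold Dq
  congr 1
  ext v
  rw [← Equiv.sum_comp π (fun k => ((if k = π j then (1:ℝ) else 0) - ∑ i, v i * A i k) ^ 2)]
  simp

lemma perm_mp (n m : ℕ) (π : Equiv.Perm (Fin m)) :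
    MeasurePreserving (fun (A : Fin n → Fin m → ℝ) i k => A i (π k))
      (gaussianMatrix n m) (gaussianMatrix n m) := by
  unfold gaussianMatrix
  refine measurePreserving_pi (f := fun _ (x : Fin m → ℝ) k => x (π k)) _ _ fun i => ?_
  have := measurePreserving_arrowCongr' (fun _ : Fin m => gaussianReal 0 1)
    (fun _ : Fin m => gaussianReal 0 1) π.symm (MeasurableEquiv.refl ℝ)
    (fun i => MeasurePreserving.id _)
  exact this

lemma Dq_int {n m : ℕ} (j : Fin m) : Integrable (Dq (n := n) j) (gaussianMatrix n m) := by
  refine Integrable.of_bound (Dq_meas j).aestronglyMeasurable 1 (Filter.Eventually.of_forall ?_)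
  intro A
  rw [Real.norm_of_nonneg (Dq_nonneg j A)]
  exact Dq_le_one j A

lemma Dq_integral {n m : ℕ} (j : Fin m) :
    (m : ℝ) - n ≤ m * ∫ A, Dq (n := n) j A ∂(gaussianMatrix n m) := by
  have h1 : ∀ k, ∫ A, Dq (n := n) k A ∂(gaussianMatrix n m)
      = ∫ A, Dq (n := n) j A ∂(gaussianMatrix n m) := by
    intro k
    have hm := perm_mp n m (Equiv.swap j k)
    have := integral_map (μ := gaussianMatrix n m) hm.measurable.aemeasurable
      (f := Dq (n := n) j) (Dq_meas j).aestronglyMeasurable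
    rw [hm.map_eq] at this
    rw [this]
    simp only [Dq_perm, Equiv.swap_apply_left]
  have h2 : ∑ k, ∫ A, Dq (n := n) k A ∂(gaussianMatrix n m)
      = m * ∫ A, Dq (n := n) j A ∂(gaussianMatrix n m) := by
    rw [Finset.sum_congr rfl fun k _ => h1 k]; simp
  rw [← h2, ← integral_finsetSum _ fun k _ => Dq_int k]
  have h3 : (m : ℝ) - n = ∫ A : Fin n → Fin m → ℝ, ((m : ℝ) - n) ∂(gaussianMatrix n m) := by simp
  rw [h3]
  refine integral_mono (integrable_const _) (integrable_finsetSum _ fun k _ => Dq_int k) ?_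
  intro A
  obtain ⟨X, -, -, hX, h⟩ := key_proj A
  simp only [hX] at h
  exact h

lemma lpnorm_two {m : ℕ} (x : Fin m → ℝ) : lpnorm 2 x = √(∑ k, x k ^ 2) := by
  have h : (2 : ℝ≥0∞) ≠ ∞ := by simp
  simp [lpnorm, Real.sqrt_eq_rpow, h]

lemma lp_bound0 {m : ℕ} {r : ℝ} (hr1 : 1 < r) (hr2 : r ≤ 2) (z : Fin m → ℝ) (hz : ∀ k, 0 ≤ z k) :
    (∑ k, z k ^ r) ^ (1 / r) ≤ (m : ℝ) ^ (1 / r - 1 / 2) * √(∑ k, z k ^ 2) := by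
  have hr0 : 0 < r := by linarith
  have h := Real.rpow_sum_le_const_mul_sum_rpow_of_nonneg (Finset.univ : Finset (Fin m))
    (f := fun k => z k ^ r) (p := 2 / r) (by rw [le_div_iff₀ hr0]; linarith)
    (fun k _ => Real.rpow_nonneg (hz k) _)
  have h1 : ∀ k, (z k ^ r) ^ (2 / r) = z k ^ 2 := by
    intro k
    rw [← Real.rpow_mul (hz k), mul_div_cancel₀ _ hr0.ne']; norm_num
  simp only [h1, Finset.card_univ, Fintype.card_fin] at h
  have hS : 0 ≤ ∑ k, z k ^ r := Finset.sum_nonneg fun k _ => Real.rpow_nonneg (hz k) _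
  have h2 := Real.rpow_le_rpow (Real.rpow_nonneg hS _) h (by norm_num : (0:ℝ) ≤ 1/2)
  rw [← Real.rpow_mul hS, Real.mul_rpow (by positivity)
    (Finset.sum_nonneg fun k _ => sq_nonneg _), ← Real.rpow_mul (by positivity),
    ← Real.sqrt_eq_rpow] at h2
  convert h2 using 2
  · field_simp
  · congr 1; field_simp

lemma lp_bound {m : ℕ} {r s : ℝ} (hr1 : 1 < r) (hr2 : r ≤ 2) (hs : 0 < s) (σ y : Fin m → ℝ)
    (hσ : ∀ k, s ≤ σ k) :
    (∑ k, |y k / σ k| ^ r) ^ (1 / r) ≤ (m : ℝ) ^ (1 / r - 1 / 2) / s * √(∑ k, y k ^ 2) := by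
  have h := lp_bound0 hr1 hr2 (fun k => |y k| / s) (fun k => by positivity)
  have h1 : (∑ k, |y k / σ k| ^ r) ^ (1 / r) ≤ (∑ k, (|y k| / s) ^ r) ^ (1 / r) := by
    apply Real.rpow_le_rpow (Finset.sum_nonneg fun k _ => by positivity) _ (by positivity)
    apply Finset.sum_le_sum
    intro k _
    apply Real.rpow_le_rpow (abs_nonneg _) _ (by linarith)
    rw [abs_div, abs_of_pos (hs.trans_le (hσ k))]
    exact div_le_div_of_nonneg_left (abs_nonneg _) hs (hσ k)
  refine h1.trans (h.trans (le_of_eq ?_))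
  simp only [div_pow, sq_abs, ← Finset.sum_div]
  rw [Real.sqrt_div' _ (by positivity), Real.sqrt_sq hs.le]
  ring

lemma radq_ge {m n : ℕ} (p : ℝ≥0∞) (hp1 : 1 < p) (hp2 : p ≤ 2) (σ : Fin m → ℝ)
    (hσ : ∀ j, 0 < σ j) (A : Fin n → Fin m → ℝ) (x : Fin m → ℝ) (hx : x ∈ kerSet A)
    (B : ℝ) (hB : 0 < B) (hN : (∑ k, |x k / σ k| ^ p.toReal) ^ (1 / p.toReal) ≤ B) :
    √(∑ k, x k ^ 2) / B ≤ radq 2 (ellipsoid p σ) (kerSet A) := by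
  have hpt : p ≠ ∞ := (hp2.trans_lt (by simp)).ne
  have hr1 : 1 < p.toReal := by
    have := (ENNReal.toReal_lt_toReal (by simp) hpt).2 hp1
    simpa using this
  have hr0 : 0 < p.toReal := by linarith
  have hbdd : BddAbove (lpnorm 2 '' (ellipsoid p σ ∩ kerSet A)) := by
    refine ⟨√(∑ k, σ k ^ 2), ?_⟩
    rintro _ ⟨y, ⟨hy, -⟩, rfl⟩
    rw [lpnorm_two]
    apply Real.sqrt_le_sqrt
    apply Finset.sum_le_sum
    intro k _
    simp only [ellipsoid, lpnorm, if_neg hpt, Set.mem_setOf_eq] at hy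
    have h1 : |y k / σ k| ≤ 1 := by
      have h2 : |y k / σ k| ^ p.toReal ≤ ∑ k, |y k / σ k| ^ p.toReal :=
        Finset.single_le_sum (f := fun k => |y k / σ k| ^ p.toReal)
          (fun k _ => Real.rpow_nonneg (abs_nonneg _) _) (Finset.mem_univ k)
      have h3 := Real.rpow_le_rpow (by positivity) h2 (by positivity : 0 ≤ 1 / p.toReal)
      rw [← Real.rpow_mul (abs_nonneg _), mul_one_div_cancel hr0.ne', Real.rpow_one] at h3
      exact h3.trans hy
    rw [abs_div, abs_of_pos (hσ k), div_le_one (hσ k)] at h1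
    exact sq_le_sq' (by linarith [neg_abs_le (y k)]) ((le_abs_self _).trans h1)
  apply le_csSup hbdd
  refine ⟨fun k => x k / B, ⟨?_, ?_⟩, ?_⟩
  · simp only [ellipsoid, lpnorm, if_neg hpt, Set.mem_setOf_eq]
    have h1 : ∀ k, |x k / B / σ k| ^ p.toReal = |x k / σ k| ^ p.toReal / B ^ p.toReal := by
      intro k
      rw [← Real.div_rpow (abs_nonneg _) hB.le, div_right_comm, abs_div (x k / σ k),
        abs_of_pos hB]
    simp only [h1, ← Finset.sum_div]
    rw [Real.div_rpow (Finset.sum_nonneg fun k _ => by positivity) (by positivity),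
      ← Real.rpow_mul hB.le, mul_one_div_cancel hr0.ne', Real.rpow_one, div_le_one hB]
    exact hN
  · intro i
    have := hx i
    simp only [← mul_div_assoc, ← Finset.sum_div, this, zero_div]
  · rw [lpnorm_two]
    simp only [div_pow, ← Finset.sum_div]
    rw [Real.sqrt_div' _ (by positivity), Real.sqrt_sq hB.le]

lemma det1 {m n : ℕ} (p : ℝ≥0∞) (hp1 : 1 < p) (hp2 : p ≤ 2) (σ : Fin m → ℝ)
    (hσ : ∀ j, 0 < σ j) (A : Fin n → Fin m → ℝ) (x : Fin m → ℝ) (hx : x ∈ kerSet A)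
    (s : ℝ) (hs : 0 < s) (hsσ : ∀ k, s ≤ σ k) (hpos : 0 < ∑ k, x k ^ 2)
    (hr1 : 1 < p.toReal) (hr2 : p.toReal ≤ 2)
    (ha : (m : ℝ) ^ (1 / p.toReal - 1 / 2) / s ≤ 1) :
    1 ≤ radq 2 (ellipsoid p σ) (kerSet A) := by
  have h := radq_ge p hp1 hp2 σ hσ A x hx (√(∑ k, x k ^ 2)) (Real.sqrt_pos.2 hpos)
    ((lp_bound hr1 hr2 hs σ x hsσ).trans (mul_le_of_le_one_left (Real.sqrt_nonneg _) ha))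
  rwa [div_self (Real.sqrt_pos.2 hpos).ne'] at h

lemma det2 {m n : ℕ} (p : ℝ≥0∞) (hp1 : 1 < p) (hp2 : p ≤ 2) (σ : Fin m → ℝ)
    (hσ : ∀ j, 0 < σ j) (A : Fin n → Fin m → ℝ) (x : Fin m → ℝ) (hx : x ∈ kerSet A)
    (s : ℝ) (hs : 0 < s) (hsσ : ∀ k, s ≤ σ k) (o : Fin m) (hxo : ∑ k, x k ^ 2 = x o)
    (hpos : 0 < x o) (hx1 : x o ≤ 1)
    (hr1 : 1 < p.toReal) (hr2 : p.toReal ≤ 2)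
    (ha : (m : ℝ) ^ (1 / p.toReal - 1 / 2) / s * √(1 - x o) ≤ 1) :
    σ o / (1 + σ o) ≤ radq 2 (ellipsoid p σ) (kerSet A) := by
  set r := p.toReal with hr
  have hr0 : 0 < r := by linarith
  have hσo := hσ o
  let y : Fin m → ℝ := fun k => if k = o then 0 else x k
  have hy2 : ∑ k, y k ^ 2 = x o * (1 - x o) := by
    have h1 : ∀ k, x k ^ 2 = (if k = o then x o ^ 2 else 0) + y k ^ 2 := by
      intro k; by_cases h : k = o <;> simp [y, h]
    rw [Finset.sum_congr rfl fun k _ => h1 k, Finset.sum_add_distrib] at hxo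
    simp at hxo
    linarith
  have hN1 : ∑ k, |x k / σ k| ^ r = (x o / σ o) ^ r + ∑ k, |y k / σ k| ^ r := by
    have h1 : ∀ k, |x k / σ k| ^ r = (if k = o then (x o / σ o) ^ r else 0)
        + |y k / σ k| ^ r := by
      intro k; by_cases h : k = o
      · simp [y, h, Real.zero_rpow hr0.ne', abs_of_pos (hσ o), abs_of_pos hpos, abs_div]
      · simp [y, h]
    rw [Finset.sum_congr rfl fun k _ => h1 k, Finset.sum_add_distrib]
    simp
  have hN : (∑ k, |x k / σ k| ^ r) ^ (1 / r) ≤ √(x o) * (1 / σ o + 1) := by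
    rw [hN1]
    refine (Real.rpow_add_le_add_rpow (by positivity)
      (Finset.sum_nonneg fun k _ => by positivity) (by positivity)
      (by rw [div_le_one hr0]; linarith)).trans ?_
    rw [← Real.rpow_mul (by positivity), mul_one_div_cancel hr0.ne', Real.rpow_one]
    have h1 := lp_bound hr1 hr2 hs σ y hsσ
    rw [hy2, Real.sqrt_mul hpos.le] at h1
    have h2 : x o ≤ √(x o) := by
      apply Real.le_sqrt_of_sq_le; nlinarith
    have h3 : x o / σ o ≤ √(x o) * (1 / σ o) := by
      rw [mul_one_div]; gcongr
    have h4 := mul_le_mul_of_nonneg_left ha (Real.sqrt_nonneg (x o))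
    nlinarith
  have h := radq_ge p hp1 hp2 σ hσ A x hx _ (by positivity) hN
  rw [hxo] at h
  convert h using 1
  have := (Real.sqrt_pos.2 hpos).ne'
  field_simp

/-- For `1 < p ≤ 2`, every `ε ∈ (0,1)`, and all `1 ≤ n < m` with
`n ≤ ε σ_m² m^{2/p*}`, with probability at least `1 - ε` one has
`rad(E^m_{p,σ}, ker G_{n,m}) ≥ σ₁/(1 + σ₁)`.
(Here `σ : Fin m → ℝ` is 0-indexed, i.e. `σ ⟨j-1⟩` is the paper's `σ_j`.) -/
theorem statement5 (p : ℝ≥0∞) (hp1 : 1 < p) (hp2 : p ≤ 2) :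
    ∀ ε : ℝ, 0 < ε → ε < 1 →
    ∀ (m n : ℕ) (hn : 1 ≤ n) (hnm : n < m),
    ∀ σ : Fin m → ℝ, (∀ j, 0 < σ j) → (∀ i j : Fin m, i ≤ j → σ j ≤ σ i) →
    (n : ℝ) ≤ ε * σ ⟨m - 1, by omega⟩ ^ 2 * (m : ℝ) ^ (2 / pstar p) →
    ENNReal.ofReal (1 - ε) ≤
      gaussianMatrix n m {A |
        σ ⟨0, by omega⟩ / (1 + σ ⟨0, by omega⟩) ≤ radq 2 (ellipsoid p σ) (kerSet A)} := by
  intro ε hε hε1 m n hn hnm σ hσ hmono hcond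
  have hpt : p ≠ ∞ := (hp2.trans_lt (by simp)).ne
  have hr1 : 1 < p.toReal := by
    have := (ENNReal.toReal_lt_toReal (by simp) hpt).2 hp1
    simpa using this
  have hr2 : p.toReal ≤ 2 := by
    have := (ENNReal.toReal_le_toReal hpt (by simp)).2 hp2
    simpa using this
  have hm0 : (0 : ℝ) < m := by exact_mod_cast (by omega : 0 < m)
  have hnm' : (n : ℝ) < m := by exact_mod_cast hnm
  set o : Fin m := ⟨0, by omega⟩ with ho
  set s : ℝ := σ ⟨m - 1, by omega⟩ with hsdef
  have hs : 0 < s := hσ _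
  have hsσ : ∀ k, s ≤ σ k := fun k => hmono _ _ (by rw [Fin.le_def]; simp; omega)
  have hσo := hσ o
  set a : ℝ := (m : ℝ) ^ (1 / p.toReal - 1 / 2) / s with ha
  have ha0 : 0 < a := by positivity
  -- main numeric relation
  have hna : (n : ℝ) / m ≤ ε * (a ^ 2)⁻¹ := by
    have h1 : (m : ℝ) ^ (2 / pstar p) * ((m : ℝ) ^ (1 / p.toReal - 1 / 2)) ^ 2 = m := by
      rw [← Real.rpow_natCast, ← Real.rpow_mul hm0.le, ← Real.rpow_add hm0]
      have : 2 / pstar p + (1 / p.toReal - 1 / 2) * ((2 : ℕ) : ℝ) = 1 := by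
        unfold pstar; push_cast; rw [div_inv_eq_mul]; ring
      rw [this, Real.rpow_one]
    have hM : (0:ℝ) < (m : ℝ) ^ (1 / p.toReal - 1 / 2) := by positivity
    rw [ha, div_pow, inv_div, div_le_iff₀ hm0]
    have h2 : ε * (s ^ 2 / ((m : ℝ) ^ (1 / p.toReal - 1 / 2)) ^ 2) * m
        = ε * s ^ 2 * (m : ℝ) ^ (2 / pstar p) := by
      nth_rw 2 [← h1]
      field_simp
    rw [h2]; exact hcond
  by_cases hcase : a ≤ 1
  · have hall : {A : Fin n → Fin m → ℝ |
        σ o / (1 + σ o) ≤ radq 2 (ellipsoid p σ) (kerSet A)} = Set.univ := by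
      ext A
      simp only [Set.mem_setOf_eq, Set.mem_univ, iff_true]
      obtain ⟨X, hX1, hX2, hX3, hX4⟩ := key_proj A
      have : ∃ j, 0 < X j j := by
        by_contra! hcon
        have : ∑ j, X j j ≤ 0 := Finset.sum_nonpos fun j _ => hcon j
        linarith
      obtain ⟨j, hj⟩ := this
      have h := det1 p hp1 hp2 σ hσ A (X j) (hX1 j) s hs hsσ (by rw [hX2]; exact hj) hr1 hr2 hcase
      refine le_trans ?_ h
      rw [div_le_one (by positivity)]; linarith
    rw [hall, measure_univ]
    exact ENNReal.ofReal_le_one.2 (by linarith)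
  · push Not at hcase
    set c : ℝ := (a ^ 2)⁻¹ with hc
    have hc0 : 0 < c := by positivity
    have hc1 : c < 1 := inv_lt_one_of_one_lt₀ (by nlinarith)
    have hint := Dq_integral (n := n) o
    have hmk := mul_meas_ge_le_integral_of_nonneg (μ := gaussianMatrix n m)
      (f := fun A => 1 - Dq (n := n) o A)
      (Filter.Eventually.of_forall fun A => sub_nonneg.2 (Dq_le_one o A))
      ((integrable_const _).sub (Dq_int o)) c
    rw [integral_sub (integrable_const _) (Dq_int o)] at hmk
    simp only [integral_const, probReal_univ, smul_eq_mul, mul_one] at hmk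
    set S : Set (Fin n → Fin m → ℝ) := {A | c ≤ 1 - Dq o A} with hS
    have hSm : MeasurableSet S := measurableSet_le measurable_const
      (measurable_const.sub (Dq_meas o))
    have hSε : (gaussianMatrix n m).real S ≤ ε := by
      have h1 : 1 - ∫ A, Dq (n := n) o A ∂(gaussianMatrix n m) ≤ n / m := by
        rw [le_div_iff₀ hm0]; linarith
      have h2 : c * (gaussianMatrix n m).real S ≤ c * ε := by
        rw [mul_comm c ε]; linarith
      exact le_of_mul_le_mul_left h2 hc0
    have hsub : Sᶜ ⊆ {A : Fin n → Fin m → ℝ |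
        σ o / (1 + σ o) ≤ radq 2 (ellipsoid p σ) (kerSet A)} := by
      intro A hA
      simp only [hS, Set.mem_compl_iff, Set.mem_setOf_eq, not_le] at hA
      obtain ⟨X, hX1, hX2, hX3, hX4⟩ := key_proj A
      have hd := hX3 o
      refine det2 p hp1 hp2 σ hσ A (X o) (hX1 o) s hs hsσ o (hX2 o) (by linarith)
        (by rw [hd]; exact Dq_le_one o A) hr1 hr2 ?_
      rw [hd]
      have h1 : √(1 - Dq o A) ≤ a⁻¹ := by
        apply Real.sqrt_le_iff.2 ⟨by positivity, ?_⟩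
        rw [inv_pow]; exact hA.le
      calc a * √(1 - Dq o A) ≤ a * a⁻¹ := by gcongr
        _ = 1 := mul_inv_cancel₀ ha0.ne'
    refine le_trans ?_ (measure_mono hsub)
    have h3 : (gaussianMatrix n m).real Sᶜ = 1 - (gaussianMatrix n m).real S :=
      probReal_compl_eq_one_sub hSm
    rw [← ofReal_measureReal, h3]
    exact ENNReal.ofReal_le_ofReal (by linarith)
end

section
/- Let p = 1. There exists an absolute constant C ∈ (0,∞) such that for every m ∈ ℕ and all semiaxes σ₁ ≥ σ₂ ≥ … ≥ σ_m > 0, E[sup_{y ∈ E^m_{1,σ}} Σ_{j=1}^m g_j·y_j] ≤ C·sup_{1 ≤ j ≤ m} σ_j·√(log j + 1), where g₁,…,g_m are independent standard Gaussian random variables. -/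
open MeasureTheory ProbabilityTheory
open scoped ENNReal NNReal

lemma aux_int : Integrable (fun x : ℝ => Real.exp (x ^ 2 / 4)) (gaussianReal 0 1) := by
  rw [gaussianReal_of_var_ne_zero 0 (by norm_num : (1 : ℝ≥0) ≠ 0)]
  rw [integrable_withDensity_iff_integrable_smul' (measurable_gaussianPDF 0 1)
    (Filter.Eventually.of_forall fun x => ENNReal.ofReal_lt_top)]
  have h := (integrable_exp_neg_mul_sq (b := (1/4 : ℝ)) (by norm_num)).const_mul
    ((Real.sqrt (2 * Real.pi * ((1 : ℝ≥0) : ℝ)))⁻¹)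
  refine h.congr (Filter.Eventually.of_forall fun x => ?_)
  simp only [toReal_gaussianPDF, gaussianPDFReal, smul_eq_mul, mul_assoc, ← Real.exp_add]
  congr 2
  push_cast
  ring

lemma aux_pt (z g : ℝ) (n : ℕ) (hz : 0 ≤ z)
    (h : ((n : ℝ) + 1) ^ (-2 : ℤ) * Real.exp (g ^ 2 / 4) ≤ z) :
    |g| ≤ (4 * z + 8) * Real.sqrt (Real.log ((n : ℝ) + 1) + 1) := by
  have hn : (0 : ℝ) < (n : ℝ) + 1 := by positivity
  have hl : 0 ≤ Real.log ((n : ℝ) + 1) := Real.log_nonneg (by linarith [n.cast_nonneg (α := ℝ)])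
  have hz' : 0 < z := lt_of_lt_of_le (by positivity) h
  have h1 := Real.log_le_log (by positivity) h
  rw [Real.log_mul (by positivity) (by positivity), Real.log_exp, Real.log_zpow] at h1
  push_cast at h1
  have h2 : Real.log z ≤ z := (Real.log_le_sub_one_of_pos hz').trans (by linarith)
  refine abs_le_of_sq_le_sq ?_ (by positivity)
  rw [mul_pow, Real.sq_sqrt (by linarith)]
  have h3 : g ^ 2 ≤ 4 * z + 8 * Real.log ((n : ℝ) + 1) := by linarith
  have h4 : (4 * z + 8) ≤ (4 * z + 8) ^ 2 := by nlinarith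
  have h5 : g ^ 2 ≤ (4 * z + 8) * (Real.log ((n : ℝ) + 1) + 1) := by
    nlinarith [mul_nonneg hz hl]
  exact h5.trans (mul_le_mul_of_nonneg_right h4 (by linarith))

lemma aux_sup {m : ℕ} (σ : Fin m → ℝ) (hσ : ∀ j, 0 < σ j) (g : Fin m → ℝ) (K : ℝ) (hK : 0 ≤ K)
    (h : ∀ j, σ j * |g j| ≤ K) :
    sSup ((fun y => ∑ j, g j * y j) '' ellipsoid 1 σ) ≤ K := by
  apply Real.sSup_le _ hK
  rintro _ ⟨y, hy, rfl⟩
  have hy' : ∑ j, |y j / σ j| ≤ 1 := by simpa [ellipsoid, lpnorm] using hy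
  calc ∑ j, g j * y j ≤ ∑ j, K * |y j / σ j| := by
        refine Finset.sum_le_sum fun j _ => ?_
        calc g j * y j ≤ |g j * y j| := le_abs_self _
          _ = (σ j * |g j|) * |y j / σ j| := by
            rw [abs_mul, abs_div, abs_of_pos (hσ j)]
            field_simp [(hσ j).ne']
          _ ≤ _ := mul_le_mul_of_nonneg_right (h j) (abs_nonneg _)
    _ = K * ∑ j, |y j / σ j| := by rw [Finset.mul_sum]
    _ ≤ K * 1 := mul_le_mul_of_nonneg_left hy' hK
    _ = K := mul_one K

/-- For `p = 1`, an absolute constant `C` bounds the expected supremum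
of the Gaussian process indexed by the `ℓ_1`-ellipsoid:
`E sup_{y ∈ E^m_{1,σ}} ∑ g_j y_j ≤ C sup_{1 ≤ j ≤ m} σ_j √(log j + 1)`.
(Here `σ : Fin m → ℝ` is 0-indexed, i.e. `σ ⟨j-1⟩` is the paper's `σ_j`.) -/
theorem statement11 :
    ∃ C : ℝ, 0 < C ∧
      ∀ (m : ℕ) (σ : Fin m → ℝ), (∀ j, 0 < σ j) → (∀ i j : Fin m, i ≤ j → σ j ≤ σ i) →
      (∫ g, sSup ((fun y => ∑ j, g j * y j) '' ellipsoid 1 σ)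
          ∂(Measure.pi fun _ : Fin m => gaussianReal 0 1)) ≤
        C * sSup ((fun j : Fin m => σ j * Real.sqrt (Real.log ((j : ℕ) + 1) + 1)) ''
          Set.univ) := by
  have hw : Summable (fun n : ℕ => ((n : ℝ) + 1) ^ (-2 : ℤ)) := by
    have := (summable_nat_add_iff 1).mpr (Real.summable_one_div_nat_pow.mpr (by norm_num : 1 < 2))
    refine this.congr fun n => ?_
    push_cast
    rw [zpow_neg, one_div]
    norm_cast
  set S := ∑' n : ℕ, ((n : ℝ) + 1) ^ (-2 : ℤ) with hS
  set c := ∫ x, Real.exp (x ^ 2 / 4) ∂(gaussianReal 0 1) with hc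
  have hS0 : 0 ≤ S := tsum_nonneg fun n => by positivity
  have hc0 : 0 ≤ c := integral_nonneg fun x => by positivity
  refine ⟨4 * (S * c) + 8, by positivity, fun m σ hσ _ => ?_⟩
  set M := sSup ((fun j : Fin m => σ j * Real.sqrt (Real.log ((j : ℕ) + 1) + 1)) '' Set.univ)
    with hM
  have hMj : ∀ j : Fin m, σ j * Real.sqrt (Real.log ((j : ℕ) + 1) + 1) ≤ M := fun j =>
    le_csSup (Set.finite_univ.image _).bddAbove ⟨j, trivial, rfl⟩
  have hM0 : 0 ≤ M := Real.sSup_nonneg (by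
    rintro _ ⟨j, _, rfl⟩
    exact mul_nonneg (hσ j).le (Real.sqrt_nonneg _))
  let Z : (Fin m → ℝ) → ℝ := fun g =>
    ∑ j : Fin m, (((j : ℕ) : ℝ) + 1) ^ (-2 : ℤ) * Real.exp (g j ^ 2 / 4)
  have hZ0 : ∀ g, 0 ≤ Z g := fun g => Finset.sum_nonneg fun j _ => by positivity
  have hmp : ∀ j : Fin m, MeasurePreserving (Function.eval j)
      (Measure.pi fun _ : Fin m => gaussianReal 0 1) (gaussianReal 0 1) := fun j =>
    measurePreserving_eval (fun _ : Fin m => gaussianReal 0 1) j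
  have hij : ∀ j : Fin m, Integrable (fun g : Fin m → ℝ => Real.exp (g j ^ 2 / 4))
      (Measure.pi fun _ : Fin m => gaussianReal 0 1) := fun j =>
    (hmp j).integrable_comp_of_integrable aux_int
  have hej : ∀ j : Fin m, ∫ g : Fin m → ℝ, Real.exp (g j ^ 2 / 4)
      ∂(Measure.pi fun _ : Fin m => gaussianReal 0 1) = c := fun j => by
    have h := integral_map (hmp j).aemeasurable (f := fun x : ℝ => Real.exp (x ^ 2 / 4))
      (by rw [(hmp j).map_eq]; exact aux_int.aestronglyMeasurable)
    rw [(hmp j).map_eq] at h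
    exact h.symm
  have hZi : Integrable Z (Measure.pi fun _ : Fin m => gaussianReal 0 1) :=
    integrable_finsetSum _ fun j _ => (hij j).const_mul _
  have hZe : ∫ g, Z g ∂(Measure.pi fun _ : Fin m => gaussianReal 0 1) ≤ S * c := by
    rw [integral_finsetSum _ fun j _ => (hij j).const_mul _]
    simp_rw [integral_const_mul, hej]
    rw [← Finset.sum_mul]
    refine mul_le_mul_of_nonneg_right ?_ hc0
    rw [Fin.sum_univ_eq_sum_range (fun n : ℕ => ((n : ℝ) + 1) ^ (-2 : ℤ)) m]
    exact hw.sum_le_tsum _ fun n _ => by positivity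
  calc _ ≤ ∫ g, (4 * Z g + 8) * M ∂(Measure.pi fun _ : Fin m => gaussianReal 0 1) := by
        refine integral_mono_of_nonneg (Filter.Eventually.of_forall fun g => ?_)
          (((hZi.const_mul 4).add (integrable_const 8)).mul_const M)
          (Filter.Eventually.of_forall fun g => ?_)
        · refine Real.sSup_nonneg' ⟨0, ⟨0, ?_, by simp⟩, le_rfl⟩
          simp [ellipsoid, lpnorm]
        · have hg := hZ0 g
          refine aux_sup σ hσ g _ (by positivity) fun j => ?_
          have h1 := aux_pt (Z g) (g j) j hg (Finset.single_le_sum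
            (f := fun j : Fin m => (((j : ℕ) : ℝ) + 1) ^ (-2 : ℤ) * Real.exp (g j ^ 2 / 4))
            (fun j _ => by positivity) (Finset.mem_univ j))
          calc σ j * |g j| ≤ σ j * ((4 * Z g + 8) * Real.sqrt (Real.log ((j : ℕ) + 1) + 1)) :=
                mul_le_mul_of_nonneg_left h1 (hσ j).le
            _ = (4 * Z g + 8) * (σ j * Real.sqrt (Real.log ((j : ℕ) + 1) + 1)) := by ring
            _ ≤ _ := mul_le_mul_of_nonneg_left (hMj j) (by positivity)
    _ = (4 * ∫ g, Z g ∂(Measure.pi fun _ : Fin m => gaussianReal 0 1) + 8) * M := by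
        rw [integral_mul_const, integral_add (hZi.const_mul 4) (integrable_const 8),
          integral_const_mul]
        simp
    _ ≤ _ := mul_le_mul_of_nonneg_right (by linarith) hM0
end

section
/- Let 0 < p ≤ ∞ and λ > 0, and set σ_j = j^{−λ} for 1 ≤ j ≤ m. Then there exist constants c, C ∈ (0,∞) depending only on p and λ such that for every m ∈ ℕ and every integer 1 ≤ s ≤ m/2: c·s^{−λ} ≤ sup_{x ∈ E^m_{p,σ}} σ_s(x)_p ≤ C·s^{−λ}, where σ_s(x)_p := inf{‖x − z‖_p : z ∈ ℝ^m is s-sparse} is the error of best s-term approximation of x in the ℓ_p-(quasi-)norm. -/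
open scoped ENNReal NNReal

/-- The error of best `s`-term approximation of `x` in the `ℓ_p`-(quasi-)norm:
`σ_s(x)_p = inf {‖x - z‖_p : z is s-sparse}`. -/
noncomputable def bestApprox (p : ℝ≥0∞) {m : ℕ} (s : ℕ) (x : Fin m → ℝ) : ℝ :=
  sInf ((fun z => lpnorm p (x - z)) ''
    {z : Fin m → ℝ | ∃ S : Finset (Fin m), S.card ≤ s ∧ ∀ j ∉ S, z j = 0})

lemma lpnorm_mono (p : ℝ≥0∞) {m : ℕ} {x y : Fin m → ℝ} (h : ∀ j, |x j| ≤ |y j|) :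
    lpnorm p x ≤ lpnorm p y := by
  unfold lpnorm
  split_ifs with hp
  · exact ciSup_mono (Set.finite_range _).bddAbove h
  · apply Real.rpow_le_rpow
    · exact Finset.sum_nonneg fun j _ => Real.rpow_nonneg (abs_nonneg _) _
    · exact Finset.sum_le_sum fun j _ =>
        Real.rpow_le_rpow (abs_nonneg _) (h j) ENNReal.toReal_nonneg
    · positivity

lemma lpnorm_nn (p : ℝ≥0∞) {m : ℕ} (x : Fin m → ℝ) : 0 ≤ lpnorm p x := by
  unfold lpnorm
  split_ifs with hp
  · exact Real.iSup_nonneg fun j => abs_nonneg _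
  · exact Real.rpow_nonneg (Finset.sum_nonneg fun j _ => Real.rpow_nonneg (abs_nonneg _) _) _

lemma lpnorm_scale (p : ℝ≥0∞) (hp0 : 0 < p) {m : ℕ} (a : ℝ) (ha : 0 ≤ a) (x : Fin m → ℝ) :
    lpnorm p (fun j => a * x j) = a * lpnorm p x := by
  unfold lpnorm
  split_ifs with hp
  · simp only [abs_mul, abs_of_nonneg ha]
    exact (Real.mul_iSup_of_nonneg ha _).symm
  · have hpos : 0 < p.toReal := ENNReal.toReal_pos hp0.ne' hp
    simp only [abs_mul, abs_of_nonneg ha]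
    have : ∀ j, (a * |x j|) ^ p.toReal = a ^ p.toReal * |x j| ^ p.toReal :=
      fun j => Real.mul_rpow ha (abs_nonneg _)
    simp only [this]
    rw [← Finset.mul_sum, Real.mul_rpow (Real.rpow_nonneg ha _)
      (Finset.sum_nonneg fun j _ => Real.rpow_nonneg (abs_nonneg _) _), ← Real.rpow_mul ha,
      mul_one_div_cancel hpos.ne', Real.rpow_one]

lemma lpnorm_ind (p : ℝ≥0∞) (hp0 : 0 < p) {m : ℕ} (T : Finset (Fin m)) (hT : T.Nonempty) :
    lpnorm p (fun j => if j ∈ T then (1 : ℝ) else 0) = (T.card : ℝ) ^ (1 / p.toReal) := by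
  unfold lpnorm
  split_ifs with hp
  · subst hp
    simp only [ENNReal.toReal_top, div_zero, Real.rpow_zero]
    obtain ⟨i, hi⟩ := hT
    have : Nonempty (Fin m) := ⟨i⟩
    apply le_antisymm
    · apply ciSup_le
      intro j
      split_ifs <;> simp
    · refine le_trans ?_ (le_ciSup (Set.finite_range _).bddAbove i)
      simp [hi]
  · have hpos : 0 < p.toReal := ENNReal.toReal_pos hp0.ne' hp
    congr 1
    have : ∀ j, |if j ∈ T then (1 : ℝ) else 0| ^ p.toReal = if j ∈ T then (1 : ℝ) else 0 := by
      intro j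
      split_ifs
      · simp
      · simp [hpos.ne']
    simp only [this]
    simp

lemma bestApprox_le (p : ℝ≥0∞) {m : ℕ} (s : ℕ) (x z : Fin m → ℝ) (S : Finset (Fin m))
    (hS : S.card ≤ s) (hz : ∀ j ∉ S, z j = 0) : bestApprox p s x ≤ lpnorm p (x - z) := by
  apply csInf_le
  · refine ⟨0, ?_⟩
    rintro _ ⟨w, -, rfl⟩
    exact lpnorm_nn p _
  · exact ⟨z, ⟨S, hS, hz⟩, rfl⟩

lemma upper_aux (p : ℝ≥0∞) (hp : 0 < p) (lam : ℝ) (hlam : 0 < lam) (m s : ℕ) (hs : 1 ≤ s)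
    (x : Fin m → ℝ) (hx : x ∈ ellipsoid p (fun j : Fin m => ((j : ℕ) + 1 : ℝ) ^ (-lam))) :
    bestApprox p s x ≤ (s : ℝ) ^ (-lam) := by
  have hs0 : (0 : ℝ) < s := by exact_mod_cast hs
  have h1 := bestApprox_le p s x (fun j => if (j : ℕ) < s then x j else 0)
    (Finset.univ.filter fun j : Fin m => (j : ℕ) < s)
    (by
      calc _ = ((Finset.univ.filter fun j : Fin m => (j : ℕ) < s).image Fin.val).card :=
            (Finset.card_image_of_injective _ Fin.val_injective).symm
        _ ≤ (Finset.range s).card := Finset.card_le_card (by intro a; simp; rintro y hy rfl; exact hy)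
        _ = s := Finset.card_range s)
    (by intro j hj; simp at hj; simp [hj])
  refine h1.trans ?_
  have hsl : (0 : ℝ) < (s : ℝ) ^ (-lam) := Real.rpow_pos_of_pos hs0 _
  have hx' : lpnorm p (fun j => x j / ((j : ℕ) + 1 : ℝ) ^ (-lam)) ≤ 1 := hx
  calc _ ≤ lpnorm p (fun j => (s : ℝ) ^ (-lam) * (x j / ((j : ℕ) + 1 : ℝ) ^ (-lam))) := by
        apply lpnorm_mono
        intro j
        simp only [Pi.sub_apply]
        split_ifs with hj
        · rw [sub_self, abs_zero]; exact abs_nonneg _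
        · have hj1 : (0 : ℝ) < ((j : ℕ) + 1 : ℝ) ^ (-lam) := Real.rpow_pos_of_pos (by positivity) _
          have hle : ((j : ℕ) + 1 : ℝ) ^ (-lam) ≤ (s : ℝ) ^ (-lam) := by
            apply Real.rpow_le_rpow_of_nonpos hs0 _ (by linarith)
            push Not at hj
            exact_mod_cast hj.trans (Nat.le_succ _)
          rw [sub_zero, abs_mul, abs_div, abs_of_pos hsl, abs_of_pos hj1, ← mul_div_assoc,
            le_div_iff₀ hj1, mul_comm]
          exact mul_le_mul_of_nonneg_right hle (abs_nonneg _)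
    _ = (s : ℝ) ^ (-lam) * lpnorm p (fun j => x j / ((j : ℕ) + 1 : ℝ) ^ (-lam)) :=
        lpnorm_scale p hp _ hsl.le _
    _ ≤ _ := by nlinarith

lemma lower_aux (p : ℝ≥0∞) (hp : 0 < p) (lam : ℝ) (hlam : 0 < lam) (m s : ℕ) (hs : 1 ≤ s)
    (hm : 2 * s ≤ m) :
    ∃ x ∈ ellipsoid p (fun j : Fin m => ((j : ℕ) + 1 : ℝ) ^ (-lam)),
      (2 : ℝ) ^ (-lam - 1 / p.toReal) * (s : ℝ) ^ (-lam) ≤ bestApprox p s x := by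
  have hs0 : (0 : ℝ) < s := by exact_mod_cast hs
  have h2s : (0 : ℝ) < 2 * s := by positivity
  set T : Finset (Fin m) := Finset.univ.filter fun j : Fin m => (j : ℕ) < 2 * s with hTdef
  have hTcard : T.card = 2 * s := by
    rw [← Finset.card_image_of_injective T Fin.val_injective]
    have : T.image Fin.val = Finset.range (2 * s) := by
      ext a
      simp only [hTdef, Finset.mem_image, Finset.mem_filter, Finset.mem_univ, true_and,
        Finset.mem_range]
      constructor
      · rintro ⟨j, hj, rfl⟩
        exact hj
      · intro ha
        exact ⟨⟨a, by omega⟩, ha, rfl⟩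
    rw [this, Finset.card_range]
  have hTne : T.Nonempty := by
    rw [← Finset.card_pos]; omega
  set q : ℝ := 1 / p.toReal with hq
  have hq0 : 0 ≤ q := by positivity
  set a : ℝ := (2 * s : ℝ) ^ (-lam - q) with ha
  have ha0 : 0 < a := Real.rpow_pos_of_pos h2s _
  refine ⟨fun j => a * (if j ∈ T then (1 : ℝ) else 0), ?_, ?_⟩
  · change lpnorm p _ ≤ 1
    calc _ ≤ lpnorm p (fun j => (2 * s : ℝ) ^ (-q) * (if j ∈ T then (1 : ℝ) else 0)) := by
          apply lpnorm_mono
          intro j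
          by_cases hj : j ∈ T
          · have hj1 : (0 : ℝ) < ((j : ℕ) + 1 : ℝ) ^ (-lam) :=
              Real.rpow_pos_of_pos (by positivity) _
            have hjl : (j : ℕ) < 2 * s := by simpa [hTdef] using hj
            have hle : (2 * s : ℝ) ^ (-lam) ≤ ((j : ℕ) + 1 : ℝ) ^ (-lam) := by
              apply Real.rpow_le_rpow_of_nonpos (by positivity) _ (by linarith)
              exact_mod_cast hjl
            have hb : (0 : ℝ) < (2 * s : ℝ) ^ (-q) := Real.rpow_pos_of_pos h2s _
            have hab : a = (2 * s : ℝ) ^ (-lam) * (2 * s : ℝ) ^ (-q) := by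
              rw [ha, ← Real.rpow_add h2s, sub_eq_add_neg]
            simp only [hj, if_true, mul_one]
            rw [abs_div, abs_of_pos ha0, abs_of_pos hj1, abs_of_pos hb, div_le_iff₀ hj1, hab,
              mul_comm]
            exact mul_le_mul_of_nonneg_left hle hb.le
          · simp [hj]
      _ = (2 * s : ℝ) ^ (-q) * (2 * s : ℝ) ^ q := by
          rw [lpnorm_scale p hp _ (Real.rpow_nonneg h2s.le _), lpnorm_ind p hp T hTne, hTcard]
          push_cast
          rfl
      _ = 1 := by rw [← Real.rpow_add h2s]; simp
      _ ≤ 1 := le_rfl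
  · apply le_csInf
    · exact ⟨_, 0, ⟨∅, by simp, by simp⟩, rfl⟩
    · rintro _ ⟨z, ⟨S, hS, hz⟩, rfl⟩
      have hc : s ≤ (T \ S).card := by
        have := Finset.le_card_sdiff S T
        omega
      have hne : (T \ S).Nonempty := by
        rw [← Finset.card_pos]; omega
      calc _ = a * (s : ℝ) ^ q := by
            rw [ha, Real.mul_rpow (by norm_num) hs0.le, mul_assoc, ← Real.rpow_add hs0]
            simp
        _ ≤ a * ((T \ S).card : ℝ) ^ q := by
            apply mul_le_mul_of_nonneg_left _ ha0.le
            exact Real.rpow_le_rpow hs0.le (by exact_mod_cast hc) hq0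
        _ = lpnorm p (fun j => a * (if j ∈ T \ S then (1 : ℝ) else 0)) := by
            rw [lpnorm_scale p hp _ ha0.le, lpnorm_ind p hp _ hne]
        _ ≤ _ := by
            apply lpnorm_mono
            intro j
            by_cases hj : j ∈ T \ S
            · have hj' := Finset.mem_sdiff.1 hj
              simp [hj'.1, hj'.2, hz j hj'.2]
            · simp only [hj, if_false, mul_zero, abs_zero]
              exact abs_nonneg _

/-- For `0 < p ≤ ∞`, `λ > 0` and `σ_j = j^{-λ}` (0-indexed), for all
`1 ≤ s ≤ m/2`: `c s^{-λ} ≤ sup_{x ∈ E^m_{p,σ}} σ_s(x)_p ≤ C s^{-λ}`, with constants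
depending only on `p` and `λ`. -/
theorem statement13 (p : ℝ≥0∞) (hp : 0 < p) (lam : ℝ) (hlam : 0 < lam) :
    ∃ c C : ℝ, 0 < c ∧ 0 < C ∧
      ∀ (m s : ℕ), 1 ≤ s → 2 * s ≤ m →
        c * (s : ℝ) ^ (-lam) ≤
            sSup (bestApprox p s ''
              ellipsoid p (fun j : Fin m => ((j : ℕ) + 1 : ℝ) ^ (-lam))) ∧
          sSup (bestApprox p s ''
              ellipsoid p (fun j : Fin m => ((j : ℕ) + 1 : ℝ) ^ (-lam))) ≤
            C * (s : ℝ) ^ (-lam) := by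
  refine ⟨(2 : ℝ) ^ (-lam - 1 / p.toReal), 1, by positivity, one_pos, ?_⟩
  intro m s hs hm
  have hub := upper_aux p hp lam hlam m s hs
  obtain ⟨x, hx, hxl⟩ := lower_aux p hp lam hlam m s hs hm
  constructor
  · refine hxl.trans (le_csSup ⟨(s : ℝ) ^ (-lam), ?_⟩ ⟨x, hx, rfl⟩)
    rintro _ ⟨y, hy, rfl⟩
    exact hub y hy
  · rw [one_mul]
    refine csSup_le (Set.Nonempty.image _ ⟨x, hx⟩) ?_
    rintro _ ⟨y, hy, rfl⟩
    exact hub y hy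
end

section
/- Let 1 < p ≤ ∞ with Hölder conjugate p*, and let σ = (σ_j)_{j∈ℕ} be a non-increasing non-negative sequence with σ ∈ ℓ_{p*}. There exist absolute constants C, c ∈ (0,∞) such that for every n ∈ ℕ, the Gelfand numbers of the diagonal operator D_σ : ℓ_p → ℓ₂ satisfy c_n(D_σ : ℓ_p → ℓ₂) ≤ C·√(p*)·n^{−1/2}·(Σ_{j=k}^∞ σ_j^{p*})^{1/p*}, where k := max(1, ⌈c·n/p*⌉). In particular, the sequence (c_n(D_σ : ℓ_p → ℓ₂))_{n∈ℕ} belongs to the weak-ℓ₂ space ℓ_{2,∞}, i.e., sup_n n^{1/2}·c_n(D_σ : ℓ_p → ℓ₂) < ∞. -/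
open scoped ENNReal NNReal

/-- The `n`-th Gelfand number of the diagonal operator `D_σ : ℓ_p → ℓ₂`:
the infimum over all closed linear subspaces `E` of `ℓ_p` of codimension at most `n - 1`
(expressed as kernels of linear maps into `ℝ^{n-1}` that are closed in the `ℓ_p`-norm) of
`sup {‖D_σ x‖₂ : x ∈ B_{ℓ_p} ∩ E}`. -/
noncomputable def gelfandSeq (p : ℝ≥0∞) (σ : ℕ → ℝ) (n : ℕ) : ℝ :=
  sInf { t | ∃ f : (lp (fun _ : ℕ => ℝ) p) →ₗ[ℝ] (Fin (n - 1) → ℝ),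
      (∀ x : lp (fun _ : ℕ => ℝ) p,
          (∀ ε : ℝ, 0 < ε → ∃ y : lp (fun _ : ℕ => ℝ) p, f y = 0 ∧ ‖x - y‖ < ε) →
          f x = 0) ∧
      t = sSup ((fun x : lp (fun _ : ℕ => ℝ) p => Real.sqrt (∑' j, (σ j * x j) ^ 2)) ''
        {x | ‖x‖ ≤ 1 ∧ f x = 0}) }


noncomputable def sg (b : Bool) : ℝ := if b then 1 else -1

lemma sg_sq (b : Bool) : sg b ^ 2 = 1 := by cases b <;> simp [sg]

lemma sum_cons {m : ℕ} (F : (Fin (m+1) → Bool) → ℝ) :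
    ∑ e, F e = ∑ e : Fin m → Bool, (F (Fin.cons true e) + F (Fin.cons false e)) := by
  rw [← (Fin.consEquiv (fun _ : Fin (m+1) => Bool)).sum_comp, Fintype.sum_prod_type,
    Fintype.sum_bool, ← Finset.sum_add_distrib]
  rfl

lemma contraction {T : Type*} (m : ℕ) : ∀ (v : Fin m → T → ℝ) (h : T → ℝ)
    (s : (Fin m → Bool) → T), ∃ s' : (Fin m → Bool) → T,
    ∑ e, (h (s e) + ∑ i, sg (e i) * |v i (s e)|) ≤
      ∑ e, (h (s' e) + ∑ i, sg (e i) * v i (s' e)) := by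
  induction m with
  | zero => intro v h s; exact ⟨s, by simp⟩
  | succ m ih =>
    intro v h s
    obtain ⟨s1, h1⟩ := ih (fun i => v i.succ) (fun t => h t + |v 0 t|) (fun e => s (Fin.cons true e))
    obtain ⟨s2, h2⟩ := ih (fun i => v i.succ) (fun t => h t - |v 0 t|) (fun e => s (Fin.cons false e))
    have key : ∀ e : Fin m → Bool, ∃ t : T × T,
        (h (s1 e) + |v 0 (s1 e)| + ∑ i, sg (e i) * v i.succ (s1 e)) +
        (h (s2 e) - |v 0 (s2 e)| + ∑ i, sg (e i) * v i.succ (s2 e)) ≤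
        (h t.1 + v 0 t.1 + ∑ i, sg (e i) * v i.succ t.1) +
        (h t.2 - v 0 t.2 + ∑ i, sg (e i) * v i.succ t.2) := by
      intro e
      by_cases hc : |v 0 (s1 e)| - |v 0 (s2 e)| ≤ v 0 (s1 e) - v 0 (s2 e)
      · exact ⟨(s1 e, s2 e), by dsimp only; linarith⟩
      · refine ⟨(s2 e, s1 e), ?_⟩
        have := abs_abs_sub_abs_le_abs_sub (v 0 (s1 e)) (v 0 (s2 e))
        have h3 := le_abs_self (|v 0 (s1 e)| - |v 0 (s2 e)|)
        dsimp only
        rcases abs_cases (v 0 (s1 e) - v 0 (s2 e)) with h4 | h4 <;> linarith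
    choose t ht using key
    refine ⟨fun e => if e 0 then (t (Fin.tail e)).1 else (t (Fin.tail e)).2, ?_⟩
    rw [sum_cons, sum_cons]
    simp only [Fin.sum_univ_succ, Fin.cons_zero, Fin.cons_succ, Fin.tail_cons]
    have h5 := Finset.sum_le_sum (fun e (_ : e ∈ Finset.univ) => ht e)
    rw [Finset.sum_add_distrib] at h5
    refine le_trans (le_of_eq ?_) ((add_le_add h1 h2).trans (h5.trans (le_of_eq ?_)))
    · rw [← Finset.sum_add_distrib]
      refine Finset.sum_congr rfl fun e _ => ?_
      simp [sg]; ring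
    · refine Finset.sum_congr rfl fun e _ => ?_
      simp [sg]; ring

lemma mom2 (N : ℕ) : ∀ u : Fin N → ℝ,
    ∑ a : Fin N → Bool, (∑ j, sg (a j) * u j) ^ 2 = 2 ^ N * ∑ j, u j ^ 2 := by
  induction N with
  | zero => intro u; simp
  | succ N ih =>
    intro u
    rw [sum_cons]
    simp only [Fin.sum_univ_succ, Fin.cons_zero, Fin.cons_succ]
    have := ih (fun j => u j.succ)
    have h2 : ∀ a : Fin N → Bool, (sg true * u 0 + ∑ j, sg (a j) * u j.succ) ^ 2 +
      (sg false * u 0 + ∑ j, sg (a j) * u j.succ) ^ 2 =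
        2 * (∑ j, sg (a j) * u j.succ) ^ 2 + 2 * u 0 ^ 2 := by
      intro a; simp [sg]; ring
    rw [Finset.sum_congr rfl fun a _ => h2 a, Finset.sum_add_distrib, ← Finset.mul_sum, this]
    simp; ring

lemma mom4 (N : ℕ) : ∀ u : Fin N → ℝ,
    ∑ a : Fin N → Bool, (∑ j, sg (a j) * u j) ^ 4 ≤ 3 * 2 ^ N * (∑ j, u j ^ 2) ^ 2 := by
  induction N with
  | zero => intro u; simp
  | succ N ih =>
    intro u
    rw [sum_cons]
    simp only [Fin.sum_univ_succ, Fin.cons_zero, Fin.cons_succ]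
    have := ih (fun j => u j.succ)
    have h2 : ∀ a : Fin N → Bool, (sg true * u 0 + ∑ j, sg (a j) * u j.succ) ^ 4 +
      (sg false * u 0 + ∑ j, sg (a j) * u j.succ) ^ 4 =
        2 * (∑ j, sg (a j) * u j.succ) ^ 4 + 12 * u 0 ^ 2 * (∑ j, sg (a j) * u j.succ) ^ 2
          + 2 * u 0 ^ 4 := by
      intro a; simp [sg]; ring
    rw [Finset.sum_congr rfl fun a _ => h2 a, Finset.sum_add_distrib, Finset.sum_add_distrib,
      ← Finset.mul_sum, ← Finset.mul_sum, mom2 N (fun j => u j.succ)]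
    simp
    have h3 : 0 ≤ (2:ℝ) ^ N * u 0 ^ 4 := by positivity
    rw [pow_succ (2:ℝ) N]
    nlinarith

lemma khin_low (N : ℕ) (u : Fin N → ℝ) :
    5 / 9 * 2 ^ N * Real.sqrt (∑ j, u j ^ 2) ≤ ∑ a : Fin N → Bool, |∑ j, sg (a j) * u j| := by
  set Q := ∑ j, u j ^ 2 with hQ
  have hQ0 : 0 ≤ Q := Finset.sum_nonneg fun j _ => sq_nonneg _
  rcases hQ0.eq_or_lt with h0 | h0
  · rw [← h0]; simp
    exact Finset.sum_nonneg fun j _ => abs_nonneg _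
  set r := Real.sqrt Q with hr
  have hr0 : 0 < r := Real.sqrt_pos.2 h0
  have hrQ : r ^ 2 = Q := Real.sq_sqrt hQ0
  have key : ∀ s : ℝ, s ^ 2 * r ^ 2 - 4 / 27 * s ^ 4 ≤ |s| * r ^ 3 := by
    intro s
    rw [← sq_abs s, show s ^ 4 = |s| ^ 4 from (Even.pow_abs (by decide) s).symm]
    have ht := abs_nonneg s
    generalize |s| = t at *
    have : 0 ≤ t * ((2 * t - 3 * r) ^ 2 * (t + 3 * r)) := by positivity
    nlinarith
  have h := Finset.sum_le_sum (fun (a : Fin N → Bool) (_ : a ∈ Finset.univ) =>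
    key (∑ j, sg (a j) * u j))
  rw [Finset.sum_sub_distrib, ← Finset.sum_mul, ← Finset.sum_mul, ← Finset.mul_sum, mom2] at h
  have h4 := mom4 N u
  rw [← hQ, ← hrQ] at h h4
  have : (5 / 9 * 2 ^ N * r) * r ^ 3 ≤ (∑ a : Fin N → Bool, |∑ j, sg (a j) * u j|) * r ^ 3 := by
    nlinarith
  exact le_of_mul_le_mul_right this (by positivity)

lemma mgf (m : ℕ) (l : ℝ) : ∀ w : Fin m → ℝ, (∀ i, w i ^ 2 = 1) →
    ∑ e : Fin m → Bool, Real.exp (l * ∑ i, sg (e i) * w i) ≤ 2 ^ m * Real.exp (m * (l ^ 2 / 2)) := by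
  induction m with
  | zero => intro w hw; simp
  | succ m ih =>
    intro w hw
    rw [sum_cons]
    simp only [Fin.sum_univ_succ, Fin.cons_zero, Fin.cons_succ]
    have := ih (fun j => w j.succ) (fun i => hw _)
    have h2 : ∀ e : Fin m → Bool, Real.exp (l * (sg true * w 0 + ∑ i, sg (e i) * w i.succ)) +
      Real.exp (l * (sg false * w 0 + ∑ i, sg (e i) * w i.succ)) =
        (2 * Real.cosh (l * w 0)) * Real.exp (l * ∑ i, sg (e i) * w i.succ) := by
      intro e
      rw [Real.cosh_eq, mul_add, mul_add, Real.exp_add, Real.exp_add]; simp [sg]; ring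
    rw [Finset.sum_congr rfl fun a _ => h2 a, ← Finset.mul_sum]
    have h3 := Real.cosh_le_exp_half_sq (l * w 0)
    rw [mul_pow, hw, mul_one] at h3
    calc _ ≤ (2 * Real.exp (l ^ 2 / 2)) * (2 ^ m * Real.exp (m * (l ^ 2 / 2))) := by gcongr
      _ = _ := by
        rw [show ((m+1 : ℕ) : ℝ) * (l ^ 2 / 2) = l ^ 2 / 2 + m * (l ^ 2 / 2) by push_cast; ring,
          Real.exp_add]; ring

/-- q-th moment -/
lemma khin_up (m : ℕ) (hm : 1 ≤ m) (q : ℝ) (hq : 1 ≤ q) (w : Fin m → ℝ) (hw : ∀ i, w i ^ 2 = 1) :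
    ∑ e : Fin m → Bool, |∑ i, sg (e i) * w i| ^ q ≤
      2 ^ m * (2 * Real.sqrt (Real.exp 1 * (q * m))) ^ q := by
  have hm0 : (0:ℝ) < m := by exact_mod_cast hm
  have hq0 : 0 < q := by linarith
  set l := Real.sqrt (q / m) with hl
  have hl0 : 0 < l := Real.sqrt_pos.2 (by positivity)
  have hl2 : l ^ 2 = q / m := Real.sq_sqrt (by positivity)
  have key : ∀ s : ℝ, |s| ^ q ≤ (q / l) ^ q * (Real.exp (l * s) + Real.exp ((-l) * s)) := by
    intro s
    have h1 : |s| ≤ (q / l) * Real.exp (l * |s| / q) := by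
      have := Real.add_one_le_exp (l * |s| / q)
      calc |s| = (q / l) * (l * |s| / q) := by field_simp
        _ ≤ _ := by gcongr; linarith
    calc |s| ^ q ≤ ((q / l) * Real.exp (l * |s| / q)) ^ q :=
          Real.rpow_le_rpow (abs_nonneg _) h1 hq0.le
      _ = (q / l) ^ q * Real.exp (l * |s|) := by
          rw [Real.mul_rpow (by positivity) (by positivity), ← Real.exp_mul]
          congr 2; field_simp
      _ ≤ _ := by
          gcongr
          rcases abs_cases s with h | h <;> rw [h.1]
          · linarith [Real.exp_pos (-l * s)]
          · rw [mul_neg, ← neg_mul]; linarith [Real.exp_pos (l * s)]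
  have h := Finset.sum_le_sum (fun (e : Fin m → Bool) (_ : e ∈ Finset.univ) =>
    key (∑ i, sg (e i) * w i))
  rw [← Finset.mul_sum, Finset.sum_add_distrib] at h
  have h1 := mgf m l w hw
  have h2 := mgf m (-l) w hw
  rw [neg_sq] at h2
  have h3 : (m:ℝ) * (l ^ 2 / 2) = q / 2 := by rw [hl2]; field_simp
  rw [h3] at h1 h2
  have h4 : Real.sqrt (Real.exp 1 * (q * m)) = (q / l) * Real.exp (1/2) := by
    rw [Real.sqrt_eq_iff_mul_self_eq (by positivity) (by positivity)]
    rw [show q / l * Real.exp (1 / 2) * (q / l * Real.exp (1 / 2)) =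
      (q ^ 2 / l ^ 2) * (Real.exp (1/2) * Real.exp (1/2)) by ring, ← Real.exp_add, hl2]
    norm_num; field_simp
  refine h.trans ?_
  rw [h4, Real.mul_rpow (by positivity) (by positivity), Real.mul_rpow (by positivity) (by positivity),
    ← Real.exp_mul, show 1 / 2 * q = q / 2 by ring]
  have h5 : (2:ℝ) ≤ 2 ^ q := by
    simpa using Real.rpow_le_rpow_of_exponent_le (by norm_num : (1:ℝ) ≤ 2) hq
  calc _ ≤ (q / l) ^ q * (2 ^ m * Real.exp (q / 2) + 2 ^ m * Real.exp (q / 2)) := by gcongr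
    _ = 2 ^ m * (2 * ((q / l) ^ q * Real.exp (q / 2))) := by ring
    _ ≤ _ := by gcongr

/-- averaged bound for a selection -/
lemma sel_bound (m N : ℕ) (hm : 1 ≤ m) (q : ℝ) (hq : 1 ≤ q) (w : Fin N → ℝ) (hw : ∀ j, 0 ≤ w j)
    (U : Set (Fin N → ℝ))
    (hU : ∀ y ∈ U, ∀ b : Fin N → ℝ, ∑ j, b j * y j ≤ (∑ j, |b j| ^ q * w j) ^ (1 / q))
    (a : Fin m → Fin N → Bool) (s : (Fin m → Bool) → U) :
    ∑ e, ∑ i, sg (e i) * |∑ j, sg (a i j) * (s e).1 j| ≤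
      2 ^ m * (2 * Real.sqrt (Real.exp 1 * (q * m)) * (∑ j, w j) ^ (1 / q)) := by
  have hq0 : 0 < q := by linarith
  obtain ⟨s', hs'⟩ := contraction m (fun i (y : U) => ∑ j, sg (a i j) * y.1 j) (fun _ => 0) s
  simp only [zero_add] at hs'
  refine hs'.trans ?_
  have h1 : ∀ e : Fin m → Bool, ∑ i, sg (e i) * ∑ j, sg (a i j) * (s' e).1 j ≤
      (∑ j, |∑ i, sg (e i) * sg (a i j)| ^ q * w j) ^ (1 / q) := by
    intro e
    refine le_trans (le_of_eq ?_) (hU _ (s' e).2 _)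
    simp only [Finset.mul_sum, Finset.sum_mul]
    rw [Finset.sum_comm]
    refine Finset.sum_congr rfl fun j _ => Finset.sum_congr rfl fun i _ => by ring
  refine (Finset.sum_le_sum fun e _ => h1 e).trans ?_
  set Y : (Fin m → Bool) → ℝ := fun e => ∑ j, |∑ i, sg (e i) * sg (a i j)| ^ q * w j with hY
  have hY0 : ∀ e, 0 ≤ Y e := fun e => Finset.sum_nonneg fun j _ => by
    have := hw j; positivity
  have h2 := Real.arith_mean_le_rpow_mean Finset.univ (fun _ : Fin m → Bool => ((2:ℝ) ^ m)⁻¹)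
    (fun e => Y e ^ (1 / q)) (fun _ _ => by positivity) (by simp)
    (fun e _ => by have := hY0 e; positivity) hq
  rw [← Finset.mul_sum, ← Finset.mul_sum] at h2
  have h3 : ∑ e, (Y e ^ (1 / q)) ^ q = ∑ e, Y e := Finset.sum_congr rfl fun e _ => by
    rw [← Real.rpow_mul (hY0 e), one_div_mul_cancel hq0.ne', Real.rpow_one]
  rw [h3] at h2
  set K := 2 * Real.sqrt (Real.exp 1 * (q * m)) with hK
  have hK0 : 0 ≤ K := by positivity
  have hW0 : 0 ≤ ∑ j, w j := Finset.sum_nonneg fun j _ => hw j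
  have h4 : ∑ e, Y e ≤ 2 ^ m * (K ^ q * ∑ j, w j) := by
    rw [hY, Finset.sum_comm, Finset.mul_sum, Finset.mul_sum]
    refine Finset.sum_le_sum fun j _ => ?_
    rw [← Finset.sum_mul]
    have := khin_up m hm q hq (fun i => sg (a i j)) (fun i => sg_sq _)
    nlinarith [mul_le_mul_of_nonneg_right this (hw j)]
  have h5 : (((2:ℝ) ^ m)⁻¹ * ∑ e, Y e) ^ (1 / q) ≤ K * (∑ j, w j) ^ (1 / q) := by
    calc _ ≤ (K ^ q * ∑ j, w j) ^ (1 / q) := by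
          have : 0 ≤ ∑ e, Y e := Finset.sum_nonneg fun e _ => hY0 e
          apply Real.rpow_le_rpow (by positivity) _ (by positivity)
          rw [inv_mul_le_iff₀ (by positivity)]; exact h4
      _ = _ := by
          rw [Real.mul_rpow (by positivity) hW0, ← Real.rpow_mul hK0, mul_one_div_cancel hq0.ne',
            Real.rpow_one]
  have h6 := h2.trans h5
  rwa [inv_mul_le_iff₀ (by positivity)] at h6

def swp {m : ℕ} {R : Type*} (e : Fin m → Bool) (x : (Fin m → R) × (Fin m → R)) :
    (Fin m → R) × (Fin m → R) :=
  (fun i => if e i then x.1 i else x.2 i, fun i => if e i then x.2 i else x.1 i)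

lemma swp_invol {m : ℕ} {R : Type*} (e : Fin m → Bool) :
    Function.Involutive (swp (R := R) e) := by
  intro x
  ext i <;> by_cases h : e i <;> simp [swp, h]

lemma neg_sum {m : ℕ} (F : (Fin m → Bool) → ℝ) : ∑ e, F e = ∑ e : Fin m → Bool, F (fun i => !(e i)) := by
  have hi : Function.Involutive (fun (e : Fin m → Bool) i => !(e i)) := by
    intro e; simp
  exact (Equiv.sum_comp hi.toPerm F).symm

lemma coord_sum {m : ℕ} {R : Type*} [Fintype R] (i : Fin m) (G : R → ℝ) :
    (Fintype.card R : ℝ) * ∑ a : Fin m → R, G (a i) = (Fintype.card (Fin m → R) : ℝ) * ∑ r, G r := by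
  classical
  have h1 : ∑ a : Fin m → R, G (a i) =
      ∑ x : R × ({j : Fin m // j ≠ i} → R), G x.1 := by
    rw [← Equiv.sum_comp (Equiv.funSplitAt i R)]
    rfl
  rw [h1, Fintype.card_congr (Equiv.funSplitAt i R), Fintype.sum_prod_type, Fintype.card_prod]
  simp only [Finset.sum_const, Finset.card_univ, nsmul_eq_mul, Nat.cast_mul]
  rw [← Finset.mul_sum]; ring

lemma core (m N : ℕ) (hm : 1 ≤ m) (q : ℝ) (hq : 1 ≤ q) (w : Fin N → ℝ) (hw : ∀ j, 0 ≤ w j)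
    (U : Set (Fin N → ℝ))
    (hU : ∀ y ∈ U, ∀ b : Fin N → ℝ, ∑ j, b j * y j ≤ (∑ j, |b j| ^ q * w j) ^ (1 / q)) :
    ∃ a : Fin m → Fin N → ℝ, ∀ y ∈ U, (∀ i, ∑ j, a i j * y j = 0) →
      Real.sqrt (∑ j, y j ^ 2) ≤ 12 * Real.sqrt (q / m) * (∑ j, w j) ^ (1 / q) := by
  by_contra hcon
  push Not at hcon
  set R := 12 * Real.sqrt (q / m) * (∑ j, w j) ^ (1 / q) with hR
  have hm0 : (0:ℝ) < m := by exact_mod_cast hm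
  have hq0 : 0 < q := by linarith
  choose u huU hu0 huR using fun a : Fin m → Fin N → Bool => hcon (fun i j => sg (a i j))
  let g : (Fin N → ℝ) → (Fin N → Bool) → ℝ := fun y r => |∑ j, sg (r j) * y j|
  let A := Fin m → Fin N → Bool
  let F : A × A → ℝ := fun x => ∑ i, (g (u x.1) (x.2 i) - g (u x.1) (x.1 i))
  set P : ℝ := (Fintype.card A : ℝ) with hP
  have hPpos : 0 < P := by
    rw [hP]; exact_mod_cast Fintype.card_pos
  -- lower bound
  have hlow : P * P * (m * (5 / 9 * R)) < ∑ x, F x := by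
    rw [Fintype.sum_prod_type]
    have h1 : ∀ a : A, P * (m * (5 / 9 * R)) < ∑ a' : A, F (a, a') := by
      intro a
      have h2 : ∀ a' : A, F (a, a') = ∑ i, g (u a) (a' i) := by
        intro a'
        refine Finset.sum_congr rfl fun i _ => ?_
        have := hu0 a i
        simp only [g]
        rw [this]; simp
      rw [Finset.sum_congr rfl fun a' _ => h2 a', Finset.sum_comm]
      have h3 : ∀ i : Fin m, P * (5 / 9 * R) < ∑ a' : A, g (u a) (a' i) := by
        intro i
        have h4 : (2:ℝ) ^ N * ∑ a' : A, g (u a) (a' i) = P * ∑ r, g (u a) r := by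
          have h5 := coord_sum i (g (u a))
          rw [show (Fintype.card (Fin N → Bool) : ℝ) = 2 ^ N by simp] at h5
          exact h5
        have h5 := khin_low N (u a)
        have h6 : 5 / 9 * 2 ^ N * R < ∑ r, g (u a) r :=
          lt_of_lt_of_le (by gcongr; exact huR a) h5
        have h7 : (2:ℝ) ^ N * (P * (5 / 9 * R)) < 2 ^ N * ∑ a' : A, g (u a) (a' i) := by
          rw [h4]; nlinarith
        exact lt_of_mul_lt_mul_left h7 (by positivity)
      have : Nonempty (Fin m) := ⟨⟨0, hm⟩⟩
      have h8 := Finset.sum_lt_sum_of_nonempty (Finset.univ_nonempty (α := Fin m)) (fun i _ => h3 i)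
      simp only [Finset.sum_const, Finset.card_univ, Fintype.card_fin, nsmul_eq_mul] at h8
      linarith
    have h9 := Finset.sum_lt_sum_of_nonempty (Finset.univ_nonempty (α := A)) (fun a _ => h1 a)
    simp only [Finset.sum_const, Finset.card_univ, nsmul_eq_mul] at h9
    rw [← hP] at h9
    linarith
  -- upper bound
  set Z := 2 * Real.sqrt (Real.exp 1 * (q * m)) * (∑ j, w j) ^ (1 / q) with hZ
  have hup : 2 ^ m * ∑ x, F x ≤ P * P * (2 ^ m * Z + 2 ^ m * Z) := by
    have h1 : ∀ e : Fin m → Bool, ∑ x, F x = ∑ x, F (swp e x) := fun e =>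
      (Equiv.sum_comp (swp_invol e).toPerm F).symm
    have h2 : (2:ℝ) ^ m * ∑ x, F x = ∑ e : Fin m → Bool, ∑ x, F (swp e x) := by
      rw [← Finset.sum_congr rfl fun e _ => h1 e]
      simp
    have h3 : ∀ x : A × A, ∑ e : Fin m → Bool, F (swp e x) ≤ 2 ^ m * Z + 2 ^ m * Z := by
      intro x
      have h4 := sel_bound m N hm q hq w hw U hU x.2 (fun e => ⟨u (swp e x).1, huU _⟩)
      have h5 := sel_bound m N hm q hq w hw U hU x.1
        (fun e => ⟨u (swp (fun i => !(e i)) x).1, huU _⟩)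
      rw [neg_sum] at h5
      refine le_trans (le_of_eq ?_) (add_le_add h4 h5)
      rw [← Finset.sum_add_distrib]
      refine Finset.sum_congr rfl fun e _ => ?_
      rw [← Finset.sum_add_distrib]
      refine Finset.sum_congr rfl fun i _ => ?_
      simp only [Bool.not_not]
      by_cases h : e i <;> simp [swp, h, g, sg] <;> ring
    rw [h2, Finset.sum_comm]
    refine (Finset.sum_le_sum fun x _ => h3 x).trans (le_of_eq ?_)
    simp only [Finset.sum_const, Finset.card_univ, nsmul_eq_mul, Fintype.card_prod, Nat.cast_mul]
    rw [hP]
  have h2m : (0:ℝ) < 2 ^ m := by positivity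
  have hup2 : ∑ x, F x ≤ P * P * (2 * Z) := by
    refine le_of_mul_le_mul_left (hup.trans (le_of_eq ?_)) h2m
    ring
  have hlt : m * (5 / 9 * R) < 2 * Z :=
    lt_of_mul_lt_mul_left (hlow.trans_le hup2) (by positivity)
  have hW0 : 0 ≤ (∑ j, w j) ^ (1 / q) := Real.rpow_nonneg (Finset.sum_nonneg fun j _ => hw j) _
  have hs : Real.sqrt (Real.exp 1 * (q * m)) ≤ 5 / 3 * (m * Real.sqrt (q / m)) := by
    rw [Real.sqrt_le_left (by positivity), mul_pow, mul_pow, Real.sq_sqrt (by positivity)]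
    have := Real.exp_one_lt_d9
    have h9 : (m:ℝ) ^ 2 * (q / m) = q * m := by field_simp
    rw [h9]
    have : 0 < q * m := by positivity
    nlinarith
  have : 2 * Z ≤ m * (5 / 9 * R) := by
    rw [hZ, hR]
    nlinarith [mul_le_mul_of_nonneg_right hs hW0]
  linarith

lemma pstar_ge (p : ℝ≥0∞) (hp : 1 < p) : 1 ≤ pstar p := by
  unfold pstar
  by_cases h : p = ⊤
  · subst h; simp
  · have h1 : 1 < p.toReal := by
      have := (ENNReal.toReal_lt_toReal (by simp) h).2 hp
      simpa using this
    have h2 : 1 / p.toReal < 1 := by rw [div_lt_one (by linarith)]; exact h1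
    have h3 : 0 < 1 / p.toReal := by positivity
    rw [one_le_inv₀ (by linarith)]; linarith

lemma holder (p : ℝ≥0∞) (hp : 1 < p) (x : lp (fun _ : ℕ => ℝ) p) (hx : ‖x‖ ≤ 1)
    {ι : Type*} [Fintype ι] (φ : ι ↪ ℕ) (b : ι → ℝ) :
    ∑ j, b j * x (φ j) ≤ (∑ j, |b j| ^ pstar p) ^ (1 / pstar p) := by
  by_cases h : p = ⊤
  · subst h
    have : pstar ⊤ = 1 := by simp [pstar]
    rw [this]
    simp only [Real.rpow_one, div_one]
    refine Finset.sum_le_sum fun j _ => ?_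
    have h1 := (lp.norm_apply_le_norm (by simp) x (φ j)).trans hx
    rw [Real.norm_eq_abs] at h1
    calc b j * x (φ j) ≤ |b j * x (φ j)| := le_abs_self _
      _ = |b j| * |x (φ j)| := abs_mul _ _
      _ ≤ |b j| * 1 := by gcongr
      _ = _ := mul_one _
  · have h1 : 1 < p.toReal := by
      have := (ENNReal.toReal_lt_toReal (by simp) h).2 hp
      simpa using this
    have hc : (pstar p).HolderConjugate p.toReal := by
      refine Real.HolderConjugate.symm (Real.holderConjugate_iff.2 ⟨h1, ?_⟩)
      simp [pstar]
    have h2 := Real.inner_le_Lp_mul_Lq Finset.univ b (fun j => x (φ j)) hc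
    refine h2.trans ?_
    have h3 : ∑ j, |x (φ j)| ^ p.toReal ≤ 1 := by
      have h4 := lp.sum_rpow_le_norm_rpow (by linarith) x (Finset.univ.map φ)
      rw [Finset.sum_map] at h4
      refine h4.trans (Real.rpow_le_one (lp.norm_nonneg' x) hx (by linarith))
    have h5 : 0 ≤ ∑ j, |x (φ j)| ^ p.toReal := Finset.sum_nonneg fun j _ => by positivity
    have h6 : 0 ≤ ∑ j, |b j| ^ pstar p := Finset.sum_nonneg fun j _ => by positivity
    exact mul_le_of_le_one_right (by positivity) (Real.rpow_le_one h5 h3 (by positivity))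

def shiftEmb (K N : ℕ) : Fin N ↪ ℕ := ⟨fun j => j + K, fun a b h => by ext; simpa using h⟩

lemma holder2 (p : ℝ≥0∞) (hp : 1 < p) (σ : ℕ → ℝ) (h0 : ∀ j, 0 ≤ σ j)
    (x : lp (fun _ : ℕ => ℝ) p) (hx : ‖x‖ ≤ 1) (K N : ℕ) (b : Fin N → ℝ) :
    ∑ j : Fin N, b j * (σ (j + K) * x (j + K)) ≤
      (∑ j : Fin N, |b j| ^ pstar p * σ (j + K) ^ pstar p) ^ (1 / pstar p) := by
  have := holder p hp x hx (shiftEmb K N) (fun j => b j * σ (j + K))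
  refine le_trans (le_of_eq ?_) (this.trans (le_of_eq ?_))
  · exact Finset.sum_congr rfl fun j _ => by
      change _ = b j * σ (j + K) * x (j + K)
      ring
  · congr 1
    refine Finset.sum_congr rfl fun j _ => ?_
    rw [abs_mul, Real.mul_rpow (abs_nonneg _) (abs_nonneg _), abs_of_nonneg (h0 _)]

lemma tail_bd (p : ℝ≥0∞) (hp : 1 < p) (σ : ℕ → ℝ) (h0 : ∀ j, 0 ≤ σ j)
    (hs : Summable (fun j => σ j ^ pstar p))
    (x : lp (fun _ : ℕ => ℝ) p) (hx : ‖x‖ ≤ 1) (K : ℕ) :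
    Summable (fun j => (σ (j + K) * x (j + K)) ^ 2) ∧
    Real.sqrt (∑' j, (σ (j + K) * x (j + K)) ^ 2) ≤
      (∑' j, σ (j + K) ^ pstar p) ^ (1 / pstar p) := by
  have hq := pstar_ge p hp
  set q := pstar p with hqdef
  have hW : 0 ≤ ∑' j, σ (j + K) ^ q := tsum_nonneg fun j => Real.rpow_nonneg (h0 _) _
  have key : ∀ N, ∑ j ∈ Finset.range N, (σ (j + K) * x (j + K)) ^ 2 ≤
      ((∑' j, σ (j + K) ^ q) ^ (1 / q)) ^ 2 := by
    intro N
    have h1 := holder2 p hp σ h0 x hx K N (fun j => SignType.sign (x (j + K)))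
    have h2 : ∑ j : Fin N, |((SignType.sign (x (j + K)) : SignType) : ℝ)| ^ q * σ (j + K) ^ q ≤
        ∑' j, σ (j + K) ^ q := by
      have h3 : ∑ j ∈ Finset.range N, σ (j + K) ^ q ≤ ∑' j, σ (j + K) ^ q :=
        Summable.sum_le_tsum _ (fun j _ => Real.rpow_nonneg (h0 _) _)
          ((summable_nat_add_iff K).2 hs)
      rw [← Fin.sum_univ_eq_sum_range (fun j => σ (j + K) ^ q)] at h3
      refine le_trans (Finset.sum_le_sum fun j _ => ?_) h3
      refine mul_le_of_le_one_left (Real.rpow_nonneg (h0 _) _) ?_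
      refine Real.rpow_le_one (abs_nonneg _) ?_ (by linarith)
      rcases SignType.sign (x (j + K)) with _ | _ | _ <;> simp
    have h4 : ∑ j : Fin N, |σ (j + K) * x (j + K)| ≤ (∑' j, σ (j + K) ^ q) ^ (1 / q) := by
      refine le_trans (le_of_eq ?_) (h1.trans (Real.rpow_le_rpow
        (Finset.sum_nonneg fun j _ => mul_nonneg (by positivity) (Real.rpow_nonneg (h0 _) _)) h2
        (by positivity)))
      refine Finset.sum_congr rfl fun j _ => ?_
      rw [abs_mul, abs_of_nonneg (h0 _), mul_left_comm, sign_mul_self]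
    rw [← Fin.sum_univ_eq_sum_range (fun j => (σ (j + K) * x (j + K)) ^ 2)]
    calc _ = ∑ j : Fin N, |σ (j + K) * x (j + K)| ^ 2 := by simp only [sq_abs]
      _ ≤ (∑ j : Fin N, |σ (j + K) * x (j + K)|) ^ 2 :=
          Finset.sum_sq_le_sq_sum_of_nonneg fun j _ => abs_nonneg _
      _ ≤ _ := by gcongr
  refine ⟨summable_of_sum_range_le (fun _ => sq_nonneg _) key, ?_⟩
  refine Real.sqrt_le_iff.2 ⟨by positivity, Real.tsum_le_of_sum_range_le (fun _ => sq_nonneg _) key⟩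

lemma gel_le (p : ℝ≥0∞) (hp : 1 < p) (σ : ℕ → ℝ) (n M : ℕ) (c : ℕ → ℕ → ℝ) (t : ℝ) (ht0 : 0 ≤ t)
    (ht : ∀ x : lp (fun _ : ℕ => ℝ) p, ‖x‖ ≤ 1 →
      (∀ i < n - 1, ∑ j ∈ Finset.range M, c i j * x j = 0) →
      Real.sqrt (∑' j, (σ j * x j) ^ 2) ≤ t) : gelfandSeq p σ n ≤ t := by
  have hp0 : p ≠ 0 := (lt_trans zero_lt_one hp).ne'
  have : Fact (1 ≤ p) := ⟨hp.le⟩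
  let f : (lp (fun _ : ℕ => ℝ) p) →ₗ[ℝ] (Fin (n - 1) → ℝ) :=
    { toFun := fun x i => ∑ j ∈ Finset.range M, c i j * x j
      map_add' := by
        intro x y; ext i
        simp [mul_add, Finset.sum_add_distrib]
      map_smul' := by
        intro r x; ext i
        simp only [lp.coeFn_smul, Pi.smul_apply, smul_eq_mul, RingHom.id_apply, Finset.mul_sum]
        exact Finset.sum_congr rfl fun j _ => by ring }
  have hf : ∀ x i, f x i = ∑ j ∈ Finset.range M, c i j * x j := fun x i => rfl
  unfold gelfandSeq
  refine csInf_le_of_le ⟨0, ?_⟩ ⟨f, ?_, rfl⟩ ?_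
  · rintro _ ⟨g, _, rfl⟩
    refine Real.sSup_nonneg ?_
    rintro _ ⟨x, _, rfl⟩
    exact Real.sqrt_nonneg _
  · intro x hx
    ext i
    set B := ∑ j ∈ Finset.range M, |c i j| with hB
    have hB0 : 0 ≤ B := Finset.sum_nonneg fun j _ => abs_nonneg _
    have hb : ∀ z : lp (fun _ : ℕ => ℝ) p, |f z i| ≤ B * ‖z‖ := by
      intro z
      rw [hf, hB, Finset.sum_mul]
      refine (Finset.abs_sum_le_sum_abs _ _).trans (Finset.sum_le_sum fun j _ => ?_)
      rw [abs_mul]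
      exact mul_le_mul_of_nonneg_left (lp.norm_apply_le_norm hp0 z j) (abs_nonneg _)
    by_contra hne
    have hpos : 0 < |f x i| := abs_pos.2 hne
    obtain ⟨y, hy, hxy⟩ := hx (|f x i| / (B + 1)) (by positivity)
    have h1 := hb (x - y)
    rw [map_sub, hy, sub_zero] at h1
    rw [lt_div_iff₀ (by positivity)] at hxy
    have : 0 ≤ ‖x - y‖ := norm_nonneg _
    nlinarith
  · refine Real.sSup_le ?_ ht0
    rintro _ ⟨x, ⟨hx1, hx2⟩, rfl⟩
    refine ht x hx1 fun i hi => ?_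
    have := congrFun hx2 ⟨i, hi⟩
    exact this

lemma sqrt_add_le' {a b : ℝ} (ha : 0 ≤ a) (hb : 0 ≤ b) :
    Real.sqrt (a + b) ≤ Real.sqrt a + Real.sqrt b := by
  rw [Real.sqrt_le_left (by positivity), add_sq, Real.sq_sqrt ha, Real.sq_sqrt hb]
  have : 0 ≤ 2 * Real.sqrt a * Real.sqrt b := by positivity
  linarith

lemma main_bd (p : ℝ≥0∞) (hp : 1 < p) (σ : ℕ → ℝ) (h0 : ∀ j, 0 ≤ σ j)
    (hs : Summable (fun j => σ j ^ pstar p)) (n K m : ℕ) (hm : 1 ≤ m) (hn : n - 1 = K + m) :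
    gelfandSeq p σ n ≤ 12 * Real.sqrt (pstar p / m) *
      (∑' j, σ (j + K) ^ pstar p) ^ (1 / pstar p) := by
  have hq := pstar_ge p hp
  have hq0 : 0 < pstar p := by linarith
  refine le_of_forall_pos_le_add fun ε hε => ?_
  have hW : 0 ≤ ∑' j, σ (j + K) ^ pstar p := tsum_nonneg fun j => Real.rpow_nonneg (h0 _) _
  have hlim := tendsto_sum_nat_add (fun j => σ j ^ pstar p)
  have hev := (hlim.comp (Filter.tendsto_add_atTop_nat K)).eventually
    (gt_mem_nhds (show 0 < ε ^ pstar p by positivity))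
  obtain ⟨N, hN⟩ := hev.exists
  simp only [Function.comp] at hN
  obtain ⟨a, ha⟩ := core m N hm (pstar p) hq (fun j => σ (j + K) ^ pstar p)
    (fun j => Real.rpow_nonneg (h0 _) _)
    {y | ∃ x : lp (fun _ : ℕ => ℝ) p, ‖x‖ ≤ 1 ∧ ∀ j : Fin N, y j = σ (j + K) * x (j + K)}
    (by
      rintro y ⟨x, hx, hy⟩ b
      simp only [hy]
      exact holder2 p hp σ h0 x hx K N b)
  let a' : ℕ → ℕ → ℝ := fun i j => if h : i < m ∧ j < N then a ⟨i, h.1⟩ ⟨j, h.2⟩ else 0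
  have ha' : ∀ (i : Fin m) (j : Fin N), a' i j = a i j := fun i j => by simp [a']
  refine gel_le p hp σ n (N + K) (fun i j => if i < K then (if j = i then 1 else 0) else
    if j < K then 0 else a' (i - K) (j - K) * σ j) _ (by positivity) ?_
  intro x hx hker
  have hx0 : ∀ i < K, x i = 0 := by
    intro i hi
    have := hker i (by omega)
    simp only [hi, if_true] at this
    simp only [ite_mul, one_mul, zero_mul, Finset.sum_ite_eq', Finset.mem_range] at this
    rwa [if_pos (by omega)] at this
  have hx1 : ∀ i : Fin m, ∑ j : Fin N, a i j * (σ (j + K) * x (j + K)) = 0 := by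
    intro i
    have := hker (K + i) (by omega)
    rw [add_comm N K, Finset.sum_range_add] at this
    rw [Finset.sum_eq_zero (fun j hj => by
      rw [hx0 j (Finset.mem_range.1 hj), mul_zero]), zero_add] at this
    rw [← this, ← Fin.sum_univ_eq_sum_range (fun j => (if K + (i:ℕ) < K then (if K + j = K + i then (1:ℝ) else 0) else
      if K + j < K then 0 else a' (K + i - K) (K + j - K) * σ (K + j)) * x (K + j))]
    refine Finset.sum_congr rfl fun j _ => ?_
    simp [ha', add_comm K]; ring
  have h1 := ha _ ⟨x, hx, fun j => rfl⟩ hx1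
  obtain ⟨hsum, -⟩ := tail_bd p hp σ h0 hs x hx 0
  simp only [add_zero] at hsum
  obtain ⟨-, htail⟩ := tail_bd p hp σ h0 hs x hx (N + K)
  rw [← hsum.sum_add_tsum_nat_add (N + K)]
  have h2 : ∑ j ∈ Finset.range (N + K), (σ j * x j) ^ 2 =
      ∑ j : Fin N, (σ (j + K) * x (j + K)) ^ 2 := by
    rw [add_comm N K, Finset.sum_range_add, Finset.sum_eq_zero (fun j hj => by
      rw [hx0 j (Finset.mem_range.1 hj)]; simp), zero_add,
      ← Fin.sum_univ_eq_sum_range (fun j => (σ (K + j) * x (K + j)) ^ 2)]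
    simp only [add_comm K]
  rw [h2]
  refine (sqrt_add_le'
    (Finset.sum_nonneg fun j _ => sq_nonneg _) (tsum_nonneg fun j => sq_nonneg _)).trans ?_
  refine add_le_add (h1.trans ?_) (htail.trans ?_)
  · have h3 : ∑ j : Fin N, σ (j + K) ^ pstar p ≤ ∑' j, σ (j + K) ^ pstar p := by
      rw [Fin.sum_univ_eq_sum_range (fun j => σ (j + K) ^ pstar p)]
      exact Summable.sum_le_tsum _ (fun j _ => Real.rpow_nonneg (h0 _) _)
          ((summable_nat_add_iff K).2 hs)
    have h4 : 0 ≤ ∑ j : Fin N, σ (j + K) ^ pstar p :=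
      Finset.sum_nonneg fun j _ => Real.rpow_nonneg (h0 _) _
    gcongr
  · have h5 : 0 ≤ ∑' j, σ (j + (N + K)) ^ pstar p := tsum_nonneg fun j => Real.rpow_nonneg (h0 _) _
    calc _ ≤ (ε ^ pstar p) ^ (1 / pstar p) := Real.rpow_le_rpow h5 hN.le (by positivity)
      _ = ε := by rw [← Real.rpow_mul hε.le, mul_one_div_cancel hq0.ne', Real.rpow_one]

lemma stat_bd (p : ℝ≥0∞) (hp : 1 < p) (σ : ℕ → ℝ) (h0 : ∀ j, 0 ≤ σ j)
    (hs : Summable (fun j => σ j ^ pstar p)) (n : ℕ) (hn : 1 ≤ n) :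
    gelfandSeq p σ n ≤
            24 * Real.sqrt (pstar p) * (n : ℝ) ^ (-(1 / 2 : ℝ)) *
              (∑' j : ℕ, if max 1 ⌈(1/4 : ℝ) * n / pstar p⌉₊ ≤ j + 1 then σ j ^ pstar p else 0) ^
                (1 / pstar p) := by
  have hq := pstar_ge p hp
  have hq0 : 0 < pstar p := by linarith
  have hn0 : (0:ℝ) < n := by exact_mod_cast hn
  obtain ⟨K, hK⟩ : ∃ K, max 1 ⌈(1/4 : ℝ) * n / pstar p⌉₊ = K + 1 :=
    ⟨max 1 ⌈(1/4 : ℝ) * n / pstar p⌉₊ - 1, by omega⟩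
  have hKn : 4 * K ≤ n := by
    rcases le_or_gt ⌈(1/4 : ℝ) * n / pstar p⌉₊ 1 with h | h
    · have : K = 0 := by omega
      omega
    · have h1 : ⌈(1/4 : ℝ) * n / pstar p⌉₊ = K + 1 := by omega
      have h2 := Nat.ceil_lt_add_one (show 0 ≤ (1/4 : ℝ) * n / pstar p by positivity)
      rw [h1] at h2
      have h3 : (1/4 : ℝ) * n / pstar p ≤ 1/4 * n := div_le_self (by positivity) hq
      push_cast at h2
      have : (4:ℝ) * K ≤ n := by linarith
      exact_mod_cast this
  have hsum : (∑' j : ℕ, if max 1 ⌈(1/4 : ℝ) * n / pstar p⌉₊ ≤ j + 1 then σ j ^ pstar p else 0) =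
      ∑' j, σ (j + K) ^ pstar p := by
    rw [hK]
    have hsm : Summable (fun j => if K + 1 ≤ j + 1 then σ j ^ pstar p else 0) :=
      Summable.of_nonneg_of_le (fun j => by
        split_ifs
        · exact Real.rpow_nonneg (h0 _) _
        · exact le_rfl) (fun j => by
        split_ifs
        · exact le_rfl
        · exact Real.rpow_nonneg (h0 _) _) hs
    rw [← hsm.sum_add_tsum_nat_add K, Finset.sum_eq_zero (fun j hj => by
      rw [if_neg]; have := Finset.mem_range.1 hj; omega), zero_add]
    simp
  rw [hsum]
  have hW : 0 ≤ ∑' j, σ (j + K) ^ pstar p := tsum_nonneg fun j => Real.rpow_nonneg (h0 _) _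
  rcases hn.eq_or_lt with h1 | h1
  · subst h1
    have hK0 : K = 0 := by omega
    subst hK0
    refine gel_le p hp σ 1 0 (fun _ _ => 0) _ (by positivity) fun x hx _ => ?_
    obtain ⟨-, h2⟩ := tail_bd p hp σ h0 hs x hx 0
    simp only [add_zero] at h2 hW ⊢
    refine h2.trans (le_mul_of_one_le_left (by positivity) ?_)
    have := Real.one_le_sqrt.2 hq
    simp; linarith
  · refine (main_bd p hp σ h0 hs n K (n - 1 - K) (by omega) (by omega)).trans ?_
    gcongr ?_ * _
    have h4 : (n:ℝ) / 4 ≤ ((n - 1 - K : ℕ) : ℝ) := by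
      have : n ≤ 4 * (n - 1 - K) := by omega
      have : (n:ℝ) ≤ 4 * ((n - 1 - K : ℕ) : ℝ) := by exact_mod_cast this
      linarith
    have h5 : Real.sqrt (pstar p / ((n - 1 - K : ℕ) : ℝ)) ≤ 2 * (Real.sqrt (pstar p) * (n : ℝ) ^ (-(1 / 2 : ℝ))) := by
      rw [Real.rpow_neg hn0.le, ← Real.sqrt_eq_rpow]
      rw [Real.sqrt_le_left (by positivity), mul_pow, mul_pow, inv_pow, Real.sq_sqrt hq0.le,
        Real.sq_sqrt hn0.le]
      calc pstar p / ((n - 1 - K : ℕ) : ℝ) ≤ pstar p / (n / 4) := by gcongr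
        _ = _ := by field_simp; norm_num
    linarith

/-- For `1 < p ≤ ∞` and a non-increasing non-negative sequence
`σ ∈ ℓ_{p*}` (0-indexed: `σ (j-1)` is the paper's `σ_j`), the Gelfand numbers of
`D_σ : ℓ_p → ℓ₂` satisfy
`c_n(D_σ) ≤ C √(p*) n^{-1/2} (∑_{j=k}^∞ σ_j^{p*})^{1/p*}` with `k = max(1, ⌈c n / p*⌉)`;
in particular `sup_n n^{1/2} c_n(D_σ) < ∞`, i.e. `(c_n(D_σ)) ∈ ℓ_{2,∞}`. -/
theorem statement14 :
    ∃ C c : ℝ, 0 < C ∧ 0 < c ∧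
      ∀ (p : ℝ≥0∞), 1 < p →
      ∀ σ : ℕ → ℝ, (∀ j, 0 ≤ σ j) → (∀ i j : ℕ, i ≤ j → σ j ≤ σ i) →
      Summable (fun j => σ j ^ pstar p) →
      (∀ n : ℕ, 1 ≤ n →
          gelfandSeq p σ n ≤
            C * Real.sqrt (pstar p) * (n : ℝ) ^ (-(1 / 2 : ℝ)) *
              (∑' j : ℕ, if max 1 ⌈c * n / pstar p⌉₊ ≤ j + 1 then σ j ^ pstar p else 0) ^
                (1 / pstar p)) ∧
        ∃ B : ℝ, ∀ n : ℕ, 1 ≤ n → (n : ℝ) ^ ((1 : ℝ) / 2) * gelfandSeq p σ n ≤ B := by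
  refine ⟨24, 1 / 4, by norm_num, by norm_num, ?_⟩
  intro p hp σ h0 _ hs
  have hb := fun n hn => stat_bd p hp σ h0 hs n hn
  refine ⟨hb, 24 * Real.sqrt (pstar p) * (∑' j, σ j ^ pstar p) ^ (1 / pstar p), fun n hn => ?_⟩
  have hq := pstar_ge p hp
  have hn0 : (0:ℝ) < n := by exact_mod_cast hn
  have hnn : ∀ j : ℕ, 0 ≤ σ j ^ pstar p := fun j => Real.rpow_nonneg (h0 _) _
  set c : ℕ := max 1 ⌈(1/4 : ℝ) * n / pstar p⌉₊ with hc
  have hle0 : ∀ j : ℕ, 0 ≤ if c ≤ j + 1 then σ j ^ pstar p else 0 := fun j => by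
    split_ifs
    · exact hnn j
    · exact le_rfl
  have hle : ∀ j : ℕ, (if c ≤ j + 1 then σ j ^ pstar p else 0) ≤ σ j ^ pstar p := fun j => by
    split_ifs
    · exact le_rfl
    · exact hnn j
  have hT : (∑' j : ℕ, if c ≤ j + 1 then σ j ^ pstar p else 0) ≤ ∑' j, σ j ^ pstar p :=
    Summable.tsum_le_tsum hle (Summable.of_nonneg_of_le hle0 hle hs) hs
  have hT2 := Real.rpow_le_rpow (tsum_nonneg hle0) hT (show 0 ≤ 1 / pstar p by positivity)
  have hone : (n : ℝ) ^ ((1 : ℝ) / 2) * (n : ℝ) ^ (-(1 / 2 : ℝ)) = 1 := by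
    rw [← Real.rpow_add hn0]; norm_num
  calc (n : ℝ) ^ ((1 : ℝ) / 2) * gelfandSeq p σ n
      ≤ (n : ℝ) ^ ((1 : ℝ) / 2) * (24 * Real.sqrt (pstar p) * (n : ℝ) ^ (-(1 / 2 : ℝ)) *
          (∑' j, σ j ^ pstar p) ^ (1 / pstar p)) :=
        mul_le_mul_of_nonneg_left ((hb n hn).trans
          (mul_le_mul_of_nonneg_left hT2 (by positivity))) (by positivity)
    _ = ((n : ℝ) ^ ((1 : ℝ) / 2) * (n : ℝ) ^ (-(1 / 2 : ℝ))) * (24 * Real.sqrt (pstar p) *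
          (∑' j, σ j ^ pstar p) ^ (1 / pstar p)) := by ring
    _ = _ := by rw [hone, one_mul]
end
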